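/- Let Q be a finite acyclic quiver, 𝒬• = (Q¹,…,Q^ℓ) an admissible, ordered, Dynkin subquiver partition, β₁,…,β_r a Reineke order on Φ₊(𝒬•) with chosen vertices i(u) satisfying β_u(i(u)) = 1, γ a dimension vector, and m = (m₁,…,m_r) a 𝒬•-partition of γ. Grade each 𝒜_{β_u,m_u} and ℋ_γ by total polynomial degree, and set d_m := −Σ_{1≤u<v≤r} χ_Q(m_u β_u, m_v β_v), where χ_Q is the Euler form of Q. Then for every k ≥ 0, Σ_{k₁+⋯+k_r = k} ∏_{u=1}^r dim_ℚ (𝒜_{β_u,m_u})_{k_u} = dim_ℚ (𝒜_{β₁,m₁} * ⋯ * 𝒜_{β_r,m_r})_{k + d_m}, where 𝒜_{β₁,m₁} * ⋯ * 𝒜_{β_r,m_r} ⊆ ℋ_γ denotes the ℚ-span of all left-to-right products f₁ * ⋯ * f_r with f_u ∈ 𝒜_{β_u,m_u}, and (·)_j denotes the homogeneous degree-j part. -/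

import Mathlib

open MvPolynomial
open scoped Classical

/-- A finite quiver with vertex set `Fin n`: a finite type of arrows together with
head and tail maps. -/
structure FinQuiver (n : ℕ) where
  Arr : Type
  [fintypeArr : Fintype Arr]
  hd : Arr → Fin n
  tl : Arr → Fin n

attribute [instance] FinQuiver.fintypeArr

variable {n : ℕ}

/-- `Q` is acyclic: there is no oriented cycle, i.e. no path
`a₁, …, a_{k+1}` (with `hd aₘ = tl aₘ₊₁`) whose final head equals its initial tail. -/
def FinQuiver.Acyclic (Q : FinQuiver n) : Prop :=
  ∀ (k : ℕ) (c : Fin (k + 1) → Q.Arr),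
    (∀ m : Fin k, Q.hd (c m.castSucc) = Q.tl (c m.succ)) →
    Q.hd (c (Fin.last k)) ≠ Q.tl (c 0)

/-- The Euler form `χ_Q` of the quiver `Q`. -/
def FinQuiver.euler (Q : FinQuiver n) (α β : Fin n → ℕ) : ℤ :=
  ∑ i : Fin n, (α i : ℤ) * β i - ∑ a : Q.Arr, (α (Q.tl a) : ℤ) * β (Q.hd a)

/-- The opposite antisymmetrization `⟨α,β⟩ = χ_Q(β,α) − χ_Q(α,β)`. -/
def FinQuiver.lam (Q : FinQuiver n) (α β : Fin n → ℕ) : ℤ :=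
  Q.euler β α - Q.euler α β

/-- The polynomial ring in the variables `ω_{i,j}`, `i ∈ Q₀`, `j ∈ ℕ` (0-indexed). -/
abbrev PolyQ (n : ℕ) := MvPolynomial (Fin n × ℕ) ℚ

/-- The permutation of the variables at vertex `i` induced by a permutation of `ℕ`. -/
def vertexPerm (i : Fin n) (σ : Equiv.Perm ℕ) : Fin n × ℕ → Fin n × ℕ :=
  fun p => if p.1 = i then (i, σ p.2) else p

/-- `f` is, for each vertex `i`, symmetric in the variables `ω_{i,0},…,ω_{i,γ i − 1}`. -/
def SymmIn (γ : Fin n → ℕ) (f : PolyQ n) : Prop :=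
  ∀ (i : Fin n) (σ : Equiv.Perm ℕ),
    (∀ j : ℕ, σ j ≠ j → j < γ i) → rename (vertexPerm i σ) f = f

lemma vars_smul_subset (c : ℚ) (f : PolyQ n) : (c • f).vars ⊆ f.vars := by
  rw [MvPolynomial.smul_eq_C_mul]
  refine (MvPolynomial.vars_mul _ _).trans ?_
  simp [MvPolynomial.vars_C]

/-- `ℋ_γ`: polynomials using only the variables `ω_{i,j}`, `j < γ i`, which are
symmetric at each vertex.  A `ℚ`-submodule of `PolyQ n`. -/
noncomputable def Hspace (γ : Fin n → ℕ) : Submodule ℚ (PolyQ n) where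
  carrier := {f | (∀ p ∈ f.vars, p.2 < γ p.1) ∧ SymmIn γ f}
  add_mem' := by
    rintro f g ⟨hf1, hf2⟩ ⟨hg1, hg2⟩
    refine ⟨fun p hp => ?_, fun i σ hσ => ?_⟩
    · rcases Finset.mem_union.mp (MvPolynomial.vars_add_subset f g hp) with h | h
      exacts [hf1 p h, hg1 p h]
    · rw [map_add, hf2 i σ hσ, hg2 i σ hσ]
  zero_mem' := by
    refine ⟨fun p hp => ?_, fun i σ hσ => map_zero _⟩
    simp [MvPolynomial.vars_0] at hp
  smul_mem' := by
    rintro c f ⟨hf1, hf2⟩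
    refine ⟨fun p hp => hf1 p (vars_smul_subset c f hp), fun i σ hσ => ?_⟩
    rw [map_smul, hf2 i σ hσ]

/-- Polynomials all of whose variables sit at vertex `i`. -/
noncomputable def onlyVertex (i : Fin n) : Submodule ℚ (PolyQ n) where
  carrier := {f | ∀ p ∈ f.vars, p.1 = i}
  add_mem' := by
    intro f g hf hg p hp
    rcases Finset.mem_union.mp (MvPolynomial.vars_add_subset f g hp) with h | h
    exacts [hf p h, hg p h]
  zero_mem' := by
    intro p hp
    simp [MvPolynomial.vars_0] at hp
  smul_mem' := by
    intro c f hf p hp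
    exact hf p (vars_smul_subset c f hp)

/-- `𝒜_{β,m}`: the subspace of `ℋ_{m·β}` of polynomials depending only on the
variables `ω_{i,0},…,ω_{i,m−1}` at the distinguished vertex `i`. -/
noncomputable def Aspace (β : Fin n → ℕ) (i : Fin n) (m : ℕ) : Submodule ℚ (PolyQ n) :=
  Hspace (fun v => m * β v) ⊓ onlyVertex i

/-- Substitute for the `j`-th variable at vertex `i` the variable `ω_{i,s}` where `s`
is the `j`-th element of `T i` in increasing order. -/
noncomputable def substAlong (T : Fin n → Finset ℕ) : PolyQ n →ₐ[ℚ] PolyQ n :=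
  aeval fun p : Fin n × ℕ => X (p.1, ((T p.1).sort (· ≤ ·)).getD p.2 0)

/-- The index set of the Kontsevich–Soibelman localization sum:
for each vertex, a `γ₁ i`-element subset of `{0,…,γ₁ i + γ₂ i − 1}`. -/
def shuffles (γ₁ γ₂ : Fin n → ℕ) : Finset (Fin n → Finset ℕ) :=
  Fintype.piFinset fun i => (Finset.range (γ₁ i + γ₂ i)).powerset.filter fun s => s.card = γ₁ i

def shuffleCompl (γ₁ γ₂ : Fin n → ℕ) (S : Fin n → Finset ℕ) : Fin n → Finset ℕ :=
  fun i => Finset.range (γ₁ i + γ₂ i) \ S i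

/-- The numerator factor attached to the arrow `a`:
`∏_{j' ∈ S̄_{h a}} ∏_{j ∈ S_{t a}} (ω_{h a, j'} − ω_{t a, j})`. -/
noncomputable def arrowFactor (Q : FinQuiver n) (γ₁ γ₂ : Fin n → ℕ)
    (S : Fin n → Finset ℕ) (a : Q.Arr) : PolyQ n :=
  ∏ j' ∈ shuffleCompl γ₁ γ₂ S (Q.hd a), ∏ j ∈ S (Q.tl a),
    (X (Q.hd a, j') - X (Q.tl a, j))

noncomputable def interactionNum (Q : FinQuiver n) (γ₁ γ₂ : Fin n → ℕ)
    (S : Fin n → Finset ℕ) : PolyQ n :=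
  ∏ a : Q.Arr, arrowFactor Q γ₁ γ₂ S a

noncomputable def interactionDen (γ₁ γ₂ : Fin n → ℕ) (S : Fin n → Finset ℕ) : PolyQ n :=
  ∏ i : Fin n, ∏ j' ∈ shuffleCompl γ₁ γ₂ S i, ∏ j ∈ S i, (X (i, j') - X (i, j))

/-- The Kontsevich–Soibelman localization sum, an element of the field of rational
functions (the fraction field of `PolyQ n`). -/
noncomputable def cohaMulRat (Q : FinQuiver n) (γ₁ γ₂ : Fin n → ℕ) (f₁ f₂ : PolyQ n) :
    FractionRing (PolyQ n) :=
  ∑ S ∈ shuffles γ₁ γ₂,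
    algebraMap (PolyQ n) (FractionRing (PolyQ n))
        (substAlong S f₁ * substAlong (shuffleCompl γ₁ γ₂ S) f₂ * interactionNum Q γ₁ γ₂ S) /
      algebraMap (PolyQ n) (FractionRing (PolyQ n)) (interactionDen γ₁ γ₂ S)

/-- The CoHA product `f₁ * f₂`: the unique polynomial representing the localization
sum (and `0` if the sum were not a polynomial, which never happens). -/
noncomputable def cohaMul (Q : FinQuiver n) (γ₁ γ₂ : Fin n → ℕ) (f₁ f₂ : PolyQ n) : PolyQ n :=
  if h : ∃ P : PolyQ n,
      algebraMap (PolyQ n) (FractionRing (PolyQ n)) P = cohaMulRat Q γ₁ γ₂ f₁ f₂ then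
    h.choose
  else 0

/-- Iterated, left-to-right, CoHA product of a list of dimension-vector/polynomial pairs.
Returns the total dimension vector together with the product. -/
noncomputable def cohaProd (Q : FinQuiver n) :
    List ((Fin n → ℕ) × PolyQ n) → (Fin n → ℕ) × PolyQ n
  | [] => (fun _ => 0, 1)
  | x :: xs => xs.foldl (fun acc y => (acc.1 + y.1, cohaMul Q acc.1 y.1 acc.2 y.2)) x

/-- Left-to-right CoHA product `f 0 * f 1 * ⋯ * f (r−1)` with `f u ∈ ℋ_{γ u}`. -/
noncomputable def cohaProdFin (Q : FinQuiver n) {r : ℕ} (γ : Fin r → Fin n → ℕ)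
    (f : Fin r → PolyQ n) : PolyQ n :=
  (cohaProd Q (List.ofFn fun u => (γ u, f u))).2

/-- The quiver with one vertex and no arrows. -/
def A1 : FinQuiver 1 := { Arr := Empty, hd := Empty.elim, tl := Empty.elim }

/-- `ψ_p = x₁ ^ p ∈ ℋ₁(A₁)`. -/
noncomputable def psi (p : ℕ) : PolyQ 1 := X ((0 : Fin 1), 0) ^ p

def oneDim : Fin 1 → ℕ := fun _ => 1

/-- The simple dimension vector `e_i`. -/
def simpleDim (i : Fin n) : Fin n → ℕ := fun v => if v = i then 1 else 0

/-- A subquiver of `Q`. -/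
structure Subquiver (Q : FinQuiver n) where
  verts : Finset (Fin n)
  arrows : Finset Q.Arr
  hd_mem : ∀ a ∈ arrows, Q.hd a ∈ verts
  tl_mem : ∀ a ∈ arrows, Q.tl a ∈ verts

def Subquiver.Full {Q : FinQuiver n} (Q' : Subquiver Q) : Prop :=
  ∀ a : Q.Arr, Q.hd a ∈ Q'.verts → Q.tl a ∈ Q'.verts → a ∈ Q'.arrows

/-- Adjacency in the underlying undirected graph of a subquiver. -/
def Subquiver.Adj {Q : FinQuiver n} (Q' : Subquiver Q) (x y : Fin n) : Prop :=
  ∃ a ∈ Q'.arrows, (Q.hd a = x ∧ Q.tl a = y) ∨ (Q.hd a = y ∧ Q.tl a = x)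

def Subquiver.Connected {Q : FinQuiver n} (Q' : Subquiver Q) : Prop :=
  ∀ x ∈ Q'.verts, ∀ y ∈ Q'.verts, Relation.ReflTransGen Q'.Adj x y

/-- The Euler form of the subquiver `Q'` (on `ℤ`-valued vectors). -/
def Subquiver.eulerZ {Q : FinQuiver n} (Q' : Subquiver Q) (α β : Fin n → ℤ) : ℤ :=
  ∑ i ∈ Q'.verts, α i * β i - ∑ a ∈ Q'.arrows, α (Q.tl a) * β (Q.hd a)

/-- Positive definiteness of the Tits form of `Q'` on vectors supported on `Q'`. -/
def Subquiver.PosDefTits {Q : FinQuiver n} (Q' : Subquiver Q) : Prop :=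
  ∀ β : Fin n → ℤ, (∀ i, i ∉ Q'.verts → β i = 0) → β ≠ 0 → 0 < Q'.eulerZ β β

/-- A connected full subquiver with positive definite Tits form. -/
def Subquiver.IsDynkin {Q : FinQuiver n} (Q' : Subquiver Q) : Prop :=
  Q'.Connected ∧ Q'.Full ∧ Q'.PosDefTits

/-- A positive root of `Q'`: a nonzero dimension vector supported on `Q'` with
Tits form equal to `1`. -/
def Subquiver.IsPosRoot {Q : FinQuiver n} (Q' : Subquiver Q) (β : Fin n → ℕ) : Prop :=
  (∀ i, i ∉ Q'.verts → β i = 0) ∧ β ≠ 0 ∧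
    Q'.eulerZ (fun i => (β i : ℤ)) (fun i => (β i : ℤ)) = 1

/-- A subquiver regarded as a quiver in its own right (on the ambient vertex set). -/
def Subquiver.toQuiver {Q : FinQuiver n} (Q' : Subquiver Q) : FinQuiver n :=
  { Arr := {a : Q.Arr // a ∈ Q'.arrows}, hd := fun a => Q.hd a.1, tl := fun a => Q.tl a.1 }

/-- An (ordered list) subquiver partition `𝒬• = (Q¹,…,Q^ℓ)`: nonempty connected
subquivers whose vertex sets partition `Q₀`. -/
structure SubqPartition (Q : FinQuiver n) (ℓ : ℕ) where
  part : Fin ℓ → Subquiver Q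
  nonempty' : ∀ j, (part j).verts.Nonempty
  connected' : ∀ j, (part j).Connected
  cover : ∀ i : Fin n, ∃! j, i ∈ (part j).verts

/-- The set `𝒬•₁` of arrows belonging to one of the parts. -/
noncomputable def SubqPartition.arrs {Q : FinQuiver n} {ℓ : ℕ} (P : SubqPartition Q ℓ) : Finset Q.Arr :=
  Finset.univ.biUnion fun j => (P.part j).arrows

/-- The partition is admissible and ordered: every arrow not inside a part goes from a
later part to an earlier part (head before tail). -/
def SubqPartition.Ordered {Q : FinQuiver n} {ℓ : ℕ} (P : SubqPartition Q ℓ) : Prop :=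
  ∀ a : Q.Arr, a ∉ P.arrs → ∀ i j : Fin ℓ,
    Q.hd a ∈ (P.part i).verts → Q.tl a ∈ (P.part j).verts → i < j

/-- Every part is a Dynkin subquiver. -/
def SubqPartition.Dynkin {Q : FinQuiver n} {ℓ : ℕ} (P : SubqPartition Q ℓ) : Prop :=
  ∀ j, (P.part j).IsDynkin

/-- `β : Fin r → (Fin n → ℕ)` is a Reineke-ordered enumeration of `Φ₊(𝒬•)`, with
`blk u` the part to which `β u` belongs: block-monotone, enumerating all positive roots
without repetition, and within each block `u < v → ⟨β u, β v⟩ ≥ 0`. -/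
def IsReinekeOrder {Q : FinQuiver n} {ℓ : ℕ} (P : SubqPartition Q ℓ) {r : ℕ}
    (β : Fin r → Fin n → ℕ) (blk : Fin r → Fin ℓ) : Prop :=
  Monotone blk ∧
  (∀ u, (P.part (blk u)).IsPosRoot (β u)) ∧
  Function.Injective β ∧
  (∀ j (b : Fin n → ℕ), (P.part j).IsPosRoot b → ∃ u, β u = b) ∧
  (∀ u v : Fin r, u < v → blk u = blk v → 0 ≤ Q.lam (β u) (β v))

namespace CoHA

/-- color preserving permutations -/
noncomputable def Wg {L I : Type} [Fintype L] (π : L → I) : Finset (Equiv.Perm L) :=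
  Finset.univ.filter fun σ => ∀ p, π (σ p) = π p

/-- kernel -/
noncomputable def Ker {L I : Type} [Fintype L] (e : I → I → ℤ) (π : L → I) (w : L → ℕ)
    (y : L → ℚ) : ℚ :=
  ∏ a : L × L, if w a.1 < w a.2 then (y a.2 - y a.1) ^ (e (π a.1) (π a.2)) else 1

/-- symmetrized function -/
noncomputable def Phi {L I : Type} [Fintype L] (e : I → I → ℤ) (π : L → I) (w : L → ℕ)
    (g : MvPolynomial L ℚ) (y : L → ℚ) : ℚ :=
  ∑ σ ∈ Wg π, eval (y ∘ σ) g * Ker e π w (y ∘ σ)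

def Reps {L : Type} (P : MvPolynomial L ℚ) (φ : (L → ℚ) → ℚ) : Prop :=
  ∀ y, Function.Injective y → eval y P = φ y

theorem dens' {σ : Type} (D P : MvPolynomial σ ℚ) (hD : D ≠ 0)
    (h : ∀ y, eval y D ≠ 0 → eval y P = 0) : P = 0 := by
  have : P * D = 0 := by
    apply MvPolynomial.funext
    intro y
    by_cases hy : eval y D = 0
    · simp [hy]
    · simp [h y hy]
  rcases mul_eq_zero.1 this with h | h
  · exact h
  · exact absurd h hD

theorem eval_rename {L M : Type} (σ : M → L) (y : L → ℚ) (g : MvPolynomial M ℚ) :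
    eval y (rename σ g) = eval (y ∘ σ) g := by
  simp only [← coe_aeval_eq_eval]; exact aeval_rename _ _ _

section
variable {L I : Type} [Fintype L]

theorem exists_inj (L : Type) [Finite L] : ∃ y : L → ℚ, Function.Injective y := by
  cases nonempty_fintype L
  refine ⟨fun p => ((Fintype.equivFin L p : ℕ) : ℚ), fun a b h => ?_⟩
  have : ((Fintype.equivFin L a : ℕ)) = (Fintype.equivFin L b : ℕ) := by
    have h' : ((Fintype.equivFin L a : ℕ) : ℚ) = ((Fintype.equivFin L b : ℕ) : ℚ) := h
    exact_mod_cast h'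
  exact (Fintype.equivFin L).injective (Fin.ext this)

/-- Vandermonde-like polynomial -/
noncomputable def Vand (L : Type) [Fintype L] : MvPolynomial L ℚ :=
  ∏ a ∈ Finset.univ.filter (fun a : L × L => a.1 ≠ a.2), (X a.2 - X a.1)

theorem eval_Vand_ne (y : L → ℚ) : eval y (Vand L) ≠ 0 ↔ Function.Injective y := by
  unfold Vand
  rw [map_prod, Finset.prod_ne_zero_iff]
  constructor
  · intro h a b hab
    by_contra hne
    have := h (a, b) (by simpa using hne)
    simp [hab] at this
  · intro h a ha
    simp only [Finset.mem_filter, Finset.mem_univ, true_and] at ha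
    simp only [map_sub, eval_X]
    intro h0
    exact ha (h (sub_eq_zero.1 h0)).symm

theorem Vand_ne : Vand L ≠ 0 := by
  obtain ⟨y, hy⟩ := exists_inj L
  intro h
  have := (eval_Vand_ne y).2 hy
  simp [h] at this

theorem dens (P : MvPolynomial L ℚ) (h : ∀ y, Function.Injective y → eval y P = 0) : P = 0 :=
  dens' (Vand L) P Vand_ne fun y hy => h y ((eval_Vand_ne y).1 hy)

theorem Reps.unique {P P' : MvPolynomial L ℚ} {φ} (h : Reps P φ) (h' : Reps P' φ) : P = P' := by
  rw [← sub_eq_zero]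
  exact dens _ fun y hy => by rw [map_sub, h y hy, h' y hy, sub_self]

theorem dvd_iff (p q : L) (M : MvPolynomial L ℚ) :
    (X p - X q) ∣ M ↔ aeval (Function.update (X : L → MvPolynomial L ℚ) p (X q)) M = 0 := by
  constructor
  · rintro ⟨c, rfl⟩
    rw [map_mul, map_sub, aeval_X, aeval_X]
    by_cases h : q = p
    · subst h; simp
    · simp [Function.update_of_ne h]
  · intro h
    rw [← Ideal.mem_span_singleton, ← Ideal.Quotient.eq_zero_iff_mem]
    set J := Ideal.span {(X p - X q : MvPolynomial L ℚ)}
    have : (Ideal.Quotient.mkₐ ℚ J).comp (aeval (Function.update (X : L → MvPolynomial L ℚ) p (X q)))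
        = Ideal.Quotient.mkₐ ℚ J := by
      apply MvPolynomial.algHom_ext
      intro i
      rw [AlgHom.comp_apply, aeval_X]
      by_cases hi : i = p
      · subst hi
        rw [Function.update_self]
        simp only [Ideal.Quotient.mkₐ_eq_mk]
        rw [eq_comm, Ideal.Quotient.eq]
        exact Ideal.mem_span_singleton_self _
      · rw [Function.update_of_ne hi]
    have h2 := DFunLike.congr_fun this M
    rw [AlgHom.comp_apply, h, map_zero] at h2
    exact h2.symm

theorem dvd_of_vanish (p q : L) (M : MvPolynomial L ℚ)
    (h : ∀ y : L → ℚ, y p = y q → eval y M = 0) : (X p - X q) ∣ M := by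
  rw [dvd_iff]
  apply MvPolynomial.funext
  intro y
  rw [map_zero]
  have : eval y (aeval (Function.update (X : L → MvPolynomial L ℚ) p (X q)) M)
      = eval (Function.update y p (y q)) M := by
    rw [← coe_aeval_eq_eval, ← coe_aeval_eq_eval]
    change ((aeval y).comp (aeval _)) M = aeval _ M
    congr 1
    apply MvPolynomial.algHom_ext
    intro i
    rw [AlgHom.comp_apply, aeval_X, aeval_X]
    by_cases hi : i = p
    · subst hi; simp
    · simp [Function.update_of_ne hi]
  rw [this]
  apply h
  by_cases hq : q = p
  · subst hq; rfl
  · simp [Function.update_of_ne hq]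

theorem prime_sub {p q : L} (hpq : p ≠ q) : Prime (X p - X q : MvPolynomial L ℚ) := by
  refine ⟨?_, ?_, ?_⟩
  · intro h
    exact hpq (X_injective (sub_eq_zero.1 h))
  · intro h
    have h1 := (dvd_iff p q (X p - X q)).1 dvd_rfl
    have := h.map (aeval (R := ℚ) (Function.update (X : L → MvPolynomial L ℚ) p (X q)))
    rw [h1] at this
    exact not_isUnit_zero this
  · intro a b h
    rw [dvd_iff] at *
    rw [dvd_iff, map_mul] at *
    exact mul_eq_zero.1 h

theorem relPrime_sub {p q r s : L} (hpq : p ≠ q) (hrs : r ≠ s) (h1 : ¬ (r = p ∧ s = q))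
    (h2 : ¬ (r = q ∧ s = p)) :
    IsRelPrime (X p - X q : MvPolynomial L ℚ) (X r - X s) := by
  rw [(prime_sub hpq).irreducible.isRelPrime_iff_not_dvd, dvd_iff, map_sub, aeval_X, aeval_X,
    sub_eq_zero]
  simp only [Function.update_apply]
  split_ifs with h3 h4 h4
  · exact fun _ => hrs (h3.trans h4.symm)
  · intro h; exact h1 ⟨h3, (X_injective h).symm⟩
  · intro h; exact h2 ⟨X_injective h, h4⟩
  · intro h; exact hrs (X_injective h)

theorem mem_Wg {π : L → I} {σ : Equiv.Perm L} : σ ∈ Wg π ↔ ∀ p, π (σ p) = π p := by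
  simp [Wg]

theorem Wg_mul {π : L → I} {σ τ : Equiv.Perm L} (hσ : σ ∈ Wg π) (hτ : τ ∈ Wg π) :
    σ * τ ∈ Wg π := by
  rw [mem_Wg] at *
  intro p; rw [Equiv.Perm.mul_apply, hσ, hτ]

theorem Wg_inv {π : L → I} {σ : Equiv.Perm L} (hσ : σ ∈ Wg π) : σ⁻¹ ∈ Wg π := by
  rw [mem_Wg] at *
  intro p
  have h := hσ (σ⁻¹ p)
  simpa using h.symm

theorem Wg_one {π : L → I} : (1 : Equiv.Perm L) ∈ Wg π := by simp [mem_Wg]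

theorem Wg_sum_mul {π : L → I} {τ : Equiv.Perm L} (hτ : τ ∈ Wg π) (f : Equiv.Perm L → ℚ) :
    ∑ σ ∈ Wg π, f (τ * σ) = ∑ σ ∈ Wg π, f σ := by
  refine Finset.sum_bij' (fun σ _ => τ * σ) (fun σ _ => τ⁻¹ * σ) ?_ ?_ ?_ ?_ ?_
  · exact fun σ h => Wg_mul hτ h
  · exact fun σ h => Wg_mul (Wg_inv hτ) h
  · intros; simp
  · intros; simp
  · intros; simp

theorem Wg_sum_mul_right {π : L → I} {τ : Equiv.Perm L} (hτ : τ ∈ Wg π) (f : Equiv.Perm L → ℚ) :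
    ∑ σ ∈ Wg π, f (σ * τ) = ∑ σ ∈ Wg π, f σ := by
  refine Finset.sum_bij' (fun σ _ => σ * τ) (fun σ _ => σ * τ⁻¹) ?_ ?_ ?_ ?_ ?_
  · exact fun σ h => Wg_mul h hτ
  · exact fun σ h => Wg_mul h (Wg_inv hτ)
  · intros; simp
  · intros; simp
  · intros; simp

theorem Wg_card_pos (π : L → I) : ((Wg π).card : ℚ) ≠ 0 := by
  have : (Wg π).Nonempty := ⟨1, Wg_one⟩
  exact_mod_cast this.card_pos.ne'

theorem Phi_inv {e : I → I → ℤ} {π : L → I} {w : L → ℕ} {g : MvPolynomial L ℚ}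
    {τ : Equiv.Perm L} (hτ : τ ∈ Wg π) (y : L → ℚ) :
    Phi e π w g (y ∘ τ) = Phi e π w g y := by
  unfold Phi
  exact Wg_sum_mul hτ (fun σ => eval (y ∘ σ) g * Ker e π w (y ∘ σ))

/-- ordered discriminant of same-colored pairs -/
noncomputable def Dord (π : L → I) : MvPolynomial L ℚ :=
  ∏ a : L × L, if a.1 ≠ a.2 ∧ π a.1 = π a.2 then (X a.2 - X a.1) else 1

theorem Dord_comp {π : L → I} {σ : Equiv.Perm L} (hσ : σ ∈ Wg π) (y : L → ℚ) :
    eval (y ∘ σ) (Dord π) = eval y (Dord π) := by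
  rw [mem_Wg] at hσ
  unfold Dord
  rw [map_prod, map_prod]
  refine Fintype.prod_equiv (σ.prodCongr σ) _ _ fun a => ?_
  simp only [Equiv.prodCongr_apply, Prod.map_fst, Prod.map_snd, hσ, ne_eq, σ.injective.eq_iff]
  split_ifs <;> simp

theorem Dord_ne {π : L → I} {y : L → ℚ} (hy : Function.Injective y) : eval y (Dord π) ≠ 0 := by
  unfold Dord
  rw [map_prod, Finset.prod_ne_zero_iff]
  intro a _
  split_ifs with h
  · simp only [map_sub, eval_X]
    intro h0; exact h.1 (hy (sub_eq_zero.1 h0)).symm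
  · simp

/-- the polynomial Ker * Dord -/
noncomputable def KD (e : I → I → ℤ) (π : L → I) (w : L → ℕ) : MvPolynomial L ℚ :=
  ∏ a : L × L, if w a.1 < w a.2 then
    (X a.2 - X a.1) ^ (e (π a.1) (π a.2) + if π a.1 = π a.2 then 1 else 0).toNat else
    if a.1 ≠ a.2 ∧ π a.1 = π a.2 then (X a.2 - X a.1) else 1

theorem eval_KD {e : I → I → ℤ} (he : ∀ i, -1 ≤ e i i) (he' : ∀ i j, i ≠ j → 0 ≤ e i j)
    (π : L → I) (w : L → ℕ) {y : L → ℚ} (hy : Function.Injective y) :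
    eval y (KD e π w) = Ker e π w y * eval y (Dord π) := by
  unfold KD Ker Dord
  rw [map_prod, map_prod, ← Finset.prod_mul_distrib]
  refine Finset.prod_congr rfl fun a _ => ?_
  by_cases hw : w a.1 < w a.2
  · have hne : a.1 ≠ a.2 := fun h => by rw [h] at hw; exact lt_irrefl _ hw
    have hd : y a.2 - y a.1 ≠ 0 := fun h0 => hne (hy (sub_eq_zero.1 h0)).symm
    by_cases hc : π a.1 = π a.2
    · have h1 := he (π a.2)
      simp only [hw, hc, hne, if_true, ne_eq, not_false_eq_true, and_self, map_pow, map_sub, eval_X]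
      rw [← zpow_natCast, Int.toNat_of_nonneg (by linarith), zpow_add_one₀ hd]
    · have h1 := he' _ _ hc
      simp only [hw, hc, if_true, if_false, and_false, add_zero, map_pow, map_sub, eval_X, map_one,
        mul_one]
      rw [← zpow_natCast, Int.toNat_of_nonneg h1]
  · simp only [hw, if_false, one_mul]

theorem KD_vanish (e : I → I → ℤ) (π : L → I) (w : L → ℕ) {y : L → ℚ} {p q : L} (hpq : p ≠ q)
    (hc : π p = π q) (h : y p = y q) : eval y (KD e π w) = 0 := by
  unfold KD
  rw [map_prod, Finset.prod_eq_zero_iff]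
  by_cases hw : w p < w q
  · refine ⟨(q, p), Finset.mem_univ _, ?_⟩
    simp [not_lt.2 hw.le, hpq.symm, hc, h]
  · refine ⟨(p, q), Finset.mem_univ _, ?_⟩
    simp [hw, hpq, hc, h]

theorem Dord_dvd (π : L → I) (N : MvPolynomial L ℚ)
    (h0 : ∀ p q, p ≠ q → π p = π q → ∀ y : L → ℚ, y p = y q → eval y N = 0)
    (hinv : ∀ σ ∈ Wg π, ∀ y : L → ℚ, eval (y ∘ σ) N = eval y N) : Dord π ∣ N := by
  have hsq : ∀ p q, p ≠ q → π p = π q → (X p - X q) ^ 2 ∣ N := by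
    intro p q hpq hc
    obtain ⟨M, hM⟩ := dvd_of_vanish p q N (h0 p q hpq hc)
    have hs : Equiv.swap p q ∈ Wg π := by
      rw [mem_Wg]; intro a
      rw [Equiv.swap_apply_def]; split_ifs with h h <;> simp [h, hc]
    have hMa : rename (Equiv.swap p q) M = - M := by
      have h1 : rename (Equiv.swap p q) N = N := by
        apply MvPolynomial.funext; intro y
        rw [eval_rename, hinv _ hs]
      rw [hM, map_mul, map_sub, rename_X, rename_X, Equiv.swap_apply_left,
        Equiv.swap_apply_right] at h1
      have hne : (X p - X q : MvPolynomial L ℚ) ≠ 0 := (prime_sub hpq).1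
      apply mul_left_cancel₀ hne
      linear_combination -h1
    obtain ⟨M', hM'⟩ := dvd_of_vanish p q M (by
      intro y hy
      have h1 := congrArg (eval y) hMa
      rw [eval_rename, map_neg] at h1
      have h2 : y ∘ Equiv.swap p q = y := by
        funext a; simp only [Function.comp]
        rw [Equiv.swap_apply_def]; split_ifs with h h <;> simp [h, hy]
      rw [h2] at h1; linarith)
    exact ⟨M', by rw [hM, hM']; ring⟩
  set en := Fintype.equivFin L
  set T := Finset.univ.filter fun a : L × L => en a.1 < en a.2 ∧ π a.1 = π a.2
  have hD : Dord π = ∏ a ∈ T, ((X a.2 - X a.1) * (X a.1 - X a.2) : MvPolynomial L ℚ) := by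
    rw [Finset.prod_mul_distrib]
    have h2 : ∏ a ∈ T, (X a.1 - X a.2 : MvPolynomial L ℚ) =
        ∏ a : L × L, if en a.2 < en a.1 ∧ π a.1 = π a.2 then (X a.2 - X a.1) else 1 := by
      rw [← Finset.prod_filter]
      refine Finset.prod_bij' (fun a _ => a.swap) (fun a _ => a.swap) ?_ ?_ ?_ ?_ ?_ <;>
        simp +contextual [T]
    rw [h2, Finset.prod_filter, ← Finset.prod_mul_distrib]
    refine Finset.prod_congr rfl fun a _ => ?_
    rcases lt_trichotomy (en a.1) (en a.2) with h | h | h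
    · have : a.1 ≠ a.2 := fun h' => by rw [h'] at h; exact lt_irrefl _ h
      simp [h, this, not_lt.2 h.le]
    · have : a.1 = a.2 := en.injective h
      simp [this]
    · have : a.1 ≠ a.2 := fun h' => by rw [h'] at h; exact lt_irrefl _ h
      simp [h, this, not_lt.2 h.le]
  rw [hD]
  apply Finset.prod_dvd_of_isRelPrime
  · intro a ha b hb hab
    simp only [T, Finset.coe_filter, Finset.mem_univ, true_and, Set.mem_ofPred_eq] at ha hb
    have ha' : a.1 ≠ a.2 := fun h' => by rw [h'] at ha; exact lt_irrefl _ ha.1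
    have hb' : b.1 ≠ b.2 := fun h' => by rw [h'] at hb; exact lt_irrefl _ hb.1
    have n1 : ¬ (b.1 = a.1 ∧ b.2 = a.2) := fun h => hab (Prod.ext h.1.symm h.2.symm)
    have n2 : ¬ (b.1 = a.2 ∧ b.2 = a.1) := fun h => by
      rw [h.1, h.2] at hb; exact lt_asymm ha.1 hb.1
    have n1' : ¬ (b.2 = a.2 ∧ b.1 = a.1) := fun h => n1 h.symm
    have n2' : ¬ (b.2 = a.1 ∧ b.1 = a.2) := fun h => n2 h.symm
    change IsRelPrime (_ * _) (_ * _)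
    apply IsRelPrime.mul_left <;> apply IsRelPrime.mul_right <;> apply relPrime_sub <;>
      first | assumption | exact ha'.symm | exact hb'.symm
  · intro a ha
    simp only [T, Finset.mem_filter, Finset.mem_univ, true_and] at ha
    have ha' : a.1 ≠ a.2 := fun h' => by rw [h'] at ha; exact lt_irrefl _ ha.1
    refine dvd_trans ?_ (hsq a.1 a.2 ha' ha.2)
    exact ⟨-1, by ring⟩

theorem PL {e : I → I → ℤ} (he : ∀ i, -1 ≤ e i i) (he' : ∀ i j, i ≠ j → 0 ≤ e i j)
    (π : L → I) (w : L → ℕ) (g : MvPolynomial L ℚ) : ∃ P, Reps P (Phi e π w g) := by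
  set N : MvPolynomial L ℚ := ∑ σ ∈ Wg π, rename σ (g * KD e π w) with hN
  have hev : ∀ y, eval y N = ∑ σ ∈ Wg π, eval (y ∘ σ) (g * KD e π w) := by
    intro y; rw [hN, map_sum]; exact Finset.sum_congr rfl fun σ _ => eval_rename _ _ _
  obtain ⟨P, hP⟩ := Dord_dvd π N (by
    intro p q hpq hc y hy
    rw [hev]
    apply Finset.sum_eq_zero
    intro σ hσ
    have hi := mem_Wg.1 (Wg_inv hσ)
    rw [map_mul, KD_vanish e π w (p := σ⁻¹ p) (q := σ⁻¹ q) (by simpa using hpq)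
      (by rw [hi, hi, hc]) (by simpa using hy), mul_zero]) (by
    intro σ hσ y
    rw [hev, hev]
    exact Wg_sum_mul hσ (fun τ => eval (y ∘ τ) (g * KD e π w)))
  refine ⟨P, fun y hy => ?_⟩
  have h1 := hev y
  rw [hP, map_mul] at h1
  apply mul_left_cancel₀ (Dord_ne (π := π) hy)
  rw [h1, Phi, Finset.mul_sum]
  refine Finset.sum_congr rfl fun σ hσ => ?_
  rw [map_mul, eval_KD he he' π w (hy.comp σ.injective), Dord_comp hσ]
  ring

end
end CoHA

namespace CoHA

/-- restriction to a line -/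
noncomputable def lineP {L : Type} (a b : L → ℚ) : MvPolynomial L ℚ →ₐ[ℚ] Polynomial ℚ :=
  aeval fun p => Polynomial.C (a p) + Polynomial.C (b p) * Polynomial.X

theorem eval_lineP {L : Type} (a b : L → ℚ) (P : MvPolynomial L ℚ) (l : ℚ) :
    (lineP a b P).eval l = eval (fun p => a p + b p * l) P := by
  rw [← coe_aeval_eq_eval, ← Polynomial.coe_aeval_eq_eval]
  change ((Polynomial.aeval l).comp (lineP a b)) P = aeval _ P
  congr 1
  apply MvPolynomial.algHom_ext
  intro i
  simp [lineP]

section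
variable {L I : Type} [Fintype L]

theorem line_eq {P : MvPolynomial L ℚ} {u : Polynomial ℚ} (a b : L → ℚ)
    (hinj : ∃ l : ℚ, Function.Injective fun p => a p + b p * l)
    (h : ∀ l : ℚ, l ≠ 0 → (Function.Injective fun p => a p + b p * l) →
      eval (fun p => a p + b p * l) P = u.eval l) : eval a P = u.eval 0 := by
  have hV : lineP a b (Vand L) ≠ 0 := by
    obtain ⟨l, hl⟩ := hinj
    intro h0
    have := (eval_Vand_ne _).2 hl
    rw [← eval_lineP, h0] at this
    simp at this
  have : (lineP a b P - u) * (Polynomial.X * lineP a b (Vand L)) = 0 := by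
    apply Polynomial.funext
    intro l
    simp only [Polynomial.eval_mul, Polynomial.eval_sub, Polynomial.eval_X, Polynomial.eval_zero,
      eval_lineP]
    by_cases hl : l = 0
    · simp [hl]
    by_cases hi : Function.Injective fun p => a p + b p * l
    · rw [h l hl hi]; ring
    · rw [← eval_Vand_ne, not_not] at hi
      rw [hi]; ring
  rcases mul_eq_zero.1 this with h | h
  · rw [sub_eq_zero] at h
    rw [← h, eval_lineP]; simp
  · exact absurd h (mul_ne_zero Polynomial.X_ne_zero hV)

/-- total exponent -/
noncomputable def Edeg (e : I → I → ℤ) (π : L → I) (w : L → ℕ) : ℤ :=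
  ∑ a : L × L, if w a.1 < w a.2 then e (π a.1) (π a.2) else 0

theorem prod_zpow_sum {ι : Type} (s : Finset ι) (f : ι → ℤ) {l : ℚ} (hl : l ≠ 0) :
    ∏ a ∈ s, l ^ f a = l ^ ∑ a ∈ s, f a := by
  induction s using Finset.induction_on with
  | empty => simp
  | insert a s ha ih => rw [Finset.prod_insert ha, Finset.sum_insert ha, zpow_add₀ hl, ih]

theorem Ker_scale (e : I → I → ℤ) (π : L → I) (w : L → ℕ) (y : L → ℚ) (x : ℚ) {l : ℚ} (hl : l ≠ 0) :
    Ker e π w (fun p => x + y p * l) = l ^ Edeg e π w * Ker e π w y := by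
  unfold Ker Edeg
  rw [← prod_zpow_sum _ _ hl, ← Finset.prod_mul_distrib]
  refine Finset.prod_congr rfl fun a _ => ?_
  split_ifs
  · rw [← mul_zpow]; congr 1; ring
  · simp

def Null (e : I → I → ℤ) (π : L → I) (w : L → ℕ) : Prop :=
  ∀ g P, Reps P (Phi e π w g) → ∀ x : ℚ, eval (fun _ => x) P = 0

theorem null_of_deg {e : I → I → ℤ} {π : L → I} {w : L → ℕ} (h : 0 < Edeg e π w) : Null e π w := by
  intro g P hP x
  obtain ⟨y, hy⟩ := exists_inj L
  rw [line_eq (P := P) (u := Polynomial.X ^ (Edeg e π w).toNat *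
    ∑ σ ∈ Wg π, Polynomial.C (Ker e π w (y ∘ σ)) * lineP (fun _ => x) (y ∘ σ) g) _ y]
  · have : (Edeg e π w).toNat ≠ 0 := by omega
    simp [this]
  · exact ⟨1, fun a b hab => hy (by simpa using hab)⟩
  · intro l hl hi
    rw [hP _ hi, Phi]
    simp only [Polynomial.eval_mul, Polynomial.eval_pow, Polynomial.eval_X,
      Polynomial.eval_finsetSum, Polynomial.eval_C, eval_lineP]
    rw [Finset.mul_sum]
    refine Finset.sum_congr rfl fun σ _ => ?_
    have := Ker_scale e π w (y ∘ σ) x hl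
    rw [← zpow_natCast, Int.toNat_of_nonneg h.le]
    change eval (fun p => x + (y ∘ σ) p * l) g * Ker e π w (fun p => x + (y ∘ σ) p * l) = _
    rw [this]; ring

theorem const_of_deg {e : I → I → ℤ} {π : L → I} {w : L → ℕ} (h : Edeg e π w = 0)
    {P : MvPolynomial L ℚ} (hP : Reps P (Phi e π w 1)) : P = C (eval (fun _ => 0) P) := by
  rw [← sub_eq_zero]
  apply dens
  intro y hy
  rw [map_sub, eval_C, sub_eq_zero, eq_comm]
  rw [line_eq (P := P) (u := Polynomial.C (eval y P)) _ y]
  · simp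
  · exact ⟨1, fun a b hab => hy (by simpa using hab)⟩
  · intro l hl hi
    rw [hP _ hi, Polynomial.eval_C, hP _ hy, Phi, Phi]
    refine Finset.sum_congr rfl fun σ _ => ?_
    have := Ker_scale e π w (y ∘ σ) 0 hl
    rw [h, zpow_zero, one_mul] at this
    rw [← this]; simp only [map_one]; rfl

theorem Ker_equiv {M : Type} [Fintype M] (e : I → I → ℤ) (π : L → I) (w : L → ℕ) (y : L → ℚ)
    (σ : M ≃ L) : Ker e (π ∘ σ) (w ∘ σ) (y ∘ σ) = Ker e π w y := by
  unfold Ker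
  exact Fintype.prod_equiv (σ.prodCongr σ) _ _ fun a => rfl

theorem Ker_perm {e : I → I → ℤ} {π : L → I} (w : L → ℕ) (y : L → ℚ) {σ : Equiv.Perm L}
    (hσ : σ ∈ Wg π) : Ker e π (w ∘ σ) (y ∘ σ) = Ker e π w y := by
  have h : π ∘ σ = π := funext (mem_Wg.1 hσ)
  conv_lhs => rw [← h]
  exact Ker_equiv e π w y σ

theorem Ker_cut (e : I → I → ℤ) (π : L → I) (w : L → ℕ) (t : ℕ) (y : L → ℚ) :
    Ker e π w y = Ker e π (fun p => if w p < t then 0 else 1) y *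
      Ker (fun a b : I × Prop => if a.2 = b.2 then e a.1 b.1 else 0) (fun p => (π p, w p < t)) w y := by
  unfold Ker
  rw [← Finset.prod_mul_distrib]
  refine Finset.prod_congr rfl fun a _ => ?_
  by_cases h1 : w a.1 < t <;> by_cases h2 : w a.2 < t <;> by_cases h3 : w a.1 < w a.2 <;>
    first | omega | simp [h1, h2, h3]

theorem coarse {e : I → I → ℤ} (he : ∀ i, -1 ≤ e i i) (he' : ∀ i j, i ≠ j → 0 ≤ e i j)
    {π : L → I} {w : L → ℕ} (t : ℕ) (h : Null e π (fun p => if w p < t then 0 else 1)) :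
    Null e π w := by
  intro g P hP x
  set e' : I × Prop → I × Prop → ℤ := fun a b => if a.2 = b.2 then e a.1 b.1 else 0
  set π' : L → I × Prop := fun p => (π p, w p < t)
  obtain ⟨H, hH⟩ := PL (e := e') (by intro i; simpa [e'] using he i.1) (by
    intro i j hij
    simp only [e']
    split_ifs with h2
    · exact he' _ _ fun h1 => hij (Prod.ext h1 h2)
    · exact le_rfl) π' w g
  have hsub : ∀ τ ∈ Wg π', τ ∈ Wg π ∧ ∀ p, (w (τ p) < t) = (w p < t) := by
    intro τ hτ
    have := mem_Wg.1 hτ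
    exact ⟨mem_Wg.2 fun p => congrArg Prod.fst (this p), fun p => congrArg Prod.snd (this p)⟩
  have key : Reps (C ((Wg π').card : ℚ) * P) (Phi e π (fun p => if w p < t then 0 else 1) H) := by
    intro y hy
    rw [map_mul, eval_C, hP y hy]
    unfold Phi
    rw [← nsmul_eq_mul, ← Finset.sum_const]
    have : ∀ σ ∈ Wg π, eval (y ∘ σ) H * Ker e π (fun p => if w p < t then 0 else 1) (y ∘ σ) =
        ∑ τ ∈ Wg π', eval (y ∘ (σ * τ : Equiv.Perm L)) g * Ker e π w (y ∘ (σ * τ : Equiv.Perm L)) := by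
      intro σ _
      rw [hH _ (hy.comp σ.injective), Phi, Finset.sum_mul]
      refine Finset.sum_congr rfl fun τ hτ => ?_
      obtain ⟨h1, h2⟩ := hsub τ hτ
      rw [Ker_cut e π w t]
      have h3 := Ker_perm (e := e) (fun p => if w p < t then 0 else 1) (y ∘ σ) h1
      have h4 : (fun p => if w p < t then 0 else 1) ∘ τ = (fun p => if w p < t then 0 else 1) := by
        funext p; simp only [Function.comp, h2]
      rw [h4] at h3
      rw [← h3]
      change _ = eval ((y ∘ σ) ∘ τ) g * (Ker e π _ ((y ∘ σ) ∘ τ) * Ker e' π' w ((y ∘ σ) ∘ τ))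
      ring
    rw [Finset.sum_congr rfl this]
    conv_rhs => rw [Finset.sum_comm]
    refine Finset.sum_congr rfl fun τ hτ => ?_
    exact (Wg_sum_mul_right (hsub τ hτ).1 (fun σ => eval (y ∘ σ) g * Ker e π w (y ∘ σ))).symm
  have := h _ _ key x
  rw [map_mul, eval_C] at this
  exact (mul_eq_zero.1 this).resolve_left (Wg_card_pos π')

theorem Ker_sub (e : I → I → ℤ) (π : L → I) (A : L → Prop) (w' : {p // A p} → ℕ) (M : ℕ)
    (hM : ∀ p, w' p < M) (y : L → ℚ) :
    Ker e π (fun p => if h : A p then w' ⟨p, h⟩ else M) y =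
      Ker e π (fun p => if A p then 0 else 1) y *
      Ker e (fun p : {p // A p} => π p) w' (fun p => y p) := by
  have : Ker e (fun p : {p // A p} => π p) w' (fun p => y p) =
      ∏ a : L × L, if h : A a.1 ∧ A a.2 then (if w' ⟨a.1, h.1⟩ < w' ⟨a.2, h.2⟩ then
        (y a.2 - y a.1) ^ (e (π a.1) (π a.2)) else 1) else 1 := by
    unfold Ker
    refine Fintype.prod_of_injective (fun a : {p // A p} × {p // A p} => ((a.1 : L), (a.2 : L)))
      ?_ _ _ ?_ ?_
    · rintro ⟨a, b⟩ ⟨c, d⟩ h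
      simp only [Prod.mk.injEq] at h
      exact Prod.ext (Subtype.ext h.1) (Subtype.ext h.2)
    · intro a ha
      rw [dif_neg]
      intro h
      exact ha ⟨(⟨a.1, h.1⟩, ⟨a.2, h.2⟩), rfl⟩
    · rintro ⟨⟨a, ha⟩, ⟨b, hb⟩⟩
      simp [ha, hb]
  rw [this]
  unfold Ker
  rw [← Finset.prod_mul_distrib]
  refine Finset.prod_congr rfl fun a _ => ?_
  by_cases h1 : A a.1 <;> by_cases h2 : A a.2 <;> simp [h1, h2, hM, not_lt.2 (hM _).le]

theorem refine_null {e : I → I → ℤ} {π : L → I} (A : L → Prop) (w' : {p // A p} → ℕ) (M : ℕ)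
    (hM : ∀ p, w' p < M) (k0 : ℚ) (hk0 : k0 ≠ 0)
    (hk : ∀ z, Function.Injective z → Phi e (fun p : {p // A p} => π p) w' 1 z = k0)
    (h : Null e π (fun p => if h : A p then w' ⟨p, h⟩ else M)) :
    Null e π (fun p => if A p then 0 else 1) := by
  intro g P hP x
  set πA : {p // A p} → I := fun p => π p
  set wA : L → ℕ := fun p => if A p then 0 else 1 with hwA
  have hsub : ∀ τ ∈ Wg πA, Equiv.Perm.ofSubtype τ ∈ Wg π ∧ wA ∘ (Equiv.Perm.ofSubtype τ) = wA ∧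
      ∀ p : {p // A p}, Equiv.Perm.ofSubtype τ p = τ p := by
    intro τ hτ
    have h0 := mem_Wg.1 hτ
    refine ⟨mem_Wg.2 fun p => ?_, funext fun p => ?_, fun p => Equiv.Perm.ofSubtype_apply_coe _ _⟩
    · by_cases hp : A p
      · rw [Equiv.Perm.ofSubtype_apply_of_mem _ hp]; exact h0 ⟨p, hp⟩
      · rw [Equiv.Perm.ofSubtype_apply_of_not_mem _ hp]
    · by_cases hp : A p
      · simp only [Function.comp]
        rw [Equiv.Perm.ofSubtype_apply_of_mem _ hp]
        simp [hwA, hp, (τ ⟨p, hp⟩).2]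
      · simp only [Function.comp]
        rw [Equiv.Perm.ofSubtype_apply_of_not_mem _ hp]
  set G : MvPolynomial L ℚ := ∑ τ ∈ Wg πA, rename ((Equiv.Perm.ofSubtype τ)⁻¹ : Equiv.Perm L) g
  have key : Reps (C k0 * P) (Phi e π (fun p => if h : A p then w' ⟨p, h⟩ else M) G) := by
    intro y hy
    rw [map_mul, eval_C, hP y hy]
    unfold Phi
    have h1 : ∀ σ ∈ Wg π, eval (y ∘ σ) G *
        Ker e π (fun p => if h : A p then w' ⟨p, h⟩ else M) (y ∘ σ) =
        ∑ τ ∈ Wg πA, (fun s : Equiv.Perm L => eval (y ∘ s) g *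
          Ker e π (fun p => if h : A p then w' ⟨p, h⟩ else M)
          (y ∘ s ∘ (Equiv.Perm.ofSubtype τ))) (σ * (Equiv.Perm.ofSubtype τ)⁻¹) := by
      intro σ _
      simp only [G]
      rw [map_sum, Finset.sum_mul]
      refine Finset.sum_congr rfl fun τ hτ => ?_
      rw [eval_rename]
      congr 2
      funext p
      simp
    rw [Finset.sum_congr rfl h1, Finset.sum_comm]
    have h2 : ∀ τ ∈ Wg πA, ∑ σ ∈ Wg π, (fun s : Equiv.Perm L => eval (y ∘ s) g *
          Ker e π (fun p => if h : A p then w' ⟨p, h⟩ else M)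
          (y ∘ s ∘ (Equiv.Perm.ofSubtype τ))) (σ * (Equiv.Perm.ofSubtype τ)⁻¹) =
        ∑ σ ∈ Wg π, eval (y ∘ σ) g * Ker e π wA (y ∘ σ) *
          Ker e πA w' ((fun p : {p // A p} => (y ∘ σ) p) ∘ τ) := by
      intro τ hτ
      obtain ⟨t1, t2, t3⟩ := hsub τ hτ
      refine (Wg_sum_mul_right (Wg_inv t1) (fun s : Equiv.Perm L => eval (y ∘ s) g *
          Ker e π (fun p => if h : A p then w' ⟨p, h⟩ else M)
          (y ∘ s ∘ (Equiv.Perm.ofSubtype τ)))).trans ?_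
      refine Finset.sum_congr rfl fun σ hσ => ?_
      rw [Ker_sub e π A w' M hM, ← hwA]
      have h3 := Ker_perm (e := e) wA (y ∘ σ) t1
      rw [t2] at h3
      rw [← h3, mul_assoc]
      congr 3
      funext p
      simp [t3]
    rw [Finset.sum_congr rfl h2, Finset.sum_comm, Finset.mul_sum]
    refine Finset.sum_congr rfl fun σ _ => ?_
    rw [← Finset.mul_sum]
    have := hk (fun p : {p // A p} => (y ∘ σ) p)
      (fun a b hab => Subtype.ext (σ.injective (hy hab)))
    rw [Phi] at this
    simp only [map_one, one_mul] at this
    rw [this]; ring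
  have := h _ _ key x
  rw [map_mul, eval_C] at this
  exact (mul_eq_zero.1 this).resolve_left hk0

end
end CoHA

namespace CoHA

section
variable {L I C : Type} [Fintype L]

/-- in-cluster exponents -/
noncomputable def ek (e : I → I → ℤ) : I × C → I × C → ℤ :=
  fun a b => if a.2 = b.2 then e a.1 b.1 else 0

theorem ek_diag {e : I → I → ℤ} (he : ∀ i, -1 ≤ e i i) (i : I × C) : -1 ≤ ek e i i := by
  simpa [ek] using he i.1

theorem ek_off {e : I → I → ℤ} (he' : ∀ i j, i ≠ j → 0 ≤ e i j) (i j : I × C) (hij : i ≠ j) :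
    0 ≤ ek e i j := by
  simp only [ek]
  split_ifs with h2
  · exact he' _ _ fun h1 => hij (Prod.ext h1 h2)
  · exact le_rfl

noncomputable def Krest (e : I → I → ℤ) (π : L → I) (κ : L → C) (w : L → ℕ) (c : C) (y : L → ℚ) : ℚ :=
  ∏ a : L × L, if κ a.1 ≠ c ∧ κ a.2 ≠ c ∧ w a.1 < w a.2 then
    (y a.2 - y a.1) ^ (ek e (π a.1, κ a.1) (π a.2, κ a.2)) else 1

theorem Ker_cluster (e : I → I → ℤ) (π : L → I) (κ : L → C) (w : L → ℕ) (c : C) (y : L → ℚ) :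
    Ker (ek e) (fun p => (π p, κ p)) w y =
      Krest e π κ w c y *
      Ker e (fun p : {p // κ p = c} => π p) (fun p => w p) (fun p => y p) := by
  have : Ker e (fun p : {p // κ p = c} => π p) (fun p => w p) (fun p => y p) =
      ∏ a : L × L, if κ a.1 = c ∧ κ a.2 = c then (if w a.1 < w a.2 then
        (y a.2 - y a.1) ^ (e (π a.1) (π a.2)) else 1) else 1 := by
    unfold Ker
    refine Fintype.prod_of_injective
      (fun a : {p // κ p = c} × {p // κ p = c} => ((a.1 : L), (a.2 : L))) ?_ _ _ ?_ ?_
    · rintro ⟨a, b⟩ ⟨c, d⟩ h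
      simp only [Prod.mk.injEq] at h
      exact Prod.ext (Subtype.ext h.1) (Subtype.ext h.2)
    · intro a ha
      rw [if_neg]
      intro h
      exact ha ⟨(⟨a.1, h.1⟩, ⟨a.2, h.2⟩), rfl⟩
    · rintro ⟨⟨a, ha⟩, ⟨b, hb⟩⟩
      simp [ha, hb]
  rw [this]
  unfold Ker Krest
  rw [← Finset.prod_mul_distrib]
  refine Finset.prod_congr rfl fun a _ => ?_
  by_cases h1 : κ a.1 = c <;> by_cases h2 : κ a.2 = c <;> simp [h1, h2, ek]
  · intro _ h3; exact absurd h3.symm h2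

theorem cluster_vanish {e : I → I → ℤ} (he : ∀ i, -1 ≤ e i i) (he' : ∀ i j, i ≠ j → 0 ≤ e i j)
    {π : L → I} {κ : L → C} {w : L → ℕ} (c : C)
    (hnull : Null e (fun p : {p // κ p = c} => π p) (fun p => w p))
    {h P : MvPolynomial L ℚ} (hP : Reps P (Phi (ek e) (fun p => (π p, κ p)) w h)) (x : C → ℚ) :
    eval (x ∘ κ) P = 0 := by
  set πκ : L → I × C := fun p => (π p, κ p)
  set πc : {p // κ p = c} → I := fun p => π p
  set wc : {p // κ p = c} → ℕ := fun p => w p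
  have hsub : ∀ τ ∈ Wg πc, Equiv.Perm.ofSubtype τ ∈ Wg πκ := by
    intro τ hτ
    have h0 := mem_Wg.1 hτ
    refine mem_Wg.2 fun p => ?_
    by_cases hp : κ p = c
    · rw [Equiv.Perm.ofSubtype_apply_of_mem (p := fun p => κ p = c) τ hp]
      exact Prod.ext (h0 ⟨p, hp⟩) ((τ ⟨p, hp⟩).2.trans hp.symm)
    · rw [Equiv.Perm.ofSubtype_apply_of_not_mem (p := fun p => κ p = c) τ hp]
  have hfix : ∀ (τ : Equiv.Perm {p // κ p = c}) p, κ p ≠ c → Equiv.Perm.ofSubtype τ p = p :=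
    fun τ p hp => Equiv.Perm.ofSubtype_apply_of_not_mem _ hp
  set hz : (L → ℚ) → MvPolynomial {p // κ p = c} ℚ := fun z =>
    aeval (fun p => if hp : κ p = c then X ⟨p, hp⟩ else MvPolynomial.C (z p)) h with hhz
  have hz_eval : ∀ (z : L → ℚ) (v : {p // κ p = c} → ℚ),
      eval v (hz z) = eval (fun p => if hp : κ p = c then v ⟨p, hp⟩ else z p) h := by
    intro z v
    rw [← coe_aeval_eq_eval, ← coe_aeval_eq_eval]
    change ((aeval v).comp (aeval _)) h = aeval _ h
    congr 1
    apply MvPolynomial.algHom_ext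
    intro p
    rw [AlgHom.comp_apply, aeval_X, aeval_X]
    split_ifs <;> simp
  have hz_congr : ∀ z z' : L → ℚ, (∀ p, κ p ≠ c → z p = z' p) → hz z = hz z' := by
    intro z z' hzz
    apply MvPolynomial.funext; intro v
    rw [hz_eval, hz_eval]; congr 2; funext p
    split_ifs with hp
    · rfl
    · exact hzz p hp
  have kr_congr : ∀ z z' : L → ℚ, (∀ p, κ p ≠ c → z p = z' p) →
      Krest e π κ w c z = Krest e π κ w c z' := by
    intro z z' hzz
    unfold Krest
    refine Finset.prod_congr rfl fun a _ => ?_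
    split_ifs with hp
    · rw [hzz _ hp.1, hzz _ hp.2.1]
    · rfl
  choose Qz hQz using fun z : L → ℚ => PL he he' πc wc (hz z)
  have Qz_congr : ∀ z z' : L → ℚ, (∀ p, κ p ≠ c → z p = z' p) → Qz z = Qz z' := by
    intro z z' hzz
    refine (hQz z).unique ?_
    rw [hz_congr z z' hzz]; exact hQz z'
  -- averaged formula
  have avg : ∀ y, Function.Injective y → ((Wg πc).card : ℚ) * eval y P =
      ∑ σ ∈ Wg πκ, Krest e π κ w c (y ∘ σ) *
        eval (fun p : {p // κ p = c} => (y ∘ σ) p) (Qz (y ∘ σ)) := by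
    intro y hy
    rw [hP y hy, ← nsmul_eq_mul, ← Finset.sum_const]
    have : ∀ τ ∈ Wg πc, Phi (ek e) πκ w h y = ∑ σ ∈ Wg πκ,
        (Krest e π κ w c (y ∘ σ) * (eval ((fun p : {p // κ p = c} => (y ∘ σ) p) ∘ τ) (hz (y ∘ σ)) *
          Ker e πc wc ((fun p : {p // κ p = c} => (y ∘ σ) p) ∘ τ))) := by
      intro τ hτ
      unfold Phi
      rw [← Wg_sum_mul_right (hsub τ hτ) (fun σ => eval (y ∘ σ) h * Ker (ek e) πκ w (y ∘ σ))]
      refine Finset.sum_congr rfl fun σ hσ => ?_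
      have h1 : ∀ p, κ p ≠ c → (y ∘ (σ * Equiv.Perm.ofSubtype τ : Equiv.Perm L)) p = (y ∘ σ) p := by
        intro p hp
        simp [hfix τ p hp]
      have h2 : (fun p : {p // κ p = c} => (y ∘ (σ * Equiv.Perm.ofSubtype τ : Equiv.Perm L)) p) =
          (fun p : {p // κ p = c} => (y ∘ σ) p) ∘ τ := by
        funext p
        simp
      rw [Ker_cluster e π κ w c, kr_congr _ _ h1, h2, hz_eval]
      have h3 : (fun p => if hp : κ p = c then
          ((fun p : {p // κ p = c} => (y ∘ σ) p) ∘ τ) ⟨p, hp⟩ else (y ∘ σ) p) =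
          y ∘ (σ * Equiv.Perm.ofSubtype τ : Equiv.Perm L) := by
        funext p
        split_ifs with hp
        · rw [← h2]
        · rw [h1 p hp]
      rw [h3]; ring
    rw [Finset.sum_congr rfl this, Finset.sum_comm]
    refine Finset.sum_congr rfl fun σ hσ => ?_
    rw [← Finset.mul_sum, hQz (y ∘ σ) (fun p : {p // κ p = c} => (y ∘ σ) p) (fun a b hab => Subtype.ext (σ.injective (hy hab)))]
    rfl
  -- the limit
  have lim : ∀ y, Function.Injective y → eval (fun p => if κ p = c then x c else y p) P = 0 := by
    intro y hy
    have hN := Wg_card_pos πc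
    apply mul_left_cancel₀ hN
    rw [mul_zero]
    set b : L → ℚ := fun p => if κ p = c then y p - x c else 0 with hb
    set a : L → ℚ := fun p => if κ p = c then x c else y p with ha
    have h1 := line_eq (P := MvPolynomial.C ((Wg πc).card : ℚ) * P)
      (u := ∑ σ ∈ Wg πκ, Polynomial.C (Krest e π κ w c (y ∘ σ)) *
        lineP (fun _ => x c) (fun p : {p // κ p = c} => (y ∘ σ) p - x c) (Qz (y ∘ σ))) a b
      ⟨1, by
        convert hy using 1
        funext p; simp only [ha, hb]; split_ifs <;> ring⟩ (by
        intro l hl hi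
        rw [map_mul, eval_C, avg _ hi]
        simp only [Polynomial.eval_finsetSum, Polynomial.eval_mul, Polynomial.eval_C, eval_lineP]
        refine Finset.sum_congr rfl fun σ hσ => ?_
        have hs : ∀ p, κ (σ p) = κ p := fun p => congrArg Prod.snd (mem_Wg.1 hσ p)
        have h1 : ∀ p, κ p ≠ c → ((fun p => a p + b p * l) ∘ σ) p = (y ∘ σ) p := by
          intro p hp
          simp [ha, hb, hs, hp]
        rw [kr_congr _ _ h1, Qz_congr _ _ h1]
        congr 3
        funext p
        simp [ha, hb, hs, p.2])
    rw [map_mul, eval_C] at h1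
    rw [h1]
    simp only [Polynomial.eval_finsetSum, Polynomial.eval_mul, Polynomial.eval_C, eval_lineP]
    apply Finset.sum_eq_zero
    intro σ hσ
    have := hnull _ _ (hQz (y ∘ σ)) (x c)
    simp only [mul_zero, add_zero]
    rw [this, mul_zero]
  set P' : MvPolynomial L ℚ := aeval (fun p => if κ p = c then MvPolynomial.C (x c) else X p) P
  have hP'e : ∀ y, eval y P' = eval (fun p => if κ p = c then x c else y p) P := by
    intro y
    rw [← coe_aeval_eq_eval, ← coe_aeval_eq_eval]
    change ((aeval y).comp (aeval _)) P = aeval _ P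
    congr 1
    apply MvPolynomial.algHom_ext
    intro p
    rw [AlgHom.comp_apply, aeval_X, aeval_X]
    split_ifs <;> simp
  have hP' : P' = 0 := dens _ fun y hy => by rw [hP'e, lim y hy]
  have := hP'e (x ∘ κ)
  rw [hP', map_zero] at this
  rw [this]
  congr 2
  funext p
  simp only [Function.comp]
  split_ifs with hp
  · rw [hp]
  · rfl

end
end CoHA

namespace CoHA

section
variable {I : Type} [Fintype I]

/-- Euler form attached to exponents -/
noncomputable def chi (e : I → I → ℤ) (F G : I → ℤ) : ℤ := -∑ i, F i * ∑ j, G j * e i j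

theorem chi_add_left (e : I → I → ℤ) (F F' G : I → ℤ) :
    chi e (F + F') G = chi e F G + chi e F' G := by
  simp only [chi, Pi.add_apply, add_mul, Finset.sum_add_distrib]; ring
theorem chi_add_right (e : I → I → ℤ) (F G G' : I → ℤ) :
    chi e F (G + G') = chi e F G + chi e F G' := by
  simp only [chi, Pi.add_apply, add_mul, mul_add, Finset.sum_add_distrib]; ring
theorem chi_smul_left (e : I → I → ℤ) (k : ℤ) (F G : I → ℤ) :
    chi e (k • F) G = k * chi e F G := by
  simp only [chi, Pi.smul_apply, smul_eq_mul, mul_assoc, ← Finset.mul_sum]; ring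
theorem chi_smul_right (e : I → I → ℤ) (k : ℤ) (F G : I → ℤ) :
    chi e F (k • G) = k * chi e F G := by
  simp only [chi, Pi.smul_apply, smul_eq_mul, mul_assoc, ← Finset.mul_sum, mul_left_comm _ k]; ring
theorem chi_neg_right (e : I → I → ℤ) (F G : I → ℤ) : chi e F (-G) = - chi e F G := by
  have := chi_smul_right e (-1) F G; simpa using this
theorem chi_neg_left (e : I → I → ℤ) (F G : I → ℤ) : chi e (-F) G = - chi e F G := by
  have := chi_smul_left e (-1) F G; simpa using this
theorem chi_sub_right (e : I → I → ℤ) (F G G' : I → ℤ) :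
    chi e F (G - G') = chi e F G - chi e F G' := by
  rw [sub_eq_add_neg, chi_add_right, chi_neg_right]; ring
theorem chi_sub_left (e : I → I → ℤ) (F F' G : I → ℤ) :
    chi e (F - F') G = chi e F G - chi e F' G := by
  rw [sub_eq_add_neg, chi_add_left, chi_neg_left]; ring
theorem chi_zero_right (e : I → I → ℤ) (F : I → ℤ) : chi e F 0 = 0 := by simp [chi]
theorem chi_zero_left (e : I → I → ℤ) (F : I → ℤ) : chi e 0 F = 0 := by simp [chi]
theorem chi_sum_right {ι : Type} (s : Finset ι) (e : I → I → ℤ) (F : I → ℤ) (G : ι → I → ℤ) :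
    chi e F (∑ a ∈ s, G a) = ∑ a ∈ s, chi e F (G a) := by
  induction s using Finset.induction_on with
  | empty => simp [chi_zero_right]
  | insert a s ha ih => rw [Finset.sum_insert ha, Finset.sum_insert ha, chi_add_right, ih]

def zc (f : I → ℕ) : I → ℤ := fun i => f i

structure Good {r : ℕ} (e : I → I → ℤ) (β : Fin r → I → ℕ) : Prop where
  diag : ∀ i, -1 ≤ e i i
  off : ∀ i j, i ≠ j → 0 ≤ e i j
  neg : ∀ u v, u < v → chi e (zc (β u)) (zc (β v)) ≤ 0
  root : ∀ u, chi e (zc (β u)) (zc (β u)) = 1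
  pos : ∀ t (G : I → ℤ), 0 ≤ G → G ≤ zc (β t) → G ≠ 0 → 0 < chi e G G
  gd : ∀ t d, t < d → ∀ F : I → ℕ, F ≤ β d → 0 < chi e (zc (β t)) (zc F) →
    ∃ m : Fin r → ℕ, F = ∑ u, m u • β u ∧
      ∀ u v, u < v → m u ≠ 0 → m v ≠ 0 → chi e (zc (β u)) (zc (β v)) = 0

variable {L : Type} [Fintype L]

noncomputable def dimv (π : L → I) (S : L → Prop) : I → ℕ :=
  fun i => ∑ p, if S p ∧ π p = i then 1 else 0

noncomputable def dimz (π : L → I) (S : L → Prop) : I → ℤ := zc (dimv π S)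

theorem dimz_apply (π : L → I) (S : L → Prop) (i : I) :
    dimz π S i = ∑ p, if S p ∧ π p = i then 1 else 0 := by
  simp [dimz, zc, dimv]

theorem dimz_sum_mul (π : L → I) (S : L → Prop) (f : I → ℤ) :
    ∑ i, dimz π S i * f i = ∑ p, if S p then f (π p) else 0 := by
  simp only [dimz_apply, Finset.sum_mul]
  rw [Finset.sum_comm]
  refine Finset.sum_congr rfl fun p _ => ?_
  by_cases hp : S p <;> simp [hp]

theorem chi_dimz (e : I → I → ℤ) (π : L → I) (S T : L → Prop) :
    - chi e (dimz π S) (dimz π T) =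
      ∑ a : L × L, if S a.1 ∧ T a.2 then e (π a.1) (π a.2) else 0 := by
  rw [chi, neg_neg, dimz_sum_mul, Fintype.sum_prod_type]
  refine Finset.sum_congr rfl fun p _ => ?_
  rw [dimz_sum_mul]
  by_cases hp : S p <;> simp [hp]

theorem Edeg_cut (e : I → I → ℤ) (π : L → I) (A : L → Prop) [DecidablePred A] :
    Edeg e π (fun p => if A p then 0 else 1) = - chi e (dimz π A) (dimz π (fun p => ¬ A p)) := by
  rw [chi_dimz, Edeg]
  refine Finset.sum_congr rfl fun a _ => ?_
  by_cases h1 : A a.1 <;> by_cases h2 : A a.2 <;> simp [h1, h2]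

theorem Edeg_lev {r : ℕ} (e : I → I → ℤ) (π : L → I) (ρ : L → Fin r) :
    Edeg e π (fun p => (ρ p : ℕ)) = - ∑ a ∈ Finset.univ.filter (fun a : Fin r × Fin r => a.1 < a.2),
      chi e (dimz π (fun p => ρ p = a.1)) (dimz π (fun p => ρ p = a.2)) := by
  rw [← Finset.sum_neg_distrib]
  simp only [chi_dimz]
  rw [Finset.sum_comm, Edeg]
  refine Finset.sum_congr rfl fun b _ => ?_
  rw [Finset.sum_filter, Finset.sum_eq_single (ρ b.1, ρ b.2)]
  · simp
  · rintro ⟨u, v⟩ _ hne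
    by_cases h : ρ b.1 = u ∧ ρ b.2 = v
    · exact absurd (by rw [h.1, h.2]) hne
    · simp [h]
  · simp

theorem dimz_congr {π : L → I} {S T : L → Prop} (h : ∀ p, S p ↔ T p) : dimz π S = dimz π T := by
  have : S = T := funext fun p => propext (h p)
  rw [this]

theorem dimz_nonneg (π : L → I) (S : L → Prop) : 0 ≤ dimz π S := by
  intro i; simp [dimz, zc]

theorem dimz_pos {π : L → I} {S : L → Prop} {p : L} (hp : S p) : dimz π S (π p) ≠ 0 := by
  rw [dimz_apply]
  apply ne_of_gt
  apply Finset.sum_pos' (fun q _ => by split_ifs <;> norm_num)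
  exact ⟨p, Finset.mem_univ _, by simp [hp]⟩

theorem dimz_split (π : L → I) (S T : L → Prop) :
    dimz π (fun p => S p ∧ T p) + dimz π (fun p => S p ∧ ¬ T p) = dimz π S := by
  funext i
  rw [Pi.add_apply, dimz_apply, dimz_apply, dimz_apply, ← Finset.sum_add_distrib]
  refine Finset.sum_congr rfl fun p _ => ?_
  by_cases h1 : S p <;> by_cases h2 : T p <;> simp [h1, h2]

theorem dimz_fiber {C : Type} [Fintype C] (π : L → I) (κ : L → C) (T : L → Prop) :
    ∑ c, dimz π (fun p => κ p = c ∧ T p) = dimz π T := by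
  funext i
  rw [Finset.sum_apply]
  simp only [dimz_apply]
  rw [Finset.sum_comm]
  refine Finset.sum_congr rfl fun p _ => ?_
  by_cases h2 : T p <;> by_cases h3 : π p = i <;> simp [h2, h3]

theorem dimz_equiv {M : Type} [Fintype M] (f : M ≃ L) (π : L → I) (S : L → Prop) :
    dimz (π ∘ f) (S ∘ f) = dimz π S := by
  funext i
  rw [dimz_apply, dimz_apply]
  exact Fintype.sum_equiv f _ _ fun p => rfl

theorem dimz_subtype (π : L → I) (A : L → Prop) (T : L → Prop) :
    dimz (fun p : {p // A p} => π p) (fun p => T p) = dimz π (fun p => A p ∧ T p) := by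
  funext i
  rw [dimz_apply, dimz_apply]
  refine Fintype.sum_of_injective (fun p : {p // A p} => (p : L)) Subtype.val_injective _ _ ?_ ?_
  · intro p hp
    have : ¬ A p := fun h => hp ⟨⟨p, h⟩, rfl⟩
    simp [this]
  · rintro ⟨p, hp⟩; simp [hp]

theorem combin {r : ℕ} {C : Type} [Fintype C] {e : I → I → ℤ} {β : Fin r → I → ℕ} (hG : Good e β)
    (π : L → I) (κ : L → C) (ρ : C → Fin r)
    (hcl : ∀ c, dimz π (fun p => κ p = c) = zc (β (ρ c))) (v : L → Fin r)
    (hv : ∀ u, dimz π (fun p => v p = u) = dimz π (fun p => ρ (κ p) = u))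
    (h1 : ∀ c, 0 ≤ chi e (dimz π (fun p => κ p = c ∧ v p ≤ ρ c))
      (dimz π (fun p => κ p = c ∧ ¬ v p ≤ ρ c)))
    (h2 : ∀ c t, t < ρ c → chi e (zc (β t)) (dimz π (fun p => κ p = c ∧ v p ≤ t)) ≤ 0) :
    ∀ p, v p = ρ (κ p) := by
  suffices h : ∀ t p, v p = t ↔ ρ (κ p) = t from fun p => (h _ p).2 rfl
  intro t
  induction t using WellFoundedLT.induction with
  | _ t ih =>
  set F : C → I → ℤ := fun c => dimz π (fun p => κ p = c ∧ v p ≤ t) with hF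
  set G : C → I → ℤ := fun c => dimz π (fun p => κ p = c ∧ ¬ v p ≤ t) with hGd
  set H : C → I → ℤ := fun c => if ρ c = t then - G c else if t < ρ c then F c else 0 with hH
  have hFG : ∀ c, ρ c = t → F c + G c = zc (β t) := by
    intro c hc
    rw [← hc, ← hcl c, ← dimz_split π (fun p => κ p = c) (fun p => v p ≤ t)]
  have hvt : ∀ c, dimz π (fun p => κ p = c ∧ v p = t) =
      (if ρ c = t then zc (β t) else 0) + H c := by
    intro c
    have hFv : t ≤ ρ c → dimz π (fun p => κ p = c ∧ v p = t) = F c := by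
      intro htc
      apply dimz_congr
      intro p
      constructor
      · rintro ⟨a, b⟩; exact ⟨a, b.le⟩
      · rintro ⟨a, b⟩
        refine ⟨a, ?_⟩
        by_contra hne
        have hlt := lt_of_le_of_ne b hne
        have := (ih _ hlt p).1 rfl
        rw [a] at this
        exact absurd htc (not_le.2 (this ▸ hlt))
    rcases lt_trichotomy t (ρ c) with h | h | h
    · simp only [hH, h, h.ne', if_true, if_false, zero_add]; exact hFv h.le
    · simp only [hH, h.symm, if_true]
      rw [hFv h.le, ← hFG c h.symm]; simp
    · simp only [hH, h.ne, not_lt.2 h.le, if_false, zero_add]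
      funext i
      rw [dimz_apply]
      apply Finset.sum_eq_zero
      intro p _
      rw [if_neg]
      rintro ⟨⟨a, b⟩, _⟩
      have := (ih _ h p).2 (by rw [a])
      rw [this] at b
      exact h.ne b
  have hsumH : ∑ c, H c = 0 := by
    have e1 := hv t
    rw [← dimz_fiber π κ (fun p => v p = t), Finset.sum_congr rfl (fun c _ => hvt c),
      Finset.sum_add_distrib, ← dimz_fiber π κ (fun p => ρ (κ p) = t)] at e1
    have e2 : ∑ c, dimz π (fun p => κ p = c ∧ ρ (κ p) = t) = ∑ c, if ρ c = t then zc (β t) else 0 := by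
      refine Finset.sum_congr rfl fun c _ => ?_
      split_ifs with hc
      · rw [← hc, ← hcl c]
        apply dimz_congr
        intro p
        constructor
        · exact fun h => h.1
        · intro h; exact ⟨h, by rw [h]⟩
      · funext i
        rw [dimz_apply]
        apply Finset.sum_eq_zero
        intro p _
        rw [if_neg]
        rintro ⟨⟨a, b⟩, _⟩
        rw [a] at b; exact hc b
    rw [e2] at e1
    simpa using e1
  have hGle : ∀ c, ρ c = t → chi e (G c) (G c) ≤ chi e (zc (β t)) (G c) := by
    intro c hc
    rw [← hFG c hc, chi_add_left]
    have := h1 c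
    rw [hc] at this
    linarith
  have hGz : ∀ c, ρ c = t → G c ≠ 0 → 0 < chi e (G c) (G c) := by
    intro c hc
    refine hG.pos t _ (dimz_nonneg _ _) ?_
    rw [← hFG c hc]
    have : 0 ≤ F c := dimz_nonneg _ _
    exact le_add_of_nonneg_left this
  have hHle : ∀ c, chi e (zc (β t)) (H c) ≤ 0 := by
    intro c
    simp only [hH]
    split_ifs with hc hc'
    · rw [chi_neg_right]
      by_cases h0 : G c = 0
      · rw [h0, chi_zero_right]; simp
      · have := hGz c hc h0
        have := hGle c hc
        linarith
    · exact h2 c t hc'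
    · rw [chi_zero_right]
  have hHz : ∀ c, chi e (zc (β t)) (H c) = 0 := by
    have := congrArg (chi e (zc (β t))) hsumH
    rw [chi_sum_right, chi_zero_right] at this
    have := (Finset.sum_eq_zero_iff_of_nonpos (fun c _ => hHle c)).1 this
    exact fun c => this c (Finset.mem_univ _)
  have hG0 : ∀ c, ρ c = t → G c = 0 := by
    intro c hc
    by_contra h0
    have a1 := hHz c
    simp only [hH, hc, if_true] at a1
    rw [chi_neg_right] at a1
    have := hGz c hc h0
    have := hGle c hc
    linarith
  have hHn : ∀ c, 0 ≤ H c := by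
    intro c
    simp only [hH]
    split_ifs with hc hc'
    · rw [hG0 c hc]; simp
    · exact dimz_nonneg _ _
    · exact le_rfl
  have hF0 : ∀ c, t < ρ c → F c = 0 := by
    intro c hc
    have := (Finset.sum_eq_zero_iff_of_nonneg (fun c _ => hHn c)).1 hsumH c (Finset.mem_univ _)
    simpa [hH, hc, hc.ne'] using this
  intro p
  constructor
  · intro hp
    rcases lt_trichotomy t (ρ (κ p)) with h | h | h
    · exfalso
      have := congrFun (hF0 _ h) (π p)
      exact dimz_pos (π := π) (S := fun q => κ q = κ p ∧ v q ≤ t) ⟨rfl, hp.le⟩ this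
    · exact h.symm
    · have := (ih _ h p).2 rfl
      exact this.symm.trans hp
  · intro hp
    by_cases hle : v p ≤ t
    · by_contra hne
      have hlt := lt_of_le_of_ne hle hne
      have := (ih _ hlt p).1 rfl
      rw [hp] at this
      exact hne this.symm
    · exfalso
      have := congrFun (hG0 _ hp) (π p)
      exact dimz_pos (π := π) (S := fun q => κ q = κ p ∧ ¬ v q ≤ t) ⟨rfl, hle⟩ this

end
end CoHA

namespace CoHA

section
variable {I : Type} [Fintype I] {L : Type} [Fintype L]

def EFs {r : ℕ} (e : I → I → ℤ) (β : Fin r → I → ℕ) (L : Type) [Fintype L] : Prop :=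
  ∀ (C : Type) [Fintype C] (π : L → I) (κ : L → C) (ρ : C → Fin r)
    (_ : ∀ c, dimz π (fun p => κ p = c) = zc (β (ρ c))) (g P : MvPolynomial L ℚ)
    (_ : Reps P (Phi e π (fun p => (ρ (κ p) : ℕ)) g)) (x : C → ℚ) (_ : Function.Injective x),
    eval (x ∘ κ) P = (∑ σ ∈ (Wg π).filter (fun σ => ∀ p, ρ (κ (σ p)) = ρ (κ p)),
      eval (x ∘ κ ∘ σ) g) * Ker e π (fun p => (ρ (κ p) : ℕ)) (x ∘ κ)

theorem dimz_subtype' (π : L → I) (A : L → Prop) (T : {p // A p} → Prop) :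
    dimz (fun p : {p // A p} => π p) T = dimz π (fun p => ∃ h : A p, T ⟨p, h⟩) := by
  funext i
  rw [dimz_apply, dimz_apply]
  refine Fintype.sum_of_injective (fun p : {p // A p} => (p : L)) Subtype.val_injective _ _ ?_ ?_
  · intro p hp
    have : ¬ A p := fun h => hp ⟨⟨p, h⟩, rfl⟩
    simp [this]
  · rintro ⟨p, hp⟩; simp [hp]

theorem exists_equiv {M : Type} [Fintype M] (π : L → I) (πM : M → I)
    (h : dimz π (fun _ => True) = dimz πM (fun _ => True)) :
    ∃ f : L ≃ M, ∀ p, πM (f p) = π p := by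
  have hc : ∀ i, Nonempty ({p // π p = i} ≃ {p // πM p = i}) := by
    intro i
    refine ⟨Fintype.equivOfCardEq ?_⟩
    have := congrFun h i
    rw [dimz_apply, dimz_apply] at this
    simp only [true_and, ← Finset.sum_filter, Finset.sum_const, nsmul_eq_mul, mul_one] at this
    rw [Fintype.card_subtype, Fintype.card_subtype]
    exact_mod_cast this
  exact ⟨Equiv.ofFiberEquiv fun i => (hc i).some, fun p => Equiv.ofFiberEquiv_map _ p⟩

theorem lev_dim {r : ℕ} {C : Type} [Fintype C] {β : Fin r → I → ℕ} {π : L → I} {κ : L → C}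
    {ρ : C → Fin r} (hcl : ∀ c, dimz π (fun p => κ p = c) = zc (β (ρ c))) (u : Fin r) :
    dimz π (fun p => ρ (κ p) = u) = ((Finset.univ.filter fun c => ρ c = u).card : ℤ) • zc (β u) := by
  rw [← dimz_fiber π κ]
  have : ∀ c, dimz π (fun p => κ p = c ∧ ρ (κ p) = u) = if ρ c = u then zc (β u) else 0 := by
    intro c
    split_ifs with hc
    · rw [← hc, ← hcl c]
      apply dimz_congr
      intro p
      constructor
      · exact fun h => h.1
      · intro h; exact ⟨h, by rw [h]⟩
    · funext i
      rw [dimz_apply]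
      apply Finset.sum_eq_zero
      intro p _
      rw [if_neg]
      rintro ⟨⟨a, b⟩, _⟩
      rw [a] at b; exact hc b
  rw [Finset.sum_congr rfl (fun c _ => this c), ← Finset.sum_filter, Finset.sum_const]
  simp

theorem Ker_ne {e : I → I → ℤ} {π : L → I} {w : L → ℕ} {y : L → ℚ}
    (h : ∀ p q, w p < w q → y p ≠ y q) : Ker e π w y ≠ 0 := by
  unfold Ker
  rw [Finset.prod_ne_zero_iff]
  intro a _
  split_ifs with hw
  · exact zpow_ne_zero _ (sub_ne_zero.2 (h _ _ hw).symm)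
  · exact one_ne_zero

theorem S_lemma {r : ℕ} {e : I → I → ℤ} {β : Fin r → I → ℕ} (hG : Good e β)
    (hEF : ∀ (M : Type) [Fintype M], Fintype.card M < Fintype.card L → EFs e β M)
    (π : L → I) (d t : Fin r) (htd : t < d) (hdim : dimz π (fun _ => True) = zc (β d))
    (A : L → Prop) (hA : ¬ Null e π (fun p => if A p then 0 else 1)) :
    chi e (zc (β t)) (dimz π A) ≤ 0 := by
  by_contra hpos
  rw [not_le] at hpos
  have hsplit : ∀ S : L → Prop, dimz π S + dimz π (fun p => ¬ S p) = zc (β d) := by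
    intro S
    rw [← hdim, ← dimz_split π (fun _ => True) S]
    simp only [true_and]
  have hAne : ∃ p, ¬ A p := by
    by_contra hall
    push Not at hall
    have : dimz π A = zc (β d) := by
      rw [← hdim]; exact dimz_congr fun p => by simp [hall p]
    rw [this] at hpos
    exact absurd (hG.neg t d htd) (not_le.2 hpos)
  have hcard : Fintype.card {p // A p} < Fintype.card L := by
    obtain ⟨p, hp⟩ := hAne
    exact Fintype.card_subtype_lt hp
  have hFle : dimv π A ≤ β d := by
    intro i
    have h1 : (dimv π A i : ℤ) + (dimv π (fun p => ¬ A p) i : ℤ) = (β d i : ℤ) :=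
      congrFun (hsplit A) i
    change dimv π A i ≤ β d i
    omega
  obtain ⟨m, hm, hm0⟩ := hG.gd t d htd (dimv π A) hFle hpos
  have hFz : dimz π A = ∑ u, (m u : ℤ) • zc (β u) := by
    funext i
    rw [dimz, hm]
    simp [zc, Finset.sum_apply]
  obtain ⟨u, hu0, hut⟩ : ∃ u, m u ≠ 0 ∧ u ≤ t := by
    rw [hFz, chi_sum_right] at hpos
    obtain ⟨u, _, hu⟩ := Finset.exists_lt_of_sum_lt (by simpa using hpos :
      ∑ u : Fin r, (0 : ℤ) < ∑ u, chi e (zc (β t)) ((m u : ℤ) • zc (β u)))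
    rw [chi_smul_right] at hu
    refine ⟨u, fun h => by simp [h] at hu, ?_⟩
    by_contra hlt
    have := hG.neg t u (not_le.1 hlt)
    have : (m u : ℤ) * chi e (zc (β t)) (zc (β u)) ≤ 0 :=
      mul_nonpos_of_nonneg_of_nonpos (by positivity) this
    linarith
  obtain ⟨w0, hw0, hw0min⟩ : ∃ w0, m w0 ≠ 0 ∧ ∀ v, m v ≠ 0 → w0 ≤ v := by
    have hne : (Finset.univ.filter fun v => m v ≠ 0).Nonempty := ⟨u, by simpa using hu0⟩
    refine ⟨_, (Finset.mem_filter.1 (Finset.min'_mem _ hne)).2, fun v hv => ?_⟩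
    exact Finset.min'_le _ _ (by simpa using hv)
  have hw0d : w0 < d := lt_of_le_of_lt ((hw0min u hu0).trans hut) htd
  -- the model
  let C := Σ u : Fin r, Fin (m u)
  let M := Σ c : C, Σ i : I, Fin (β c.1 i)
  let πM : M → I := fun x => x.2.1
  let κM : M → C := fun x => x.1
  have hM : ∀ c, dimz πM (fun p => κM p = c) = zc (β c.1) := by
    intro c
    funext i
    rw [dimz_apply, Fintype.sum_sigma]
    rw [Finset.sum_eq_single c]
    · rw [Fintype.sum_sigma]
      simp [πM, κM, zc]
    · intro b _ hb
      apply Finset.sum_eq_zero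
      intro x _
      simp [κM, hb]
    · simp
  have hMt : dimz (fun p : {p // A p} => π p) (fun _ => True) = dimz πM (fun _ => True) := by
    rw [dimz_subtype π A (fun _ => True), ← dimz_fiber πM κM]
    simp only [and_true]
    rw [Finset.sum_congr rfl fun c _ => hM c, Fintype.sum_sigma]
    change dimz π A = _
    rw [hFz]
    refine Finset.sum_congr rfl fun u _ => ?_
    simp
  obtain ⟨f, hf⟩ := exists_equiv _ _ hMt
  let πA : {p // A p} → I := fun p => π p
  let κA : {p // A p} → C := fun p => κM (f p)
  have hcl : ∀ c : C, dimz πA (fun p => κA p = c) = zc (β c.1) := by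
    intro c
    rw [← hM c, ← dimz_equiv f]
    congr 1
    funext p; exact (hf p).symm
  obtain ⟨P, hP⟩ := PL hG.diag hG.off πA (fun p => ((κA p).1 : ℕ)) 1
  obtain ⟨x, hx⟩ := exists_inj C
  have hE := hEF {p // A p} hcard C πA κA (fun c => c.1) hcl 1 P hP x hx
  have hEdeg : Edeg e πA (fun p => ((κA p).1 : ℕ)) = 0 := by
    rw [Edeg_lev e πA (fun p => (κA p).1), neg_eq_zero]
    apply Finset.sum_eq_zero
    rintro ⟨u, v⟩ huv
    have huv' : u < v := by simpa using huv
    simp only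
    rw [lev_dim (ρ := fun c : C => c.1) hcl, lev_dim (ρ := fun c : C => c.1) hcl,
      chi_smul_left, chi_smul_right]
    by_cases h1 : m u = 0
    · have : (Finset.univ.filter fun c : C => c.1 = u) = ∅ := by
        apply Finset.filter_eq_empty_iff.2
        rintro ⟨c, k⟩ _ rfl
        exact (Fin.cast h1 k).elim0
      rw [this]; simp
    by_cases h2 : m v = 0
    · have : (Finset.univ.filter fun c : C => c.1 = v) = ∅ := by
        apply Finset.filter_eq_empty_iff.2
        rintro ⟨c, k⟩ _ rfl
        exact (Fin.cast h2 k).elim0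
      rw [this]; simp
    rw [hm0 u v huv' h1 h2]; simp
  have hconst := const_of_deg hEdeg hP
  set k0 := eval (fun _ => (0 : ℚ)) P
  have hk0 : k0 ≠ 0 := by
    rw [hconst, eval_C] at hE
    rw [hE]
    refine mul_ne_zero ?_ (Ker_ne fun p q hpq heq => ?_)
    · simp only [map_one, Finset.sum_const, nsmul_eq_mul, mul_one]
      have : ((Wg πA).filter fun σ => ∀ p, (κA (σ p)).1 = (κA p).1).Nonempty :=
        ⟨1, Finset.mem_filter.2 ⟨Wg_one, fun _ => rfl⟩⟩
      exact_mod_cast this.card_pos.ne'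
    · have := hx heq
      rw [this] at hpq
      exact lt_irrefl _ hpq
  apply hA
  refine refine_null A (fun p => ((κA p).1 : ℕ)) r (fun p => (κA p).1.2) k0 hk0 ?_ ?_
  · intro z hz
    rw [← hP z hz, hconst, eval_C]
  apply coarse hG.diag hG.off (w0 + 1 : ℕ)
  apply null_of_deg
  rw [Edeg_cut]
  set S : L → Prop := fun p => (if h : A p then ((κA ⟨p, h⟩).1 : ℕ) else r) < w0 + 1
  have hS : dimz π S = ((Finset.univ.filter fun c : C => c.1 = w0).card : ℤ) • zc (β w0) := by
    rw [← lev_dim (ρ := fun c : C => c.1) hcl w0, dimz_subtype']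
    apply dimz_congr
    intro p
    simp only [S]
    split_ifs with hp
    · constructor
      · intro h
        refine ⟨hp, ?_⟩
        apply le_antisymm (by rw [Fin.le_def]; omega)
        apply hw0min
        intro h0
        exact (Fin.cast h0 (κA ⟨p, hp⟩).2).elim0
      · rintro ⟨_, h⟩; rw [h]; omega
    · constructor
      · intro h; have := w0.2; omega
      · rintro ⟨h, _⟩; exact absurd h hp
  set k := (Finset.univ.filter fun c : C => c.1 = w0).card
  have hk : 0 < k := Finset.card_pos.2 ⟨⟨w0, ⟨0, by omega⟩⟩, by simp⟩
  have hS' : dimz π (fun p => ¬ S p) = zc (β d) - (k : ℤ) • zc (β w0) := by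
    rw [← hsplit S, hS]; simp
  rw [hS', hS, chi_sub_right, chi_smul_right, chi_smul_left, chi_smul_left, hG.root]
  have := hG.neg w0 d hw0d
  have hk' : (0 : ℤ) < k := by exact_mod_cast hk
  nlinarith

end
end CoHA

namespace CoHA

section
variable {I : Type} {L : Type} [Fintype L] {C : Type}

noncomputable def Kcross (e : I → I → ℤ) (π : L → I) (κ : L → C) (w : L → ℕ) (y : L → ℚ) : ℚ :=
  ∏ a : L × L, if w a.1 < w a.2 ∧ κ a.1 ≠ κ a.2 then
    (y a.2 - y a.1) ^ (e (π a.1) (π a.2)) else 1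

theorem Ker_cross (e : I → I → ℤ) (π : L → I) (κ : L → C) (w : L → ℕ) (y : L → ℚ) :
    Ker e π w y = Kcross e π κ w y * Ker (ek e) (fun p => (π p, κ p)) w y := by
  unfold Ker Kcross ek
  rw [← Finset.prod_mul_distrib]
  refine Finset.prod_congr rfl fun a _ => ?_
  by_cases h1 : κ a.1 = κ a.2 <;> by_cases h2 : w a.1 < w a.2 <;> simp [h1, h2]

noncomputable def Eall (κ : L → C) : MvPolynomial L ℚ :=
  ∏ a : L × L, if κ a.1 ≠ κ a.2 then (X a.2 - X a.1) else 1

noncomputable def Ecr (e : I → I → ℤ) (π : L → I) (κ : L → C) (w : L → ℕ) : MvPolynomial L ℚ :=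
  ∏ a : L × L, if κ a.1 ≠ κ a.2 then (if w a.1 < w a.2 then
    (X a.2 - X a.1) ^ (e (π a.1) (π a.2) + 1).toNat else (X a.2 - X a.1)) else 1

theorem Eall_ne {κ : L → C} {y : L → ℚ} (hy : ∀ p q, κ p ≠ κ q → y p ≠ y q) :
    eval y (Eall κ) ≠ 0 := by
  unfold Eall
  rw [map_prod, Finset.prod_ne_zero_iff]
  intro a _
  split_ifs with h
  · simp only [map_sub, eval_X]
    exact sub_ne_zero.2 (hy _ _ h).symm
  · simp

theorem eval_Ecr {e : I → I → ℤ} (he : ∀ i j, -1 ≤ e i j) {π : L → I} {κ : L → C} {w : L → ℕ}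
    {y : L → ℚ} (hy : ∀ p q, κ p ≠ κ q → y p ≠ y q) :
    eval y (Ecr e π κ w) = eval y (Eall κ) * Kcross e π κ w y := by
  unfold Ecr Eall Kcross
  rw [map_prod, map_prod, ← Finset.prod_mul_distrib]
  refine Finset.prod_congr rfl fun a _ => ?_
  by_cases h1 : κ a.1 = κ a.2 <;> by_cases h2 : w a.1 < w a.2 <;> simp [h1, h2]
  have hd : y a.2 - y a.1 ≠ 0 := sub_ne_zero.2 (hy _ _ h1).symm
  rw [← zpow_natCast, Int.toNat_of_nonneg (by have := he (π a.1) (π a.2); linarith),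
    zpow_add_one₀ hd, mul_comm]

theorem Eall_comp {κ : L → C} {σ : Equiv.Perm L} (hσ : ∀ p, κ (σ p) = κ p) (y : L → ℚ) :
    eval (y ∘ σ) (Eall κ) = eval y (Eall κ) := by
  unfold Eall
  rw [map_prod, map_prod]
  refine Fintype.prod_equiv (σ.prodCongr σ) _ _ fun a => ?_
  simp only [Equiv.prodCongr_apply, Prod.map_fst, Prod.map_snd, hσ]
  split_ifs <;> simp

theorem EF [Fintype I] {r : ℕ} {e : I → I → ℤ} {β : Fin r → I → ℕ} (hG : Good e β) (N : ℕ) :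
    ∀ (L : Type) [Fintype L], Fintype.card L = N → EFs e β L := by
  induction N using Nat.strong_induction_on with
  | _ N ih =>
  intro L _ hN C _ π κ ρ hcl g P hP x hx
  set w : L → ℕ := fun p => (ρ (κ p) : ℕ) with hw
  set πκ : L → I × C := fun p => (π p, κ p)
  have hπ : ∀ τ ∈ Wg πκ, τ ∈ Wg π := fun τ hτ => mem_Wg.2 fun p => congrArg Prod.fst (mem_Wg.1 hτ p)
  have hκ : ∀ τ ∈ Wg πκ, ∀ p, κ (τ p) = κ p := fun τ hτ p => congrArg Prod.snd (mem_Wg.1 hτ p)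
  have he1 : ∀ i j, -1 ≤ e i j := by
    intro i j
    by_cases h : i = j
    · rw [h]; exact hG.diag j
    · have := hG.off i j h; linarith
  have hxκ : ∀ p q, κ p ≠ κ q → (x ∘ κ) p ≠ (x ∘ κ) q := fun p q h h' => h (hx h')
  set ws : Equiv.Perm L → L → ℕ := fun σ => w ∘ (σ⁻¹ : Equiv.Perm L)
  set hs : Equiv.Perm L → MvPolynomial L ℚ := fun σ => rename σ g * Ecr e π κ (ws σ)
  choose Ps hPs using fun σ => PL (ek_diag hG.diag) (ek_off hG.off) πκ (ws σ) (hs σ)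
  have key : MvPolynomial.C ((Wg πκ).card : ℚ) * Eall κ * P = ∑ σ ∈ Wg π, Ps σ := by
    rw [← sub_eq_zero]
    apply dens
    intro y hy
    have hyκ : ∀ p q, κ p ≠ κ q → y p ≠ y q := fun p q h h' => h (congrArg κ (hy h'))
    rw [map_sub, map_mul, map_mul, eval_C, map_sum, sub_eq_zero, hP y hy, mul_assoc,
      ← nsmul_eq_mul, ← Finset.sum_const]
    simp only [fun σ => hPs σ y hy]
    have : ∀ τ ∈ Wg πκ, eval y (Eall κ) * Phi e π w g y = ∑ σ ∈ Wg π,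
        eval (y ∘ τ) (hs σ) * Ker (ek e) πκ (ws σ) (y ∘ τ) := by
      intro τ hτ
      rw [← Phi_inv (hπ τ hτ) y, Phi, Finset.mul_sum]
      refine Finset.sum_congr rfl fun σ hσ => ?_
      have h1 := Ker_perm (e := e) (ws σ) (y ∘ τ) hσ
      have h2 : ws σ ∘ σ = w := by funext p; simp [ws]
      rw [h2] at h1
      rw [h1, Ker_cross e π κ, map_mul, eval_rename, eval_Ecr he1
        (y := y ∘ τ) (fun p q h h' => h (congrArg κ (τ.injective (hy h')))),
        Eall_comp (hκ τ hτ)]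
      ring
    rw [Finset.sum_congr rfl this, Finset.sum_comm]
    rfl
  have hbad : ∀ σ ∈ Wg π, (¬ ∀ p, ρ (κ (σ p)) = ρ (κ p)) → eval (x ∘ κ) (Ps σ) = 0 := by
    intro σ hσ hne
    by_contra hnz
    have hnull : ∀ c, ¬ Null e (fun p : {p // κ p = c} => π p) (fun p => ws σ p) := fun c hc =>
      hnz (cluster_vanish hG.diag hG.off c hc (hPs σ) x)
    set v : L → Fin r := fun p => ρ (κ (σ⁻¹ p)) with hv
    have hcut : ∀ c (t : Fin r), ¬ Null e (fun p : {p // κ p = c} => π p)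
        (fun p => if v p ≤ t then 0 else 1) := by
      intro c t hc
      apply hnull c
      apply coarse hG.diag hG.off (t + 1 : ℕ)
      convert hc using 3 with p
      simp only [ws, hw, hv, Function.comp, Fin.le_def]
      exact Nat.lt_succ_iff
    have hclT : ∀ c, dimz (fun p : {p // κ p = c} => π p) (fun _ => True) = zc (β (ρ c)) := by
      intro c
      rw [dimz_subtype π (fun p => κ p = c) (fun _ => True), ← hcl c]
      exact dimz_congr fun p => by simp
    have := combin hG π κ ρ hcl v ?_ ?_ ?_
    · apply hne
      intro p
      have := this (σ p)
      have h0 : σ⁻¹ (σ p) = p := σ.symm_apply_apply p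
      simp only [hv, h0] at this
      exact this.symm
    · intro u
      rw [← dimz_equiv σ π]
      have h1 : π ∘ σ = π := funext (mem_Wg.1 hσ)
      rw [h1]
      apply dimz_congr
      intro p
      simp [hv]
    · intro c
      by_contra hlt
      rw [not_le] at hlt
      apply hcut c (ρ c)
      apply null_of_deg
      rw [Edeg_cut, dimz_subtype π (fun p => κ p = c) (fun p => v p ≤ ρ c),
        dimz_subtype π (fun p => κ p = c) (fun p => ¬ v p ≤ ρ c)]
      linarith
    · intro c t htc
      rw [← dimz_subtype π (fun p => κ p = c) (fun p => v p ≤ t)]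
      refine S_lemma hG ?_ _ (ρ c) t htc (hclT c) _ ?_
      · intro M _ hM
        refine ih _ ?_ M rfl
        rw [← hN]
        exact lt_of_lt_of_le hM (Fintype.card_subtype_le _)
      · convert hcut c t using 4
  have hgood : ∀ σ ∈ Wg π, (∀ p, ρ (κ (σ p)) = ρ (κ p)) → eval (x ∘ κ) (Ps σ) =
      ((Wg πκ).card : ℚ) * eval (x ∘ κ) (Eall κ) * (eval (x ∘ κ ∘ σ) g * Ker e π w (x ∘ κ)) := by
    intro σ hσ hl
    have hws : ws σ = w := by
      funext p
      simp only [ws, hw, Function.comp]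
      have := hl (σ⁻¹ p)
      have h0 : σ (σ⁻¹ p) = p := σ.apply_symm_apply p
      rw [h0] at this
      rw [this]
    have hK1 : ∀ y, Ker (ek e) πκ w y = 1 := by
      intro y
      unfold Ker
      apply Finset.prod_eq_one
      intro a _
      split_ifs with h
      · have : κ a.1 ≠ κ a.2 := fun h' => by simp [hw, h'] at h
        simp [ek, πκ, this]
      · rfl
    have hPe : Ps σ = ∑ τ ∈ Wg πκ, rename τ (hs σ) := by
      refine (hPs σ).unique fun y hy => ?_
      rw [map_sum, Phi]
      refine Finset.sum_congr rfl fun τ _ => ?_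
      rw [eval_rename, hws, hK1, mul_one]
    rw [hPe, map_sum]
    have : ∀ τ ∈ Wg πκ, eval (x ∘ κ) (rename τ (hs σ)) = eval (x ∘ κ) (hs σ) := by
      intro τ hτ
      rw [eval_rename]
      congr 2
      funext p
      simp [hκ τ hτ p]
    rw [Finset.sum_congr rfl this, Finset.sum_const, nsmul_eq_mul, map_mul, eval_rename, hws,
      eval_Ecr he1 hxκ, Ker_cross e π κ w, hK1]
    simp only [Function.comp_assoc]
    ring
  have hfin := congrArg (eval (x ∘ κ)) key
  rw [map_mul, map_mul, eval_C, map_sum] at hfin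
  apply mul_left_cancel₀ (mul_ne_zero (Wg_card_pos πκ) (Eall_ne hxκ))
  rw [hfin, Finset.sum_mul, Finset.mul_sum, Finset.sum_filter]
  refine Finset.sum_congr rfl fun σ hσ => ?_
  split_ifs with h
  · exact hgood σ hσ h
  · exact hbad σ hσ h

end
end CoHA

namespace CoHA

section
variable {I : Type} [Fintype I]

abbrev BF (I : Type) := (I → ℤ) →ₗ[ℤ] (I → ℤ) →ₗ[ℤ] ℤ

noncomputable abbrev sv (i : I) : I → ℤ := Pi.single i 1

theorem vec_sum (x : I → ℤ) : x = ∑ k, x k • sv k := by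
  conv_lhs => rw [← Finset.univ_sum_single x]
  refine Finset.sum_congr rfl fun k _ => ?_
  rw [sv, ← Pi.single_smul]; simp

theorem B_right (B : BF I) (y x : I → ℤ) : B y x = ∑ k, x k * B y (sv k) := by
  conv_lhs => rw [vec_sum x, map_sum]
  simp only [map_smul, smul_eq_mul]

theorem B_left (B : BF I) (x y : I → ℤ) : B x y = ∑ k, x k * B (sv k) y := by
  conv_lhs => rw [vec_sum x, map_sum, LinearMap.sum_apply]
  simp only [map_smul, LinearMap.smul_apply, smul_eq_mul]

def Sup (S : Finset I) (x : I → ℤ) : Prop := ∀ i, i ∉ S → x i = 0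

theorem Sup.sv {S : Finset I} {i : I} (hi : i ∈ S) : Sup S (CoHA.sv i) := by
  intro j hj
  have : j ≠ i := fun h => hj (h ▸ hi)
  simp [this]

structure RD (S : Finset I) (B : BF I) (l : List (I → ℤ)) : Prop where
  diag : ∀ i ∈ S, B (sv i) (sv i) = 1
  off : ∀ i ∈ S, ∀ j ∈ S, i ≠ j → B (sv i) (sv j) ≤ 0
  pd : ∀ x, Sup S x → x ≠ 0 → 0 < B x x
  mem : ∀ x, x ∈ l ↔ (Sup S x ∧ 0 ≤ x ∧ B x x = 1)
  pw : l.Pairwise (fun x y => x ≠ y ∧ B x y ≤ 0 ∧ 0 ≤ B y x)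

theorem RD.head {S : Finset I} {B : BF I} {x : I → ℤ} {t : List (I → ℤ)} (h : RD S B (x :: t)) :
    ∃ i ∈ S, x = sv i ∧ ∀ k ∈ S, k ≠ i → B (sv k) (sv i) = 0 := by
  have hx := (h.mem x).1 (by simp)
  have hsv : ∀ k ∈ S, sv k ∈ x :: t := fun k hk =>
    (h.mem _).2 ⟨Sup.sv hk, Pi.single_nonneg.2 (by norm_num), h.diag k hk⟩
  have hpw := (List.pairwise_cons.1 h.pw).1
  have : ∃ i ∈ S, x = sv i := by
    by_contra hno
    push Not at hno
    have h1 := hx.2.2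
    rw [B_right] at h1
    have : ∑ k, x k * B x (sv k) ≤ 0 := by
      refine Finset.sum_nonpos fun k _ => ?_
      by_cases hk : k ∈ S
      · have hm : sv k ∈ t := by
          rcases List.mem_cons.1 (hsv k hk) with h | h
          · exact absurd h.symm (hno k hk)
          · exact h
        exact mul_nonpos_of_nonneg_of_nonpos (hx.2.1 k) (hpw _ hm).2.1
      · simp [hx.1 k hk]
    linarith
  obtain ⟨i, hi, rfl⟩ := this
  refine ⟨i, hi, rfl, fun k hk hki => ?_⟩
  have hm : sv k ∈ t := by
    rcases List.mem_cons.1 (hsv k hk) with h | h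
    · exfalso
      apply hki
      have := congrFun h k
      by_contra hne
      simp [hne] at this
    · exact h
  exact le_antisymm (h.off k hk i hi hki) (hpw _ hm).2.2

noncomputable def refl (B : BF I) (i : I) : (I → ℤ) →ₗ[ℤ] (I → ℤ) :=
  LinearMap.id - (B (sv i) + B.flip (sv i)).smulRight (sv i)

theorem refl_apply (B : BF I) (i : I) (x : I → ℤ) :
    refl B i x = x - (B (sv i) x + B x (sv i)) • sv i := rfl

theorem refl_refl {B : BF I} {i : I} (h : B (sv i) (sv i) = 1) (x : I → ℤ) :
    refl B i (refl B i x) = x := by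
  simp only [refl_apply, map_sub, map_smul, LinearMap.sub_apply, LinearMap.smul_apply, h,
    smul_eq_mul]
  ext j
  simp only [Pi.sub_apply, Pi.smul_apply, smul_eq_mul]
  ring

theorem refl_self {B : BF I} {i : I} (h : B (sv i) (sv i) = 1) : refl B i (sv i) = - sv i := by
  rw [refl_apply, h]
  ext j
  simp only [Pi.sub_apply, Pi.smul_apply, smul_eq_mul, Pi.neg_apply]
  ring

theorem refl_q {B : BF I} {i : I} (h : B (sv i) (sv i) = 1) (x : I → ℤ) :
    B (refl B i x) (refl B i x) = B x x := by
  simp only [refl_apply, map_sub, map_smul, LinearMap.sub_apply, LinearMap.smul_apply, h,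
    smul_eq_mul]
  ring

theorem src {S : Finset I} {B : BF I} {i : I} (hi : i ∈ S) (h1 : B (sv i) (sv i) = 1)
    (h : ∀ k ∈ S, k ≠ i → B (sv k) (sv i) = 0) {x : I → ℤ} (hx : Sup S x) : B x (sv i) = x i := by
  rw [B_left, Finset.sum_eq_single i]
  · rw [h1, mul_one]
  · intro k _ hk
    by_cases hS : k ∈ S
    · rw [h k hS hk, mul_zero]
    · rw [hx k hS, zero_mul]
  · simp

theorem refl_sup {S : Finset I} (B : BF I) {i : I} (hi : i ∈ S) {x : I → ℤ} (hx : Sup S x) :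
    Sup S (refl B i x) := by
  intro j hj
  have : j ≠ i := fun h => hj (h ▸ hi)
  simp [refl_apply, hx j hj, this]

theorem refl_off (B : BF I) {i j : I} (h : j ≠ i) (x : I → ℤ) : refl B i x j = x j := by
  simp [refl_apply, h]

noncomputable def Bst (B : BF I) (i : I) : BF I := B.compl₁₂ (refl B i) (refl B i)

theorem Bst_apply (B : BF I) (i : I) (x y : I → ℤ) :
    Bst B i x y = B (refl B i x) (refl B i y) := rfl

theorem refl_i {S : Finset I} {B : BF I} {i : I} (hi : i ∈ S) (h1 : B (sv i) (sv i) = 1)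
    (h : ∀ k ∈ S, k ≠ i → B (sv k) (sv i) = 0) {x : I → ℤ} (hx : Sup S x) :
    refl B i x i = - B (sv i) x := by
  simp [refl_apply, src hi h1 h hx]

theorem RD.reflect {S : Finset I} {B : BF I} {i : I} {t : List (I → ℤ)} (h : RD S B (sv i :: t))
    (hi : i ∈ S) (hs : ∀ k ∈ S, k ≠ i → B (sv k) (sv i) = 0) :
    RD S (Bst B i) (t.map (refl B i) ++ [sv i]) := by
  have h1 := h.diag i hi
  have hpw := List.pairwise_cons.1 h.pw
  have hrn : ∀ y ∈ t, refl B i y ≠ sv i := by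
    intro y hy heq
    have h2 : y = - sv i := by rw [← refl_self h1, ← heq, refl_refl h1]
    have := ((h.mem y).1 (by simp [hy])).2.1 i
    rw [h2] at this
    simp at this
  refine ⟨?_, ?_, ?_, ?_, ?_⟩
  · intro j hj
    rw [Bst_apply, refl_q h1, h.diag j hj]
  · intro j hj k hk hjk
    by_cases hji : j = i
    · subst hji
      rw [Bst_apply, refl_self h1, refl_apply, hs k hk hjk.symm]
      simp [-zsmul_eq_mul, h1]
    by_cases hki : k = i
    · subst hki
      rw [Bst_apply, refl_self h1, refl_apply, hs j hj hjk]
      have := h.off k hk j hj (Ne.symm hjk)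
      simp [-zsmul_eq_mul, h1, hs j hj hjk, this]
    · rw [Bst_apply, refl_apply, refl_apply, hs j hj hji, hs k hk hki]
      have := h.off j hj k hk hjk
      simp only [map_sub, map_smul, LinearMap.sub_apply, LinearMap.smul_apply, smul_eq_mul, h1, hs j hj hji]
      linarith
  · intro x hx hx0
    rw [Bst_apply, refl_q h1]
    exact h.pd x hx hx0
  · intro x
    rw [Bst_apply, refl_q h1]
    constructor
    · intro hx
      rcases List.mem_append.1 hx with hx | hx
      · obtain ⟨y, hy, rfl⟩ := List.mem_map.1 hx
        obtain ⟨hy1, hy2, hy3⟩ := (h.mem y).1 (by simp [hy])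
        refine ⟨refl_sup B hi hy1, ?_, by rw [refl_q h1, hy3]⟩
        intro j
        by_cases hj : j = i
        · subst hj
          rw [refl_i hi h1 hs hy1]
          have := (hpw.1 y hy).2.1
          simp only [Pi.zero_apply]; linarith
        · rw [refl_off B hj]; exact hy2 j
      · rw [List.mem_singleton.1 hx]
        exact ⟨Sup.sv hi, Pi.single_nonneg.2 (by norm_num), h1⟩
    · rintro ⟨hx1, hx2, hx3⟩
      rw [List.mem_append]
      by_cases hp : 0 < B (sv i) x
      · right
        rw [List.mem_singleton]
        by_contra hne
        have h2 := h.pd (x - sv i) (fun j hj => by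
          simp [hx1 j hj, Sup.sv hi j hj]) (sub_ne_zero.2 hne)
        have h3 : B x (sv i) = x i := src hi h1 hs hx1
        have h4 : B (sv i) x ≤ x i := by
          rw [B_right, Finset.sum_eq_add_sum_sdiff_singleton_of_mem (Finset.mem_univ i), h1, mul_one]
          have : ∑ k ∈ Finset.univ \ {i}, x k * B (sv i) (sv k) ≤ 0 := by
            refine Finset.sum_nonpos fun k hk => ?_
            by_cases hkS : k ∈ S
            · refine mul_nonpos_of_nonneg_of_nonpos (hx2 k) (h.off i hi k hkS ?_)
              rintro rfl; simp at hk
            · simp [hx1 k hkS]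
          linarith
        simp only [map_sub, LinearMap.sub_apply, h1, h3, hx3] at h2
        linarith
      · left
        rw [not_lt] at hp
        refine List.mem_map.2 ⟨refl B i x, ?_, refl_refl h1 x⟩
        have hm : refl B i x ∈ sv i :: t := by
          refine (h.mem _).2 ⟨refl_sup B hi hx1, ?_, by rw [refl_q h1, hx3]⟩
          intro j
          by_cases hj : j = i
          · subst hj
            rw [refl_i hi h1 hs hx1]
            simp only [Pi.zero_apply]; linarith
          · rw [refl_off B hj]; exact hx2 j
        rcases List.mem_cons.1 hm with hm | hm
        · exfalso
          have h2 : x = - sv i := by rw [← refl_self h1, ← hm, refl_refl h1]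
          have := hx2 i
          rw [h2] at this
          simp at this
        · exact hm
  · rw [List.pairwise_append]
    refine ⟨?_, by simp, ?_⟩
    · rw [List.pairwise_map]
      refine hpw.2.imp ?_
      rintro x y ⟨h2, h3⟩
      refine ⟨fun h' => h2 ?_, ?_⟩
      · rw [← refl_refl h1 x, h', refl_refl h1]
      · rw [Bst_apply, Bst_apply, refl_refl h1, refl_refl h1]; exact h3
    · intro x hx y hy
      rw [List.mem_singleton.1 hy]
      obtain ⟨z, hz, rfl⟩ := List.mem_map.1 hx
      refine ⟨hrn z hz, ?_⟩
      rw [Bst_apply, Bst_apply, refl_refl h1, refl_self h1]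
      have := hpw.1 z hz
      simp [this.2.1, this.2.2]

def lsum (m : (I → ℤ) → ℕ) (l : List (I → ℤ)) : I → ℤ := (l.map fun x => m x • x).sum

theorem lsum_map_right (B : BF I) (m : (I → ℤ) → ℕ) (y : I → ℤ) (l : List (I → ℤ)) :
    B y (lsum m l) = (l.map fun x => (m x : ℤ) * B y x).sum := by
  unfold lsum
  rw [map_list_sum, List.map_map]
  congr 1
  refine List.map_congr_left fun x _ => ?_
  rw [Function.comp, map_nsmul, nsmul_eq_mul]

theorem lsum_map_left (B : BF I) (m : (I → ℤ) → ℕ) (y : I → ℤ) (l : List (I → ℤ)) :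
    B (lsum m l) y = (l.map fun x => (m x : ℤ) * B x y).sum := by
  have := lsum_map_right B.flip m y l
  simpa using this

theorem lsum_congr {m m' : (I → ℤ) → ℕ} {l : List (I → ℤ)} (h : ∀ x ∈ l, m x = m' x) :
    lsum m l = lsum m' l := by
  unfold lsum
  congr 1
  exact List.map_congr_left fun x hx => by rw [h x hx]

def Dec (B : BF I) (l : List (I → ℤ)) (δ : I → ℤ) : Prop :=
  ∃ m : (I → ℤ) → ℕ, δ = lsum m l ∧ l.Pairwise (fun x y => m x ≠ 0 → m y ≠ 0 → B x y = 0)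

theorem list_sum_zero {l : List ℤ} (h : ∀ x ∈ l, x = 0) : l.sum = 0 :=
  List.sum_eq_zero h

theorem lsum_nonpos : ∀ {l : List ℤ}, (∀ x ∈ l, x ≤ 0) → l.sum ≤ 0
  | [], _ => by simp
  | a :: l, h => by
    have h1 : l.sum ≤ 0 := lsum_nonpos fun x hx => h x (by simp [hx])
    have h2 := h a (by simp)
    rw [List.sum_cons]
    linarith

theorem list_nonpos_zero : ∀ {l : List ℤ}, (∀ x ∈ l, x ≤ 0) → l.sum = 0 → ∀ x ∈ l, x = 0
  | [], _, _ => by simp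
  | a :: l, h, hs => by
    have h1 : l.sum ≤ 0 := lsum_nonpos fun x hx => h x (by simp [hx])
    have h2 := h a (by simp)
    rw [List.sum_cons] at hs
    have := list_nonpos_zero (l := l) (fun x hx => h x (by simp [hx])) (by linarith)
    intro x hx
    rcases List.mem_cons.1 hx with rfl | hx
    · linarith
    · exact this x hx

theorem dec_peel {S : Finset I} {B : BF I} {i : I} {t : List (I → ℤ)} (h : RD S B (sv i :: t))
    (hi : i ∈ S) {δ : I → ℤ} (hd : Dec B (sv i :: t) (δ - B (sv i) δ • sv i))
    (hk : 0 ≤ B (sv i) δ) : Dec B (sv i :: t) δ := by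
  obtain ⟨m, hm1, hm2⟩ := hd
  have h1 := h.diag i hi
  have hpw := List.pairwise_cons.1 h.pw
  have hm3 := List.pairwise_cons.1 hm2
  have h0 : B (sv i) (lsum m (sv i :: t)) = 0 := by
    rw [← hm1, map_sub, map_smul, h1, smul_eq_mul]; ring
  rw [lsum_map_right, List.map_cons, List.sum_cons, h1, mul_one] at h0
  have hmi : m (sv i) = 0 := by
    by_contra hne
    have : (t.map fun x => (m x : ℤ) * B (sv i) x).sum = 0 := by
      apply list_sum_zero
      intro z hz
      obtain ⟨x, hx, rfl⟩ := List.mem_map.1 hz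
      by_cases hmx : m x = 0
      · simp [hmx]
      · simp [hm3.1 x hx hne hmx]
    rw [this] at h0
    apply hne
    simpa using h0
  rw [hmi, Nat.cast_zero, zero_add] at h0
  have hz : ∀ x ∈ t, (m x : ℤ) * B (sv i) x = 0 := by
    intro x hx
    refine list_nonpos_zero ?_ h0 _ (List.mem_map.2 ⟨x, hx, rfl⟩)
    intro z hz
    obtain ⟨x, hx, rfl⟩ := List.mem_map.1 hz
    exact mul_nonpos_of_nonneg_of_nonpos (by positivity) (hpw.1 x hx).2.1
  have hne : ∀ x ∈ t, x ≠ sv i := fun x hx => (hpw.1 x hx).1.symm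
  refine ⟨Function.update m (sv i) (B (sv i) δ).toNat, ?_, ?_⟩
  · have h2 : lsum (Function.update m (sv i) (B (sv i) δ).toNat) t = lsum m t :=
      lsum_congr fun x hx => by simp [Function.update_of_ne (hne x hx)]
    have h3 : ∀ m', lsum m' (sv i :: t) = m' (sv i) • sv i + lsum m' t := fun m' => by simp [lsum]
    rw [h3, h2, Function.update_self]
    rw [h3, hmi, zero_smul, zero_add] at hm1
    rw [← hm1, ← natCast_zsmul, Int.toNat_of_nonneg hk]
    abel
  · rw [List.pairwise_cons]
    refine ⟨?_, ?_⟩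
    · intro x hx _ hmx
      rw [Function.update_of_ne (hne x hx)] at hmx
      have := hz x hx
      simpa [hmx] using this
    · refine hm3.2.imp_of_mem ?_
      intro x y hx hy hxy
      rw [Function.update_of_ne (hne x hx), Function.update_of_ne (hne y hy)]
      exact hxy

theorem dec_refl {S : Finset I} {B : BF I} {i : I} {t : List (I → ℤ)} (h : RD S B (sv i :: t))
    (hi : i ∈ S) (hs : ∀ k ∈ S, k ≠ i → B (sv k) (sv i) = 0) {δ : I → ℤ} (hδ : Sup S δ)
    (hδ0 : 0 ≤ δ) (hd : Dec (Bst B i) (t.map (refl B i) ++ [sv i]) (refl B i δ)) :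
    Dec B (sv i :: t) δ := by
  obtain ⟨m, hm1, hm2⟩ := hd
  have h1 := h.diag i hi
  have hpw := List.pairwise_cons.1 h.pw
  have hne : ∀ x ∈ t, x ≠ sv i := fun x hx => (hpw.1 x hx).1.symm
  rw [List.pairwise_append] at hm2
  obtain ⟨hm3, -, hm4⟩ := hm2
  have h0 : Bst B i (refl B i δ) (sv i) = - δ i := by
    rw [Bst_apply, refl_refl h1, refl_self h1, map_neg, src hi h1 hs hδ]
  rw [hm1, lsum_map_left, List.map_append, List.sum_append] at h0
  have h2 : Bst B i (sv i) (sv i) = 1 := by rw [Bst_apply, refl_q h1, h1]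
  have hmi : m (sv i) = 0 := by
    by_contra hne
    have h3 : ((t.map (refl B i)).map fun x => (m x : ℤ) * Bst B i x (sv i)).sum = 0 := by
      apply list_sum_zero
      intro z hz
      obtain ⟨x, hx, rfl⟩ := List.mem_map.1 hz
      by_cases hmx : m x = 0
      · simp [hmx]
      · simp [hm4 x hx (sv i) (by simp) hmx hne]
    rw [h3] at h0
    simp [h2] at h0
    have := hδ0 i
    simp only [Pi.zero_apply] at this
    omega
  refine ⟨fun y => if y = sv i then 0 else m (refl B i y), ?_, ?_⟩
  · rw [← refl_refl h1 δ, hm1]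
    simp only [lsum, List.map_append, List.sum_append, map_add, map_list_sum, List.map_map,
      List.map_cons, List.sum_cons, List.map_nil, List.sum_nil, hmi]
    simp only [zero_smul, map_zero, add_zero, if_true, zero_add]
    congr 1
    refine List.map_congr_left fun x hx => ?_
    simp only [Function.comp, hne x hx, if_false, map_nsmul, refl_refl h1]
  · rw [List.pairwise_cons]
    refine ⟨by simp, ?_⟩
    rw [List.pairwise_map] at hm3
    refine hm3.imp_of_mem ?_
    intro x y hx hy hxy
    simp only [hne x hx, hne y hy, if_false]
    rw [Bst_apply, refl_refl h1, refl_refl h1] at hxy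
    exact hxy

theorem cone_cons {x a : I → ℤ} {t : List (I → ℤ)}
    (h : a ∈ AddSubmonoid.closure {y | y ∈ x :: t}) :
    ∃ k : ℕ, ∃ b ∈ AddSubmonoid.closure {y | y ∈ t}, a = k • x + b := by
  induction h using AddSubmonoid.closure_induction with
  | mem y hy =>
    rcases List.mem_cons.1 hy with rfl | hy
    · exact ⟨1, 0, zero_mem _, by simp⟩
    · exact ⟨0, y, AddSubmonoid.subset_closure hy, by simp⟩
  | zero => exact ⟨0, 0, zero_mem _, by simp⟩
  | add y z _ _ hy hz =>
    obtain ⟨k, b, hb, rfl⟩ := hy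
    obtain ⟨k', b', hb', rfl⟩ := hz
    exact ⟨k + k', b + b', add_mem hb hb', by rw [add_smul]; abel⟩

theorem cone_map (f : (I → ℤ) →ₗ[ℤ] (I → ℤ)) {a : I → ℤ} {t t' : List (I → ℤ)}
    (h : a ∈ AddSubmonoid.closure {y | y ∈ t}) (ht : ∀ y ∈ t, f y ∈ t') :
    f a ∈ AddSubmonoid.closure {y | y ∈ t'} := by
  induction h using AddSubmonoid.closure_induction with
  | mem y hy => exact AddSubmonoid.subset_closure (ht y hy)
  | zero => simp
  | add y z _ _ hy hz => rw [map_add]; exact add_mem hy hz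

theorem gd_main (S : Finset I) (N : ℕ) : ∀ (k : ℕ) (B : BF I) (L1 L2 : List (I → ℤ)) (δ : I → ℤ),
    RD S B (L1 ++ L2) → Sup S δ → 0 ≤ δ → B δ δ = N → L1.length = k →
    (∃ a ∈ AddSubmonoid.closure {y | y ∈ L1}, ∃ b ∈ AddSubmonoid.closure {y | y ∈ L2},
      δ = a - b) → Dec B (L1 ++ L2) δ := by
  induction N using Nat.strong_induction_on with
  | _ N IH =>
  have start : ∀ N' < N, ∀ (B : BF I) l δ, RD S B l → Sup S δ → 0 ≤ δ → B δ δ = N' →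
      Dec B l δ := by
    intro N' hN' B l δ hl hδ hδ0 hq
    have := IH N' hN' _ B l [] δ (by simpa using hl) hδ hδ0 hq rfl ?_
    · simpa using this
    · refine ⟨δ, ?_, 0, zero_mem _, by simp⟩
      rw [vec_sum δ]
      refine sum_mem fun k _ => ?_
      by_cases hk : k ∈ S
      · have h3 : δ k • sv k = (δ k).toNat • sv k := by
          rw [← natCast_zsmul, Int.toNat_of_nonneg (hδ0 k)]
        rw [h3]
        refine nsmul_mem (AddSubmonoid.subset_closure ?_) _
        exact (hl.mem _).2 ⟨Sup.sv hk, Pi.single_nonneg.2 (by norm_num), hl.diag k hk⟩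
      · rw [hδ k hk, zero_smul]; exact zero_mem _
  intro k
  induction k with
  | zero =>
    rintro B L1 L2 δ hl hδ hδ0 hq hlen ⟨a, ha, b, hb, hab⟩
    have : L1 = [] := List.length_eq_zero_iff.1 hlen
    subst this
    have ha0 : a = 0 := by simpa using ha
    have hb0 : 0 ≤ b := by
      clear hab
      induction hb using AddSubmonoid.closure_induction with
      | mem y hy => exact ((hl.mem y).1 (by simpa using hy)).2.1
      | zero => exact le_refl _
      | add y z _ _ hy hz => exact add_nonneg hy hz
    have : δ = 0 := by
      apply le_antisymm _ hδ0
      rw [hab, ha0, zero_sub]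
      exact neg_nonpos.2 hb0
    refine ⟨fun _ => 0, ?_, ?_⟩
    · rw [this, lsum]; simp
    · exact List.Pairwise.imp (R := fun _ _ => True) (by simp) (List.pairwise_of_forall (by simp))
  | succ k ih =>
    rintro B L1 L2 δ hl hδ hδ0 hq hlen ⟨a, ha, b, hb, hab⟩
    obtain ⟨x, t, rfl⟩ : ∃ x t, L1 = x :: t := List.exists_cons_of_length_eq_add_one hlen
    obtain ⟨i, hi, rfl, hs⟩ := hl.head
    rw [List.cons_append] at hl ⊢
    have h1 := hl.diag i hi
    by_cases hk : 0 < B (sv i) δ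
    · refine dec_peel hl hi ?_ hk.le
      have h3 : B δ (sv i) = δ i := src hi h1 hs hδ
      have h4 : B (sv i) δ ≤ δ i := by
        rw [B_right, Finset.sum_eq_add_sum_sdiff_singleton_of_mem (Finset.mem_univ i), h1, mul_one]
        have : ∑ k ∈ Finset.univ \ {i}, δ k * B (sv i) (sv k) ≤ 0 := by
          refine Finset.sum_nonpos fun k hk => ?_
          by_cases hkS : k ∈ S
          · refine mul_nonpos_of_nonneg_of_nonpos (hδ0 k) (hl.off i hi k hkS ?_)
            rintro rfl; simp at hk
          · simp [hδ k hkS]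
        linarith
      have hq' : B (δ - B (sv i) δ • sv i) (δ - B (sv i) δ • sv i) = N - B (sv i) δ * δ i := by
        simp only [map_sub, map_smul, LinearMap.sub_apply, LinearMap.smul_apply, h1, h3, hq,
          smul_eq_mul]
        ring
      have hS' : Sup S (δ - B (sv i) δ • sv i) := fun j hj => by
        simp [hδ j hj, Sup.sv hi j hj]
      have hnn : 0 ≤ B (δ - B (sv i) δ • sv i) (δ - B (sv i) δ • sv i) := by
        by_cases h0 : δ - B (sv i) δ • sv i = 0
        · rw [h0]; simp
        · exact (hl.pd _ hS' h0).le
      have hpos : 0 < B (sv i) δ * δ i := mul_pos hk (by linarith)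
      refine start (B (δ - B (sv i) δ • sv i) (δ - B (sv i) δ • sv i)).toNat ?_ B _ _ hl hS' ?_ ?_
      · omega
      · intro j
        by_cases hj : j = i
        · subst hj; simp; linarith
        · simp [hj]; exact hδ0 j
      · rw [Int.toNat_of_nonneg hnn]
    · rw [not_lt] at hk
      refine dec_refl hl hi hs hδ hδ0 ?_
      have hl' := hl.reflect hi hs
      rw [List.map_append, List.append_assoc] at hl' ⊢
      refine ih (Bst B i) (t.map (refl B i)) _ _ hl' (refl_sup B hi hδ) ?_ ?_ ?_ ?_
      · intro j
        by_cases hj : j = i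
        · subst hj
          rw [refl_i hi h1 hs hδ]
          simp only [Pi.zero_apply]; linarith
        · rw [refl_off B hj]; exact hδ0 j
      · rw [Bst_apply, refl_refl h1, hq]
      · simpa using hlen
      · obtain ⟨c, a', ha', rfl⟩ := cone_cons ha
        refine ⟨refl B i a', cone_map _ ha' fun y hy => List.mem_map.2 ⟨y, hy, rfl⟩,
          refl B i b + c • sv i, add_mem (cone_map _ hb fun y hy => ?_) ?_, ?_⟩
        · exact List.mem_append.2 (Or.inl (List.mem_map.2 ⟨y, hy, rfl⟩))
        · exact nsmul_mem (AddSubmonoid.subset_closure (by simp)) _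
        · rw [hab, map_sub, map_add, map_nsmul, refl_self h1, smul_neg]
          abel

theorem gd {S : Finset I} {B : BF I} {l : List (I → ℤ)} (h : RD S B l) {δ : I → ℤ}
    (hδ : Sup S δ) (hδ0 : 0 ≤ δ) : Dec B l δ := by
  have hnn : 0 ≤ B δ δ := by
    by_cases h0 : δ = 0
    · rw [h0]; simp
    · exact (h.pd _ hδ h0).le
  have := gd_main S (B δ δ).toNat _ B l [] δ (by simpa using h) hδ hδ0
    (by rw [Int.toNat_of_nonneg hnn]) rfl ?_
  · simpa using this
  · refine ⟨δ, ?_, 0, zero_mem _, by simp⟩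
    rw [vec_sum δ]
    refine sum_mem fun k _ => ?_
    by_cases hk : k ∈ S
    · have h3 : δ k • sv k = (δ k).toNat • sv k := by
        rw [← natCast_zsmul, Int.toNat_of_nonneg (hδ0 k)]
      rw [h3]
      refine nsmul_mem (AddSubmonoid.subset_closure ?_) _
      exact (h.mem _).2 ⟨Sup.sv hk, Pi.single_nonneg.2 (by norm_num), h.diag k hk⟩
    · rw [hδ k hk, zero_smul]; exact zero_mem _

end
end CoHA

namespace CoHA

section
variable {n ℓ r : ℕ}

noncomputable def eQ (Q : FinQuiver n) (i j : Fin n) : ℤ :=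
  (∑ a : Q.Arr, if Q.tl a = i ∧ Q.hd a = j then 1 else 0) - if i = j then 1 else 0

theorem chi_eQ (Q : FinQuiver n) (F G : Fin n → ℤ) :
    chi (eQ Q) F G = ∑ i, F i * G i - ∑ a : Q.Arr, F (Q.tl a) * G (Q.hd a) := by
  have h1 : ∑ a : Q.Arr, F (Q.tl a) * G (Q.hd a) =
      ∑ i, F i * ∑ j, G j * ∑ a : Q.Arr, if Q.tl a = i ∧ Q.hd a = j then 1 else 0 := by
    have : ∀ a : Q.Arr, F (Q.tl a) * G (Q.hd a) =
        ∑ i, ∑ j, F i * (G j * if Q.tl a = i ∧ Q.hd a = j then 1 else 0) := by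
      intro a
      rw [Finset.sum_eq_single (Q.tl a), Finset.sum_eq_single (Q.hd a)]
      · simp
      · intro j _ hj; simp [hj.symm]
      · simp
      · intro i _ hi
        apply Finset.sum_eq_zero
        intro j _; simp [hi.symm]
      · simp
    rw [Finset.sum_congr rfl fun a _ => this a, Finset.sum_comm]
    refine Finset.sum_congr rfl fun i _ => ?_
    rw [Finset.sum_comm, Finset.mul_sum]
    refine Finset.sum_congr rfl fun j _ => ?_
    rw [Finset.mul_sum, Finset.mul_sum]
  rw [h1]
  unfold chi eQ
  simp only [mul_sub, Finset.sum_sub_distrib]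
  simp

theorem euler_eq (Q : FinQuiver n) (α β : Fin n → ℕ) : Q.euler α β = chi (eQ Q) (zc α) (zc β) := by
  rw [chi_eQ]; rfl

theorem eQ_diag (Q : FinQuiver n) (hQ : Q.Acyclic) (i : Fin n) : eQ Q i i = -1 := by
  unfold eQ
  rw [Finset.sum_eq_zero]
  · simp
  · intro a _
    have := hQ 0 (fun _ => a) (by intro m; exact m.elim0)
    rw [if_neg]
    rintro ⟨h1, h2⟩
    exact this (h2.trans h1.symm)

theorem eQ_off (Q : FinQuiver n) (i j : Fin n) (h : i ≠ j) : 0 ≤ eQ Q i j := by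
  unfold eQ
  rw [if_neg h, sub_zero]
  exact Finset.sum_nonneg fun a _ => by split_ifs <;> norm_num

theorem eulerZ_eq {Q : FinQuiver n} {Q' : Subquiver Q} (hf : Q'.Full) {F G : Fin n → ℤ}
    (hF : Sup Q'.verts F) (hG : Sup Q'.verts G) : chi (eQ Q) F G = Q'.eulerZ F G := by
  rw [chi_eQ, Subquiver.eulerZ]
  congr 1
  · symm
    apply Finset.sum_subset (Finset.subset_univ _)
    intro i _ hi
    rw [hF i hi, zero_mul]
  · symm
    apply Finset.sum_subset (Finset.subset_univ _)
    intro a _ ha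
    by_cases h1 : Q.hd a ∈ Q'.verts
    · rw [hF (Q.tl a) fun h2 => ha (hf a h1 h2), zero_mul]
    · rw [hG _ h1, mul_zero]

noncomputable def BQ (Q : FinQuiver n) : BF (Fin n) :=
  LinearMap.mk₂ ℤ (chi (eQ Q)) (chi_add_left _) (fun c x y => by rw [chi_smul_left, smul_eq_mul])
    (chi_add_right _) (fun c x y => by rw [chi_smul_right, smul_eq_mul])

theorem BQ_apply (Q : FinQuiver n) (F G : Fin n → ℤ) : BQ Q F G = chi (eQ Q) F G := rfl

theorem zc_inj {I : Type} {f g : I → ℕ} (h : zc f = zc g) : f = g := by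
  funext i
  have := congrFun h i
  simpa [zc] using this

theorem zc_nonneg {I : Type} (f : I → ℕ) : 0 ≤ zc f := fun i => by simp [zc]

theorem zc_toNat {I : Type} {x : I → ℤ} (h : 0 ≤ x) : zc (fun i => (x i).toNat) = x := by
  funext i
  exact Int.toNat_of_nonneg (h i)

theorem filter_sum {M : Type} {ι : Type} [AddCommMonoid M] (p : ι → Bool) (f : ι → M) :
    ∀ l : List ι, ((l.filter p).map f).sum = (l.map fun u => if p u then f u else 0).sum
  | [] => by simp
  | a :: l => by
    have := filter_sum p f l
    by_cases h : p a <;> simp [List.filter_cons, h, this]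

theorem mk_good {Q : FinQuiver n} (hQ : Q.Acyclic)
    {P : SubqPartition Q ℓ} (hDyn : P.Dynkin)
    {β : Fin r → Fin n → ℕ} {blk : Fin r → Fin ℓ} (hR : IsReinekeOrder P β blk) :
    Good (eQ Q) β := by
  obtain ⟨hmono, hroot, hinj, hall, hlam⟩ := hR
  have hsup : ∀ u, Sup (P.part (blk u)).verts (zc (β u)) := fun u i hi => by
    simp [zc, (hroot u).1 i hi]
  have hr1 : ∀ u, chi (eQ Q) (zc (β u)) (zc (β u)) = 1 := fun u => by
    rw [eulerZ_eq (hDyn (blk u)).2.1 (hsup u) (hsup u)]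
    exact (hroot u).2.2
  have hne0 : ∀ u, zc (β u) ≠ 0 := fun u h => (hroot u).2.1 (zc_inj h)
  have hpd : ∀ j (x : Fin n → ℤ), Sup (P.part j).verts x → x ≠ 0 → 0 < chi (eQ Q) x x := by
    intro j x hx h0
    rw [eulerZ_eq (hDyn j).2.1 hx hx]
    exact (hDyn j).2.2 x hx h0
  have hsame : ∀ u v, u < v → blk u = blk v → chi (eQ Q) (zc (β u)) (zc (β v)) ≤ 0 ∧
      0 ≤ chi (eQ Q) (zc (β v)) (zc (β u)) := by
    intro u v huv hb
    have hx := hsup u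
    have hy := hsup v
    rw [← hb] at hy
    have hl := hlam u v huv hb
    rw [FinQuiver.lam, euler_eq, euler_eq] at hl
    have h1 := hpd (blk u) (zc (β u) - zc (β v)) (fun i hi => by simp [hx i hi, hy i hi])
      (sub_ne_zero.2 fun h => huv.ne (hinj (zc_inj h)))
    have h2 := hpd (blk u) (zc (β u) + zc (β v)) (fun i hi => by simp [hx i hi, hy i hi]) (by
      intro h
      apply hne0 u
      apply le_antisymm _ (zc_nonneg _)
      have : zc (β u) = - zc (β v) := eq_neg_of_add_eq_zero_left h
      rw [this]
      exact neg_nonpos.2 (zc_nonneg _))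
    simp only [chi_sub_left, chi_sub_right, chi_add_left, chi_add_right, hr1] at h1 h2
    omega
  have hRD : ∀ j, RD (P.part j).verts (BQ Q)
      (((List.finRange r).filter (fun u => blk u = j)).map (fun u => zc (β u))) := by
    intro j
    have hd : ∀ i, chi (eQ Q) (sv i) (sv i) = 1 := by
      intro i
      unfold chi
      rw [Finset.sum_eq_single i, Finset.sum_eq_single i] <;> simp +contextual [eQ_diag Q hQ]
    refine ⟨fun i _ => hd i, ?_, hpd j, ?_, ?_⟩
    · intro i _ k _ hik
      rw [BQ_apply]
      unfold chi
      have := eQ_off Q i k hik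
      rw [Finset.sum_eq_single i, Finset.sum_eq_single k] <;> simp +contextual [this]
    · intro x
      rw [List.mem_map]
      constructor
      · rintro ⟨u, hu, rfl⟩
        have hu : blk u = j := by simpa using hu
        subst hu
        exact ⟨hsup u, zc_nonneg _, hr1 u⟩
      · rintro ⟨h1, h2, h3⟩
        set b : Fin n → ℕ := fun i => (x i).toNat
        have hb : zc b = x := zc_toNat h2
        obtain ⟨u, hu⟩ := hall j b ⟨fun i hi => by simp [b, h1 i hi], fun h => by
          have hx0 : x = 0 := by rw [← hb, h]; rfl
          rw [hx0] at h3
          simp at h3, by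
            rw [BQ_apply, eulerZ_eq (hDyn j).2.1 h1 h1, ← hb] at h3
            exact h3⟩
        refine ⟨u, ?_, by rw [hu, hb]⟩
        simp only [List.mem_filter, List.mem_finRange, true_and, decide_eq_true_eq]
        obtain ⟨i, hi⟩ : ∃ i, β u i ≠ 0 := Function.ne_iff.1 (hroot u).2.1
        have hi1 : i ∈ (P.part (blk u)).verts := by
          by_contra h; exact hi ((hroot u).1 i h)
        have hi2 : i ∈ (P.part j).verts := by
          by_contra h
          apply hi
          rw [hu]
          simp [b, h1 i h]
        exact (P.cover i).unique hi1 hi2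
    · rw [List.pairwise_map, List.pairwise_filter]
      refine (List.pairwise_lt_finRange r).imp ?_
      intro u v huv hu hv
      have hu : blk u = j := by simpa using hu
      have hv : blk v = j := by simpa using hv
      exact ⟨fun h => huv.ne (hinj (zc_inj h)), hsame u v huv (hu.trans hv.symm)⟩
  refine ⟨fun i => by rw [eQ_diag Q hQ], fun i j h => eQ_off Q i j h, ?_, hr1, ?_, ?_⟩
  · intro u v huv
    by_cases hb : blk u = blk v
    · exact (hsame u v huv hb).1
    · rw [chi_eQ, Finset.sum_eq_zero]
      · have : 0 ≤ ∑ a : Q.Arr, zc (β u) (Q.tl a) * zc (β v) (Q.hd a) :=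
          Finset.sum_nonneg fun a _ => mul_nonneg (zc_nonneg _ _) (zc_nonneg _ _)
        linarith
      · intro i _
        by_cases h1 : i ∈ (P.part (blk u)).verts
        · rw [hsup v i fun h2 => hb ((P.cover i).unique h1 h2), mul_zero]
        · rw [hsup u i h1, zero_mul]
  · intro t G h0 hG hne
    refine hpd (blk t) G (fun i hi => ?_) hne
    apply le_antisymm _ (h0 i)
    rw [Pi.zero_apply, ← hsup t i hi]
    exact hG i
  · intro t d _ F hF _
    have hFs : Sup (P.part (blk d)).verts (zc F) := by
      intro i hi
      have := hF i
      rw [(hroot d).1 i hi] at this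
      simpa [zc] using this
    obtain ⟨m, hm1, hm2⟩ := gd (hRD (blk d)) hFs (zc_nonneg F)
    refine ⟨fun u => if blk u = blk d then m (zc (β u)) else 0, ?_, ?_⟩
    · apply zc_inj
      rw [hm1, lsum, List.map_map, filter_sum, ← Fin.sum_univ_def]
      funext i
      simp only [zc, Finset.sum_apply, Pi.smul_apply, smul_eq_mul]
      push_cast
      refine Finset.sum_congr rfl fun u _ => ?_
      by_cases hb : blk u = blk d <;> simp [hb, zc]
    · intro u v huv hu hv
      rw [List.pairwise_map, List.pairwise_filter] at hm2
      have := List.pairwise_iff_getElem.1 hm2 u v (by simp) (by simp) huv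
      simp only [List.getElem_finRange, Fin.cast_mk, Fin.eta] at this
      simp only [ne_eq, ite_eq_right_iff, Classical.not_imp] at hu hv
      exact this (by simpa using hu.1) (by simpa using hv.1) hu.2 hv.2

end
end CoHA

namespace CoHA

section
variable {n : ℕ}

abbrev Lab (γ : Fin n → ℕ) : Type := Σ i : Fin n, Fin (γ i)

def emb (γ : Fin n → ℕ) (p : Lab γ) : Fin n × ℕ := (p.1, p.2)

theorem emb_inj (γ : Fin n → ℕ) : Function.Injective (emb γ) := by
  rintro ⟨i, a⟩ ⟨j, b⟩ h
  simp only [emb, Prod.mk.injEq] at h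
  obtain ⟨rfl, h⟩ := h
  congr 1
  exact Fin.ext h

theorem emb_lt (γ : Fin n → ℕ) (p : Lab γ) : (emb γ p).2 < γ (emb γ p).1 := p.2.2

theorem emb_surj {γ : Fin n → ℕ} {p : Fin n × ℕ} (h : p.2 < γ p.1) : ∃ q, emb γ q = p :=
  ⟨⟨p.1, ⟨p.2, h⟩⟩, rfl⟩

noncomputable def res (γ : Fin n → ℕ) : PolyQ n →ₐ[ℚ] MvPolynomial (Lab γ) ℚ :=
  aeval fun p => if h : p.2 < γ p.1 then X (⟨p.1, ⟨p.2, h⟩⟩ : Lab γ) else 0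

theorem res_rename (γ : Fin n → ℕ) (g : MvPolynomial (Lab γ) ℚ) : res γ (rename (emb γ) g) = g := by
  unfold res
  rw [aeval_rename]
  conv_rhs => rw [← aeval_X_left_apply g]
  congr 2
  funext p
  have := p.2.2
  simp [emb, this]

theorem rename_res {γ : Fin n → ℕ} {f : PolyQ n} (hf : ∀ p ∈ f.vars, p.2 < γ p.1) :
    rename (emb γ) (res γ f) = f := by
  obtain ⟨g, rfl⟩ := exists_rename_eq_of_vars_subset_range f (emb γ) (emb_inj γ)
    (fun p hp => emb_surj (hf p hp))
  rw [res_rename]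

theorem eval_res {γ : Fin n → ℕ} {f : PolyQ n} (hf : ∀ p ∈ f.vars, p.2 < γ p.1)
    (z : Fin n × ℕ → ℚ) : eval (z ∘ emb γ) (res γ f) = eval z f := by
  rw [← eval_rename, rename_res hf]

theorem exists_perm {A X : Type} [Finite A] {a b : A → X} (ha : Function.Injective a)
    (hab : ∀ p, ∃ q, b q = a p) : ∃ ρ : Equiv.Perm A, ∀ p, b (ρ p) = a p := by
  choose f hf using hab
  have hinj : Function.Injective f := fun p q h => ha (by rw [← hf p, ← hf q, h])
  exact ⟨Equiv.ofBijective f (Finite.injective_iff_bijective.1 hinj), hf⟩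

theorem res_symm {γ : Fin n → ℕ} {f : PolyQ n} (hf : f ∈ Hspace γ) {σ : Equiv.Perm (Lab γ)}
    (hσ : σ ∈ Wg (fun p : Lab γ => p.1)) : rename σ (res γ f) = res γ f := by
  obtain ⟨hv, hs⟩ := hf
  rw [mem_Wg] at hσ
  set φ : Lab γ ≃ {p : Fin n × ℕ // p.2 < γ p.1} :=
    Equiv.ofBijective (fun p => ⟨emb γ p, emb_lt γ p⟩)
      ⟨fun p q h => emb_inj γ (congrArg Subtype.val h), fun p => by
        obtain ⟨q, hq⟩ := emb_surj p.2
        exact ⟨q, Subtype.ext hq⟩⟩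
  set T : Equiv.Perm (Fin n × ℕ) := σ.extendDomain φ
  have hT1 : ∀ q, T (emb γ q) = emb γ (σ q) := fun q => Equiv.Perm.extendDomain_apply_image σ φ q
  have hT2 : ∀ p : Fin n × ℕ, ¬ p.2 < γ p.1 → T p = p := fun p hp =>
    Equiv.Perm.extendDomain_apply_not_subtype σ φ hp
  have hT3 : ∀ p, (T p).1 = p.1 := by
    intro p
    by_cases hp : p.2 < γ p.1
    · obtain ⟨q, rfl⟩ := emb_surj hp
      rw [hT1]; exact hσ q
    · rw [hT2 p hp]
  have hT4 : ∀ p, (T.symm p).1 = p.1 := fun p => by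
    have := hT3 (T.symm p)
    rw [Equiv.apply_symm_apply] at this
    exact this.symm
  let τ : Fin n → Equiv.Perm ℕ := fun i =>
    { toFun := fun j => (T (i, j)).2
      invFun := fun j => (T.symm (i, j)).2
      left_inv := fun j => by
        have : ((i, (T (i, j)).2) : Fin n × ℕ) = T (i, j) := Prod.ext (hT3 (i, j)).symm rfl
        simp only [this, Equiv.symm_apply_apply]
      right_inv := fun j => by
        have : ((i, (T.symm (i, j)).2) : Fin n × ℕ) = T.symm (i, j) :=
          Prod.ext (hT4 (i, j)).symm rfl
        simp only [this, Equiv.apply_symm_apply] }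
  have key : ∀ s : Finset (Fin n), rename (fun p : Fin n × ℕ => if p.1 ∈ s then T p else p) f = f := by
    intro s
    induction s using Finset.induction_on with
    | empty =>
      simp only [Finset.notMem_empty, if_false]
      exact rename_id_apply f
    | insert i s hi ih =>
      have h1 := hs i (τ i) (fun j hj => by
        by_contra hlt
        apply hj
        show (T (i, j)).2 = j
        rw [hT2 _ hlt])
      conv_rhs => rw [← h1, ← ih, rename_rename]
      congr 2
      funext p
      simp only [Function.comp, vertexPerm, Finset.mem_insert]
      by_cases hpi : p.1 = i
      · have : p.1 ∉ s := by rw [hpi]; exact hi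
        rw [if_pos (Or.inl hpi), if_neg this, if_pos hpi]
        refine Prod.ext ?_ ?_
        · rw [hT3, hpi]
        · show (T p).2 = (T (i, p.2)).2
          rw [← hpi]
      · by_cases hps : p.1 ∈ s
        · rw [if_pos (Or.inr hps), if_pos hps, if_neg]
          rw [hT3]; exact hpi
        · rw [if_neg (by tauto), if_neg hps, if_neg hpi]
  have h := key Finset.univ
  simp only [Finset.mem_univ, if_true] at h
  apply rename_injective _ (emb_inj γ)
  rw [rename_res hv, rename_rename]
  conv_rhs => rw [← h]
  conv_rhs => rw [← rename_res hv, rename_rename]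
  congr 2
  funext q
  exact (hT1 q).symm

theorem res_symm_eval {γ : Fin n → ℕ} {f : PolyQ n} (hf : f ∈ Hspace γ) {X : Type}
    {πX : X → Fin n} {a b : Lab γ → X} (ha : Function.Injective a)
    (haπ : ∀ p, πX (a p) = p.1) (hbπ : ∀ p, πX (b p) = p.1)
    (hab : ∀ p, ∃ q, b q = a p) (z : X → ℚ) :
    eval (z ∘ a) (res γ f) = eval (z ∘ b) (res γ f) := by
  obtain ⟨ρ, hρ⟩ := exists_perm ha hab
  have h1 : z ∘ a = (z ∘ b) ∘ ρ := by funext p; simp [hρ]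
  rw [h1, ← eval_rename, res_symm hf]
  rw [mem_Wg]
  intro p
  rw [← hbπ, hρ, haπ]

/-- membership in `Hspace` from invariance on labels -/
theorem mem_Hspace_rename {γ : Fin n → ℕ} {g : MvPolynomial (Lab γ) ℚ}
    (hg : ∀ σ ∈ Wg (fun p : Lab γ => p.1), rename σ g = g) : rename (emb γ) g ∈ Hspace γ := by
  refine ⟨?_, ?_⟩
  · intro p hp
    obtain ⟨q, _, rfl⟩ := Finset.mem_image.1 (vars_rename _ _ hp)
    exact emb_lt γ q
  · intro i σ hσ
    have hlt : ∀ j, j < γ i → σ j < γ i := by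
      intro j hj
      by_contra hn
      have : σ (σ j) = σ j := by
        by_contra h
        exact hn (hσ _ h)
      rw [σ.injective this] at hn
      exact hn hj
    have hp : ∀ q : Lab γ, ∃ q', emb γ q' = vertexPerm i σ (emb γ q) := by
      intro q
      apply emb_surj
      unfold vertexPerm
      split_ifs with h
      · apply hlt; rw [← h]; exact q.2.2
      · exact q.2.2
    have hvi : Function.Injective (vertexPerm (n := n) i σ) := by
      rintro ⟨a, b⟩ ⟨c, d⟩ h
      unfold vertexPerm at h
      simp only at h
      split_ifs at h with h1 h2 h2
      · simp only [Prod.mk.injEq, true_and, EmbeddingLike.apply_eq_iff_eq] at h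
        rw [h1, h2, h]
      · simp only [Prod.mk.injEq] at h; exact absurd h.1.symm h2
      · simp only [Prod.mk.injEq] at h; exact absurd h.1 h1
      · exact h
    obtain ⟨ρ, hρ⟩ := exists_perm (a := vertexPerm i σ ∘ emb γ) (b := emb γ)
      (hvi.comp (emb_inj γ)) hp
    rw [rename_rename]
    have h1 : vertexPerm i σ ∘ emb γ = emb γ ∘ ρ := funext fun p => (hρ p).symm
    rw [h1, ← rename_rename, hg]
    rw [mem_Wg]
    intro p
    have := congrArg Prod.fst (hρ p)
    have h2 : (vertexPerm i σ (emb γ p)).1 = p.1 := by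
      unfold vertexPerm
      split_ifs with h
      · exact h.symm
      · rfl
    exact this.trans h2

end
end CoHA

namespace CoHA

section
variable {n : ℕ}

noncomputable def sub (s : Finset ℕ) (k : ℕ) : ℕ := (s.sort (· ≤ ·)).getD k 0

theorem sub_eq {s : Finset ℕ} {c : ℕ} (h : s.card = c) (k : Fin c) : sub s k = s.orderEmbOfFin h k := by
  rw [Finset.orderEmbOfFin_apply]
  unfold sub
  rw [List.getD_eq_getElem _ _ (by rw [Finset.length_sort, h]; exact k.2)]
  rfl

theorem sub_mem {s : Finset ℕ} {c : ℕ} (h : s.card = c) (k : Fin c) : sub s k ∈ s := by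
  rw [sub_eq h]; exact Finset.orderEmbOfFin_mem s h k

theorem sub_inj {s : Finset ℕ} {c : ℕ} (h : s.card = c) {k l : Fin c} (hkl : sub s k = sub s l) : k = l := by
  rw [sub_eq h, sub_eq h] at hkl
  exact (s.orderEmbOfFin h).injective hkl

theorem prod_sub {s : Finset ℕ} {c : ℕ} (h : s.card = c) (F : ℕ → ℚ) :
    ∏ j ∈ s, F j = ∏ k : Fin c, F (sub s k) := by
  rw [← Finset.prod_coe_sort]
  refine (Fintype.prod_equiv (s.orderIsoOfFin h).toEquiv _ _ fun k => ?_).symm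
  rw [sub_eq h]; rfl

theorem prod_sig {γ : Fin n → ℕ} (i : Fin n) (F : Lab γ → ℚ) :
    ∏ p : Lab γ, (if i = p.1 then F p else 1) = ∏ k : Fin (γ i), F ⟨i, k⟩ := by
  rw [Fintype.prod_sigma, Finset.prod_eq_single i]
  · simp
  · intro j _ hj
    simp [Ne.symm hj]
  · simp

abbrev MM (γ₁ γ₂ : Fin n → ℕ) : Type := Lab γ₁ ⊕ Lab γ₂

def pM (γ₁ γ₂ : Fin n → ℕ) : MM γ₁ γ₂ → Fin n := Sum.elim (fun p => p.1) (fun p => p.1)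
def wM (γ₁ γ₂ : Fin n → ℕ) : MM γ₁ γ₂ → ℕ := Sum.elim (fun _ => 0) (fun _ => 1)

theorem Ker_two {A B I : Type} [Fintype A] [Fintype B] (e : I → I → ℤ) (π : A ⊕ B → I) (y : A ⊕ B → ℚ) :
    Ker e π (Sum.elim (fun _ => 0) (fun _ => 1)) y =
      ∏ p : A, ∏ q : B, (y (Sum.inr q) - y (Sum.inl p)) ^ e (π (Sum.inl p)) (π (Sum.inr q)) := by
  unfold Ker
  rw [Fintype.prod_prod_type]
  simp [Fintype.prod_sum_type]

theorem shuf_card {γ₁ γ₂ : Fin n → ℕ} {S} (hS : S ∈ shuffles γ₁ γ₂) (i) : (S i).card = γ₁ i := by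
  unfold shuffles at hS
  rw [Fintype.mem_piFinset] at hS
  exact (Finset.mem_filter.1 (hS i)).2

theorem shuf_sub {γ₁ γ₂ : Fin n → ℕ} {S} (hS : S ∈ shuffles γ₁ γ₂) (i) :
    S i ⊆ Finset.range (γ₁ i + γ₂ i) := by
  unfold shuffles at hS
  rw [Fintype.mem_piFinset] at hS
  exact Finset.mem_powerset.1 (Finset.mem_filter.1 (hS i)).1

theorem shuf_mem {γ₁ γ₂ : Fin n → ℕ} {S : Fin n → Finset ℕ} (h : ∀ i, (S i).card = γ₁ i)
    (h' : ∀ i, S i ⊆ Finset.range (γ₁ i + γ₂ i)) : S ∈ shuffles γ₁ γ₂ := by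
  unfold shuffles
  rw [Fintype.mem_piFinset]
  exact fun i => Finset.mem_filter.2 ⟨Finset.mem_powerset.2 (h' i), h i⟩

theorem shuf_compl_card {γ₁ γ₂ : Fin n → ℕ} {S} (hS : S ∈ shuffles γ₁ γ₂) (i) :
    (shuffleCompl γ₁ γ₂ S i).card = γ₂ i := by
  unfold shuffleCompl
  rw [Finset.card_sdiff_of_subset (shuf_sub hS i), shuf_card hS, Finset.card_range]
  omega

noncomputable def aS (γ₁ γ₂ : Fin n → ℕ) (S : Fin n → Finset ℕ) : MM γ₁ γ₂ → Fin n × ℕ :=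
  Sum.elim (fun p => (p.1, sub (S p.1) p.2)) (fun p => (p.1, sub (shuffleCompl γ₁ γ₂ S p.1) p.2))

noncomputable def GG (Q : FinQuiver n) (γ₁ γ₂ : Fin n → ℕ) (f₁ f₂ : PolyQ n) (y : MM γ₁ γ₂ → ℚ) : ℚ :=
  eval (y ∘ Sum.inl) (res γ₁ f₁) * eval (y ∘ Sum.inr) (res γ₂ f₂) *
    Ker (eQ Q) (pM γ₁ γ₂) (wM γ₁ γ₂) y

theorem aS_inj {γ₁ γ₂ : Fin n → ℕ} {S} (hS : S ∈ shuffles γ₁ γ₂) : Function.Injective (aS γ₁ γ₂ S) := by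
  have key : ∀ (i : Fin n) (a : Fin (γ₁ i)) (b : Fin (γ₂ i)),
      sub (S i) a ≠ sub (shuffleCompl γ₁ γ₂ S i) b := by
    intro i a b h
    have h1 := sub_mem (shuf_card hS i) a
    have h2 := sub_mem (shuf_compl_card hS i) b
    rw [← h] at h2
    exact (Finset.mem_sdiff.1 h2).2 h1
  rintro (⟨i, a⟩ | ⟨i, a⟩) (⟨j, b⟩ | ⟨j, b⟩) h <;>
    simp only [aS, Sum.elim_inl, Sum.elim_inr, Prod.mk.injEq] at h <;> obtain ⟨rfl, h⟩ := h
  · rw [sub_inj (shuf_card hS i) h]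
  · exact absurd h (key i a b)
  · exact absurd h.symm (key i b a)
  · rw [sub_inj (shuf_compl_card hS i) h]

theorem prod_sig2 {γ₁ γ₂ : Fin n → ℕ} (i j : Fin n) (F : Lab γ₁ → Lab γ₂ → ℚ) :
    ∏ p : Lab γ₁, ∏ q : Lab γ₂, (if i = p.1 ∧ j = q.1 then F p q else 1) =
      ∏ k : Fin (γ₁ i), ∏ l : Fin (γ₂ j), F ⟨i, k⟩ ⟨j, l⟩ := by
  rw [← prod_sig i (fun p => ∏ l : Fin (γ₂ j), F p ⟨j, l⟩)]
  refine Finset.prod_congr rfl fun p _ => ?_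
  by_cases h : i = p.1
  · rw [if_pos h, ← prod_sig j (fun q => F p q)]
    refine Finset.prod_congr rfl fun q _ => ?_
    simp only [h, true_and]
  · simp [h]

theorem blk_eval {γ₁ γ₂ : Fin n → ℕ} {S} (hS : S ∈ shuffles γ₁ γ₂) (z : Fin n × ℕ → ℚ) (i j : Fin n) :
    eval z (∏ j' ∈ shuffleCompl γ₁ γ₂ S j, ∏ k ∈ S i, (X (j, j') - X (i, k)) : PolyQ n) =
     ∏ p : Lab γ₁, ∏ q : Lab γ₂,
      if i = p.1 ∧ j = q.1 then z (aS γ₁ γ₂ S (Sum.inr q)) - z (aS γ₁ γ₂ S (Sum.inl p)) else 1 := by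
  rw [map_prod, prod_sub (shuf_compl_card hS _)]
  simp only [map_prod, map_sub, eval_X]
  rw [Finset.prod_comm, prod_sub (shuf_card hS _), prod_sig2]
  rfl

theorem Ker_eval (Q : FinQuiver n) {γ₁ γ₂ : Fin n → ℕ} {S} (hS : S ∈ shuffles γ₁ γ₂) (z : Fin n × ℕ → ℚ)
    (hz : Function.Injective (z ∘ aS γ₁ γ₂ S)) :
    eval z (interactionNum Q γ₁ γ₂ S) / eval z (interactionDen γ₁ γ₂ S) =
      Ker (eQ Q) (pM γ₁ γ₂) (wM γ₁ γ₂) (z ∘ aS γ₁ γ₂ S) ∧ eval z (interactionDen γ₁ γ₂ S) ≠ 0 := by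
  have hne : ∀ p q, z (aS γ₁ γ₂ S (Sum.inr q)) - z (aS γ₁ γ₂ S (Sum.inl p)) ≠ 0 := by
    intro p q h
    have := hz (sub_eq_zero.1 h)
    simp at this
  have hN : eval z (interactionNum Q γ₁ γ₂ S) = ∏ p : Lab γ₁, ∏ q : Lab γ₂,
      (z (aS γ₁ γ₂ S (Sum.inr q)) - z (aS γ₁ γ₂ S (Sum.inl p))) ^
        (∑ a : Q.Arr, if Q.tl a = p.1 ∧ Q.hd a = q.1 then (1 : ℤ) else 0) := by
    unfold interactionNum arrowFactor
    rw [map_prod]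
    simp only [blk_eval hS]
    rw [Finset.prod_comm]
    refine Finset.prod_congr rfl fun p _ => ?_
    rw [Finset.prod_comm]
    refine Finset.prod_congr rfl fun q _ => ?_
    rw [← prod_zpow_sum _ _ (hne p q)]
    refine Finset.prod_congr rfl fun a _ => ?_
    split_ifs <;> simp
  have hD : eval z (interactionDen γ₁ γ₂ S) = ∏ p : Lab γ₁, ∏ q : Lab γ₂,
      (z (aS γ₁ γ₂ S (Sum.inr q)) - z (aS γ₁ γ₂ S (Sum.inl p))) ^ (if p.1 = q.1 then (1 : ℤ) else 0) := by
    unfold interactionDen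
    rw [map_prod]
    simp only [blk_eval hS]
    rw [Finset.prod_comm]
    refine Finset.prod_congr rfl fun p _ => ?_
    rw [Finset.prod_comm]
    refine Finset.prod_congr rfl fun q _ => ?_
    rw [Finset.prod_eq_single p.1]
    · split_ifs with h1 h2 h2 <;> simp_all
    · intro i _ hi
      rw [if_neg (fun h => hi h.1)]
    · simp
  refine ⟨?_, ?_⟩
  · unfold wM
    rw [Ker_two, hN, hD, ← Finset.prod_div_distrib]
    refine Finset.prod_congr rfl fun p _ => ?_
    rw [← Finset.prod_div_distrib]
    refine Finset.prod_congr rfl fun q _ => ?_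
    rw [← zpow_sub₀ (hne p q)]
    rfl
  · rw [hD]
    refine Finset.prod_ne_zero_iff.2 fun p _ => Finset.prod_ne_zero_iff.2 fun q _ => zpow_ne_zero _ (hne p q)

theorem eval_subst {γ : Fin n → ℕ} {f : PolyQ n} (hf : ∀ p ∈ f.vars, p.2 < γ p.1) (S : Fin n → Finset ℕ)
    (z : Fin n × ℕ → ℚ) : eval z (substAlong S f) =
      eval (z ∘ fun p : Lab γ => (p.1, sub (S p.1) p.2)) (res γ f) := by
  conv_lhs => rw [← rename_res hf]
  unfold substAlong
  rw [aeval_rename, ← coe_aeval_eq_eval, ← coe_aeval_eq_eval]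
  change ((aeval z).comp (aeval _)) (res γ f) = aeval _ (res γ f)
  congr 1
  apply MvPolynomial.algHom_ext
  intro p
  simp only [AlgHom.comp_apply, aeval_X, Function.comp]
  rfl

theorem term_eval (Q : FinQuiver n) {γ₁ γ₂ : Fin n → ℕ} {S} (hS : S ∈ shuffles γ₁ γ₂) {f₁ f₂ : PolyQ n}
    (h1 : f₁ ∈ Hspace γ₁) (h2 : f₂ ∈ Hspace γ₂) (z : Fin n × ℕ → ℚ)
    (hz : Function.Injective (z ∘ aS γ₁ γ₂ S)) :
    eval z (substAlong S f₁ * substAlong (shuffleCompl γ₁ γ₂ S) f₂ * interactionNum Q γ₁ γ₂ S) /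
      eval z (interactionDen γ₁ γ₂ S) = GG Q γ₁ γ₂ f₁ f₂ (z ∘ aS γ₁ γ₂ S) := by
  rw [map_mul, mul_div_assoc, (Ker_eval Q hS z hz).1, map_mul, eval_subst h1.1, eval_subst h2.1]
  rfl

def TT (γ₁ γ₂ : Fin n → ℕ) : Lab (γ₁ + γ₂) ≃ MM γ₁ γ₂ :=
  (Equiv.sigmaCongrRight fun i => finSumFinEquiv.symm).trans (Equiv.sigmaSumDistrib _ _)

theorem TT_fst (γ₁ γ₂ : Fin n → ℕ) (p) : pM γ₁ γ₂ (TT γ₁ γ₂ p) = p.1 := by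
  obtain ⟨i, k⟩ := p
  unfold TT pM
  simp only [Equiv.trans_apply, Equiv.sigmaCongrRight_apply, Sigma.map, id, Equiv.sigmaSumDistrib_apply]
  rcases finSumFinEquiv.symm k <;> rfl

theorem TT_fst' (γ₁ γ₂ : Fin n → ℕ) (p) : ((TT γ₁ γ₂).symm p).1 = pM γ₁ γ₂ p := by
  rw [← TT_fst, Equiv.apply_symm_apply]

noncomputable def T0 (γ₁ γ₂ : Fin n → ℕ) (p : MM γ₁ γ₂) : Fin n × ℕ := emb _ ((TT γ₁ γ₂).symm p)

theorem T0_inj (γ₁ γ₂ : Fin n → ℕ) : Function.Injective (T0 γ₁ γ₂) :=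
  (emb_inj _).comp (Equiv.injective _)

theorem T0_fst (γ₁ γ₂ : Fin n → ℕ) (p) : (T0 γ₁ γ₂ p).1 = pM γ₁ γ₂ p := TT_fst' _ _ p

theorem T0_lt (γ₁ γ₂ : Fin n → ℕ) (p) : (T0 γ₁ γ₂ p).2 < γ₁ (pM γ₁ γ₂ p) + γ₂ (pM γ₁ γ₂ p) := by
  rw [← T0_fst]; exact emb_lt _ _

theorem T0_surj (γ₁ γ₂ : Fin n → ℕ) {p : Fin n × ℕ} (h : p.2 < γ₁ p.1 + γ₂ p.1) :
    ∃ q, T0 γ₁ γ₂ q = p := by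
  obtain ⟨q, hq⟩ := emb_surj (γ := γ₁ + γ₂) h
  exact ⟨TT γ₁ γ₂ q, by rw [T0, Equiv.symm_apply_apply, hq]⟩

theorem aS_fst (γ₁ γ₂ : Fin n → ℕ) (S) (p) : (aS γ₁ γ₂ S p).1 = pM γ₁ γ₂ p := by
  rcases p with p | p <;> rfl

theorem exists_sig {γ₁ γ₂ : Fin n → ℕ} {S} (hS : S ∈ shuffles γ₁ γ₂) :
    ∃ σ ∈ Wg (pM γ₁ γ₂), T0 γ₁ γ₂ ∘ σ = aS γ₁ γ₂ S := by
  obtain ⟨σ, hσ⟩ := exists_perm (a := aS γ₁ γ₂ S) (b := T0 γ₁ γ₂) (aS_inj hS) (by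
    intro p
    apply T0_surj
    rw [aS_fst]
    rcases p with p | p
    · exact Finset.mem_range.1 (shuf_sub hS _ (sub_mem (shuf_card hS _) p.2))
    · exact Finset.mem_range.1 ((Finset.mem_sdiff.1 (sub_mem (shuf_compl_card hS _) p.2)).1))
  refine ⟨σ, mem_Wg.2 fun p => ?_, funext hσ⟩
  rw [← T0_fst, hσ, aS_fst]

/-- level preserving -/
noncomputable def Stab (γ₁ γ₂ : Fin n → ℕ) : Finset (Equiv.Perm (MM γ₁ γ₂)) :=
  (Wg (pM γ₁ γ₂)).filter fun τ => ∀ p, ∃ q, τ (Sum.inl p) = Sum.inl q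

theorem Stab_inr {γ₁ γ₂ : Fin n → ℕ} {τ} (h : τ ∈ Stab γ₁ γ₂) (p) : ∃ q, τ (Sum.inr p) = Sum.inr q := by
  have h1 := (Finset.mem_filter.1 h).2
  have := (Equiv.Perm.perm_mapsTo_inl_iff_mapsTo_inr τ).1 (by
    rintro _ ⟨p, rfl⟩
    obtain ⟨q, hq⟩ := h1 p
    exact ⟨q, hq.symm⟩)
  obtain ⟨q, hq⟩ := this ⟨p, rfl⟩
  exact ⟨q, hq.symm⟩

theorem GG_stab (Q : FinQuiver n) {γ₁ γ₂ : Fin n → ℕ} {f₁ f₂ : PolyQ n}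
    (h1 : f₁ ∈ Hspace γ₁) (h2 : f₂ ∈ Hspace γ₂) {τ} (h : τ ∈ Stab γ₁ γ₂) (y : MM γ₁ γ₂ → ℚ) :
    GG Q γ₁ γ₂ f₁ f₂ (y ∘ τ) = GG Q γ₁ γ₂ f₁ f₂ y := by
  have hW := (Finset.mem_filter.1 h).1
  have hl := (Finset.mem_filter.1 h).2
  have hr := Stab_inr h
  have hw : wM γ₁ γ₂ ∘ τ = wM γ₁ γ₂ := by
    funext p
    rcases p with p | p
    · obtain ⟨q, hq⟩ := hl p
      simp [hq, wM]
    · obtain ⟨q, hq⟩ := hr p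
      simp [hq, wM]
  unfold GG
  congr 1
  · congr 1
    · refine res_symm_eval h1 (πX := pM γ₁ γ₂) (a := τ ∘ Sum.inl) (b := Sum.inl)
        (τ.injective.comp Sum.inl_injective) ?_ (fun p => rfl) ?_ y
      · intro p; exact mem_Wg.1 hW _
      · intro p; obtain ⟨q, hq⟩ := hl p; exact ⟨q, hq.symm⟩
    · refine res_symm_eval h2 (πX := pM γ₁ γ₂) (a := τ ∘ Sum.inr) (b := Sum.inr)
        (τ.injective.comp Sum.inr_injective) ?_ (fun p => rfl) ?_ y
      · intro p; exact mem_Wg.1 hW _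
      · intro p; obtain ⟨q, hq⟩ := hr p; exact ⟨q, hq.symm⟩
  · conv_lhs => rw [← hw]
    exact Ker_perm _ _ hW

noncomputable def SS (γ₁ γ₂ : Fin n → ℕ) (σ : Equiv.Perm (MM γ₁ γ₂)) (i : Fin n) : Finset ℕ :=
  Finset.univ.image fun k : Fin (γ₁ i) => (T0 γ₁ γ₂ (σ (Sum.inl ⟨i, k⟩))).2

theorem SS_card {γ₁ γ₂ : Fin n → ℕ} {σ} (h : σ ∈ Wg (pM γ₁ γ₂)) (i) : (SS γ₁ γ₂ σ i).card = γ₁ i := by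
  unfold SS
  rw [Finset.card_image_of_injective, Finset.card_univ, Fintype.card_fin]
  intro k l hkl
  have : T0 γ₁ γ₂ (σ (Sum.inl ⟨i, k⟩)) = T0 γ₁ γ₂ (σ (Sum.inl ⟨i, l⟩)) := by
    refine Prod.ext ?_ hkl
    rw [T0_fst, T0_fst, mem_Wg.1 h, mem_Wg.1 h]; rfl
  have := σ.injective (T0_inj _ _ this)
  simpa using this

theorem SS_mem {γ₁ γ₂ : Fin n → ℕ} {σ} (h : σ ∈ Wg (pM γ₁ γ₂)) : SS γ₁ γ₂ σ ∈ shuffles γ₁ γ₂ := by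
  refine shuf_mem (SS_card h) fun i => ?_
  intro x hx
  obtain ⟨k, _, rfl⟩ := Finset.mem_image.1 hx
  have := T0_lt γ₁ γ₂ (σ (Sum.inl ⟨i, k⟩))
  rw [mem_Wg.1 h] at this
  exact Finset.mem_range.2 this

theorem SS_iff {γ₁ γ₂ : Fin n → ℕ} {σ} (h : σ ∈ Wg (pM γ₁ γ₂)) {S} (hS : S ∈ shuffles γ₁ γ₂) :
    SS γ₁ γ₂ σ = S ↔ ∀ p : Lab γ₁, (T0 γ₁ γ₂ (σ (Sum.inl p))).2 ∈ S p.1 := by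
  constructor
  · rintro rfl p
    exact Finset.mem_image.2 ⟨p.2, Finset.mem_univ _, rfl⟩
  · intro hp
    funext i
    apply Finset.eq_of_subset_of_card_le
    · intro x hx
      obtain ⟨k, _, rfl⟩ := Finset.mem_image.1 hx
      exact hp ⟨i, k⟩
    · rw [SS_card h, shuf_card hS]

theorem SS_iff' {γ₁ γ₂ : Fin n → ℕ} {σ} (h : σ ∈ Wg (pM γ₁ γ₂)) {S} (hS : S ∈ shuffles γ₁ γ₂)
    {σ₀} (h₀ : σ₀ ∈ Wg (pM γ₁ γ₂)) (h₀' : T0 γ₁ γ₂ ∘ σ₀ = aS γ₁ γ₂ S) :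
    SS γ₁ γ₂ σ = S ↔ σ₀⁻¹ * σ ∈ Stab γ₁ γ₂ := by
  rw [SS_iff h hS, Stab, Finset.mem_filter]
  have hmem := Wg_mul (Wg_inv h₀) h
  have e : ∀ x, T0 γ₁ γ₂ (σ x) = aS γ₁ γ₂ S ((σ₀⁻¹ * σ) x) := by
    intro x; rw [← h₀']; simp
  constructor
  · intro hp
    refine ⟨hmem, fun p => ?_⟩
    rcases hc : (σ₀⁻¹ * σ) (Sum.inl p) with q | q
    · exact ⟨q, rfl⟩
    · exfalso
      have h1 := hp p
      have h2 := mem_Wg.1 hmem (Sum.inl p)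
      rw [e, hc] at h1
      rw [hc] at h2
      have h3 := sub_mem (shuf_compl_card hS q.1) q.2
      have h2' : q.1 = p.1 := h2
      rw [← h2'] at h1
      exact (Finset.mem_sdiff.1 h3).2 h1
  · rintro ⟨_, hp⟩ p
    obtain ⟨q, hq⟩ := hp p
    have h2 := mem_Wg.1 hmem (Sum.inl p)
    rw [hq] at h2
    have h2' : q.1 = p.1 := h2
    rw [e, hq, ← h2']
    exact sub_mem (shuf_card hS q.1) q.2

theorem sum_shuf (Q : FinQuiver n) {γ₁ γ₂ : Fin n → ℕ} {f₁ f₂ : PolyQ n}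
    (h1 : f₁ ∈ Hspace γ₁) (h2 : f₂ ∈ Hspace γ₂) (z : Fin n × ℕ → ℚ) :
    ∑ σ ∈ Wg (pM γ₁ γ₂), GG Q γ₁ γ₂ f₁ f₂ (z ∘ T0 γ₁ γ₂ ∘ σ) =
      (Stab γ₁ γ₂).card * ∑ S ∈ shuffles γ₁ γ₂, GG Q γ₁ γ₂ f₁ f₂ (z ∘ aS γ₁ γ₂ S) := by
  rw [← Finset.sum_fiberwise_of_maps_to (t := shuffles γ₁ γ₂) (g := SS γ₁ γ₂) fun σ h => SS_mem h,
    Finset.mul_sum]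
  refine Finset.sum_congr rfl fun S hS => ?_
  obtain ⟨σ₀, h₀, h₀'⟩ := exists_sig hS
  rw [Finset.sum_congr rfl (g := fun _ => GG Q γ₁ γ₂ f₁ f₂ (z ∘ aS γ₁ γ₂ S))]
  · rw [Finset.sum_const, nsmul_eq_mul]
    congr 2
    refine Finset.card_bij' (fun σ _ => σ₀⁻¹ * σ) (fun τ _ => σ₀ * τ) ?_ ?_ ?_ ?_
    · intro σ hσ
      rw [Finset.mem_filter] at hσ
      exact (SS_iff' hσ.1 hS h₀ h₀').1 hσ.2
    · intro τ hτ
      have := Wg_mul h₀ (Finset.mem_filter.1 hτ).1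
      rw [Finset.mem_filter]
      refine ⟨this, (SS_iff' this hS h₀ h₀').2 ?_⟩
      rwa [inv_mul_cancel_left]
    · intro σ _; simp
    · intro σ _; simp
  · intro σ hσ
    rw [Finset.mem_filter] at hσ
    have := (SS_iff' hσ.1 hS h₀ h₀').1 hσ.2
    rw [← GG_stab Q h1 h2 this (z ∘ aS γ₁ γ₂ S), ← h₀']
    congr 1
    funext x
    simp

theorem GG_eq (Q : FinQuiver n) (γ₁ γ₂ : Fin n → ℕ) (f₁ f₂ : PolyQ n) (y : MM γ₁ γ₂ → ℚ) :
    ∑ σ ∈ Wg (pM γ₁ γ₂), GG Q γ₁ γ₂ f₁ f₂ (y ∘ σ) = Phi (eQ Q) (pM γ₁ γ₂) (wM γ₁ γ₂)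
      (rename Sum.inl (res γ₁ f₁) * rename Sum.inr (res γ₂ f₂)) y := by
  unfold Phi GG
  refine Finset.sum_congr rfl fun σ _ => ?_
  rw [map_mul, eval_rename, eval_rename]

theorem rat_sum {ι R : Type} [CommRing R] [IsDomain R] (s : Finset ι) (A D : ι → R) (P : R)
    (hD : ∀ i ∈ s, D i ≠ 0) (h : P * ∏ i ∈ s, D i = ∑ i ∈ s, A i * ∏ j ∈ s.erase i, D j) :
    algebraMap R (FractionRing R) P =
      ∑ i ∈ s, algebraMap R (FractionRing R) (A i) / algebraMap R (FractionRing R) (D i) := by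
  have hinj := IsFractionRing.injective R (FractionRing R)
  have hD' : ∀ i ∈ s, algebraMap R (FractionRing R) (D i) ≠ 0 := fun i hi h0 =>
    hD i hi (hinj (by rw [h0, map_zero]))
  have hP : ∏ i ∈ s, algebraMap R (FractionRing R) (D i) ≠ 0 := Finset.prod_ne_zero_iff.2 hD'
  apply mul_right_cancel₀ hP
  rw [← map_prod, ← map_mul, h, map_sum, Finset.sum_mul]
  refine Finset.sum_congr rfl fun i hi => ?_
  rw [map_mul, ← Finset.mul_prod_erase s D hi, map_mul]
  field_simp [hD' i hi]

theorem mulStep {Q : FinQuiver n} (hQ : Q.Acyclic) {γ₁ γ₂ : Fin n → ℕ} {f₁ f₂ : PolyQ n}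
    (h1 : f₁ ∈ Hspace γ₁) (h2 : f₂ ∈ Hspace γ₂) :
    cohaMul Q γ₁ γ₂ f₁ f₂ ∈ Hspace (γ₁ + γ₂) ∧ ∀ y : MM γ₁ γ₂ → ℚ, Function.Injective y →
      ((Stab γ₁ γ₂).card : ℚ) * eval (y ∘ TT γ₁ γ₂) (res (γ₁ + γ₂) (cohaMul Q γ₁ γ₂ f₁ f₂)) =
       Phi (eQ Q) (pM γ₁ γ₂) (wM γ₁ γ₂)
        (rename Sum.inl (res γ₁ f₁) * rename Sum.inr (res γ₂ f₂)) y := by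
  obtain ⟨P, hP⟩ := PL (e := eQ Q) (fun i => (eQ_diag Q hQ i).ge) (eQ_off Q) (pM γ₁ γ₂) (wM γ₁ γ₂)
    (rename Sum.inl (res γ₁ f₁) * rename Sum.inr (res γ₂ f₂))
  set N : ℚ := ((Stab γ₁ γ₂).card : ℚ) with hN
  have hN0 : N ≠ 0 := by
    have : (Stab γ₁ γ₂).Nonempty := ⟨1, Finset.mem_filter.2 ⟨Wg_one, fun p => ⟨p, rfl⟩⟩⟩
    rw [hN]
    exact_mod_cast this.card_pos.ne'
  set P1 : MvPolynomial (Lab (γ₁ + γ₂)) ℚ := C (N⁻¹) * rename (TT γ₁ γ₂).symm P with hP1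
  set P0 : PolyQ n := rename (emb (γ₁ + γ₂)) P1 with hP0
  have hT0 : ∀ z : Fin n × ℕ → ℚ, (z ∘ emb (γ₁ + γ₂)) ∘ (TT γ₁ γ₂).symm = z ∘ T0 γ₁ γ₂ := fun z => rfl
  have hev : ∀ z : Fin n × ℕ → ℚ, Function.Injective (z ∘ T0 γ₁ γ₂) →
      eval z P0 = ∑ S ∈ shuffles γ₁ γ₂, GG Q γ₁ γ₂ f₁ f₂ (z ∘ aS γ₁ γ₂ S) := by
    intro z hz
    rw [hP0, eval_rename, hP1, map_mul, eval_C, eval_rename, hT0, hP _ hz, ← GG_eq]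
    have := sum_shuf Q h1 h2 z
    have h' : ∑ σ ∈ Wg (pM γ₁ γ₂), GG Q γ₁ γ₂ f₁ f₂ ((z ∘ T0 γ₁ γ₂) ∘ σ) = _ := this
    rw [h', inv_mul_cancel_left₀ hN0]
  have hinjS : ∀ z : Fin n × ℕ → ℚ, Function.Injective (z ∘ T0 γ₁ γ₂) → ∀ S ∈ shuffles γ₁ γ₂,
      Function.Injective (z ∘ aS γ₁ γ₂ S) := by
    intro z hz S hS
    obtain ⟨σ₀, _, h₀'⟩ := exists_sig hS
    rw [← h₀']
    exact hz.comp σ₀.injective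
  have hVne : rename (T0 γ₁ γ₂) (Vand (MM γ₁ γ₂)) ≠ 0 := by
    intro h0
    exact Vand_ne ((rename_injective _ (T0_inj γ₁ γ₂)) (by rw [h0, map_zero]))
  have hVz : ∀ z, eval z (rename (T0 γ₁ γ₂) (Vand (MM γ₁ γ₂))) ≠ 0 → Function.Injective (z ∘ T0 γ₁ γ₂) := by
    intro z hz
    rw [eval_rename] at hz
    exact (eval_Vand_ne _).1 hz
  have hzex : ∃ z : Fin n × ℕ → ℚ, Function.Injective (z ∘ T0 γ₁ γ₂) := by
    by_contra hno
    push Not at hno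
    exact hVne (dens' 1 _ one_ne_zero fun z _ => by
      by_contra h; exact hno z (hVz z h))
  have hD0 : ∀ S ∈ shuffles γ₁ γ₂, interactionDen γ₁ γ₂ S ≠ 0 := by
    intro S hS h0
    obtain ⟨z, hz⟩ := hzex
    have := (Ker_eval Q hS z (hinjS z hz S hS)).2
    rw [h0, map_zero] at this
    exact this rfl
  have hrat : algebraMap (PolyQ n) (FractionRing (PolyQ n)) P0 = cohaMulRat Q γ₁ γ₂ f₁ f₂ := by
    unfold cohaMulRat
    apply rat_sum _ _ _ _ hD0
    rw [← sub_eq_zero]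
    refine dens' _ _ hVne fun z hz => ?_
    have hz' := hVz z hz
    rw [map_sub, sub_eq_zero, map_mul, hev z hz', map_prod, map_sum, Finset.sum_mul]
    refine Finset.sum_congr rfl fun S hS => ?_
    rw [← term_eval Q hS h1 h2 z (hinjS z hz' S hS), map_mul (eval z) _ (∏ j ∈ _, _), map_prod,
      ← Finset.mul_prod_erase _ _ hS, ← mul_assoc,
      div_mul_cancel₀ _ (Ker_eval Q hS z (hinjS z hz' S hS)).2]
    congr!
  have hmul : cohaMul Q γ₁ γ₂ f₁ f₂ = P0 := by
    have hex : ∃ P : PolyQ n,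
      algebraMap (PolyQ n) (FractionRing (PolyQ n)) P = cohaMulRat Q γ₁ γ₂ f₁ f₂ := ⟨P0, hrat⟩
    unfold cohaMul
    rw [dif_pos hex]
    exact IsFractionRing.injective (PolyQ n) (FractionRing (PolyQ n)) (hex.choose_spec.trans hrat.symm)
  have hPsym : ∀ σ ∈ Wg (pM γ₁ γ₂), rename σ P = P := by
    intro σ hσ
    rw [← sub_eq_zero]
    apply dens
    intro y hy
    rw [map_sub, eval_rename, hP _ (hy.comp σ.injective), hP _ hy, Phi_inv hσ, sub_self]
  rw [hmul]
  refine ⟨?_, ?_⟩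
  · refine mem_Hspace_rename fun σ hσ => ?_
    rw [hP1, map_mul, rename_C, rename_rename]
    congr 1
    have : σ ∘ (TT γ₁ γ₂).symm = (TT γ₁ γ₂).symm ∘
        (((TT γ₁ γ₂).symm.trans σ).trans (TT γ₁ γ₂) : Equiv.Perm (MM γ₁ γ₂)) := by
      funext x; simp
    rw [this, ← rename_rename, hPsym]
    rw [mem_Wg]
    intro p
    simp only [Equiv.trans_apply]
    rw [TT_fst, ← TT_fst']
    exact mem_Wg.1 hσ _
  · intro y hy
    rw [hP0, res_rename, hP1, map_mul, eval_C, eval_rename, mul_inv_cancel_left₀ hN0, ← hP y hy]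
    congr 2
    funext x; simp

end
end CoHA

namespace CoHA

section
variable {n : ℕ}

theorem cohaProd_concat (Q : FinQuiver n) (l : List ((Fin n → ℕ) × PolyQ n)) (hl : l ≠ []) (x) :
    cohaProd Q (l.concat x) = ((cohaProd Q l).1 + x.1,
      cohaMul Q (cohaProd Q l).1 x.1 (cohaProd Q l).2 x.2) := by
  obtain ⟨a, t, rfl⟩ := List.exists_cons_of_ne_nil hl
  rw [List.concat_eq_append, List.cons_append]
  simp only [cohaProd, List.foldl_append, List.foldl_cons, List.foldl_nil]

theorem Phi_transport {M L I : Type} [Fintype M] [Fintype L] (e : I → I → ℤ) (π : L → I) (w : L → ℕ)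
    (g : MvPolynomial M ℚ) (y : L → ℚ) (φ : M ≃ L) :
    Phi e (π ∘ φ) (w ∘ φ) g (y ∘ φ) = Phi e π w (rename φ g) y := by
  unfold Phi
  refine Finset.sum_bij' (fun σ _ => (φ.symm.trans σ).trans φ) (fun σ _ => (φ.trans σ).trans φ.symm)
    ?_ ?_ ?_ ?_ ?_
  · intro σ hσ
    rw [mem_Wg] at *
    intro p
    have := hσ (φ.symm p)
    simpa using this
  · intro σ hσ
    rw [mem_Wg] at *
    intro p
    have := hσ (φ p)
    simpa using this
  · intro σ _; ext p; simp
  · intro σ _; ext p; simp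
  · intro σ _
    rw [eval_rename, ← Ker_equiv e π w _ φ]
    have : (y ∘ ((φ.symm.trans σ).trans φ)) ∘ φ = (y ∘ φ) ∘ σ := by funext p; simp
    rw [this]

structure PD (Q : FinQuiver n) {r : ℕ} (γ : Fin r → Fin n → ℕ) : Type 1 where
  L : Type
  ft : Fintype L
  π : L → Fin n
  w : L → Fin r
  θ : ∀ u, Lab (γ u) → L
  θinj : ∀ u, Function.Injective (θ u)
  θπ : ∀ u p, π (θ u p) = p.1
  θw : ∀ u p, w (θ u p) = u
  θsurj : ∀ q, ∃ p, θ (w q) p = q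
  tot : Fin n → ℕ
  T : Lab tot ≃ L
  Tπ : ∀ p, π (T p) = p.1
  N : ℚ
  hN : N ≠ 0
  main : ∀ f : Fin r → PolyQ n, (∀ u, f u ∈ Hspace (γ u)) →
    (cohaProd Q (List.ofFn fun u => (γ u, f u))).1 = tot ∧
    (cohaProd Q (List.ofFn fun u => (γ u, f u))).2 ∈ Hspace tot ∧
    ∀ y : L → ℚ, Function.Injective y →
      N * eval (y ∘ T) (res tot (cohaProd Q (List.ofFn fun u => (γ u, f u))).2) =
        Phi (eQ Q) π (fun p => (w p : ℕ)) (∏ u, rename (θ u) (res (γ u) (f u))) y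

theorem one_mem_H (γ : Fin n → ℕ) : (1 : PolyQ n) ∈ Hspace γ := by
  refine ⟨fun p hp => ?_, fun i σ _ => map_one _⟩
  simp at hp

theorem PD_zero (Q : FinQuiver n) (γ : Fin 0 → Fin n → ℕ) : Nonempty (PD Q γ) := by
  refine ⟨{ L := Lab (fun _ : Fin n => 0), ft := inferInstance, π := fun p => p.1, w := fun p => p.2.elim0,
            θ := fun u => u.elim0, θinj := fun u => u.elim0, θπ := fun u => u.elim0,
            θw := fun u => u.elim0, θsurj := fun q => q.2.elim0, tot := fun _ => 0, T := Equiv.refl _,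
            Tπ := fun p => rfl, N := (Wg (fun p : Lab (fun _ : Fin n => 0) => p.1)).card,
            hN := Wg_card_pos _, main := ?_ }⟩
  intro f _
  refine ⟨by simp [cohaProd], by simpa [cohaProd] using one_mem_H _, fun y _ => ?_⟩
  unfold Phi
  have : ∀ y' : Lab (fun _ : Fin n => 0) → ℚ, Ker (eQ Q) (fun p => p.1)
      (fun p : Lab (fun _ : Fin n => 0) => ((p.2.elim0 : Fin 0) : ℕ)) y' = 1 := by
    intro y'
    unfold Ker
    exact Finset.prod_eq_one fun a _ => a.1.2.elim0
  simp [cohaProd, this]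

theorem PD_one (Q : FinQuiver n) (γ : Fin 1 → Fin n → ℕ) : Nonempty (PD Q γ) := by
  refine ⟨{ L := Lab (γ 0), ft := inferInstance, π := fun p => p.1, w := fun p => 0,
            θ := fun u p => ⟨p.1, ⟨p.2, by rw [← Subsingleton.elim u 0]; exact p.2.2⟩⟩, θinj := ?_, θπ := fun u p => rfl,
            θw := fun u p => (Subsingleton.elim u 0).symm, θsurj := fun q => ⟨q, rfl⟩, tot := γ 0, T := Equiv.refl _,
            Tπ := fun p => rfl, N := (Wg (fun p : Lab (γ 0) => p.1)).card,
            hN := Wg_card_pos _, main := ?_ }⟩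
  · intro u
    obtain rfl := Subsingleton.elim u 0
    exact fun p q h => h
  · intro f hf
    refine ⟨by simp [cohaProd], by simpa [cohaProd] using hf 0, fun y _ => ?_⟩
    have hK : ∀ y' : Lab (γ 0) → ℚ, Ker (eQ Q) (fun p => p.1)
        (fun p : Lab (γ 0) => ((0 : Fin 1) : ℕ)) y' = 1 := by
      intro y'
      unfold Ker
      exact Finset.prod_eq_one fun a _ => by simp
    unfold Phi
    rw [Finset.sum_congr rfl (g := fun _ => eval y (res (γ 0) (f 0)))]
    · simp [cohaProd]
    · intro σ hσ
      rw [hK, mul_one, ← eval_rename, Fin.prod_univ_one]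
      have : rename (fun p : Lab (γ 0) => (⟨p.1, ⟨p.2, p.2.2⟩⟩ : Lab (γ 0))) (res (γ 0) (f 0)) = res (γ 0) (f 0) :=
        rename_id_apply _
      rw [this, res_symm (hf 0) hσ]

theorem PD_succ {Q : FinQuiver n} (hQ : Q.Acyclic) {r : ℕ} (γ : Fin (r + 2) → Fin n → ℕ)
    (D : PD Q (fun u => γ (Fin.castSucc u))) : Nonempty (PD Q γ) := by
  letI := D.ft
  set γl := γ (Fin.last (r+1)) with hγl
  let L := D.L ⊕ Lab γl
  let π : L → Fin n := Sum.elim D.π (fun p => p.1)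
  let w : L → Fin (r + 2) := Sum.elim (fun p => Fin.castSucc (D.w p)) (fun _ => Fin.last (r+1))
  let wL : L → ℕ := Sum.elim (fun _ => 0) (fun _ => 1)
  let θ : ∀ u, Lab (γ u) → L := fun u => Fin.lastCases (motive := fun u => Lab (γ u) → L)
    (Sum.inr) (fun u => Sum.inl ∘ D.θ u) u
  have hθl : θ (Fin.last (r+1)) = Sum.inr := Fin.lastCases_last
  have hθc : ∀ u, θ (Fin.castSucc u) = Sum.inl ∘ D.θ u := fun u => Fin.lastCases_castSucc u
  let φ : MM D.tot γl ≃ L := Equiv.sumCongr D.T (Equiv.refl _)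
  have hπφ : π ∘ φ = pM D.tot γl := by
    funext p; rcases p with p | p
    · exact D.Tπ p
    · rfl
  have hwφ : wL ∘ φ = wM D.tot γl := by
    funext p; rcases p with p | p <;> rfl
  let W1 : ℚ := (Wg D.π).card
  have hW1 : W1 ≠ 0 := Wg_card_pos _
  have hS0 : ((Stab D.tot γl).card : ℚ) ≠ 0 := by
    have : (Stab D.tot γl).Nonempty := ⟨1, Finset.mem_filter.2 ⟨Wg_one, fun p => ⟨p, rfl⟩⟩⟩
    exact_mod_cast this.card_pos.ne'
  refine ⟨{ L := L, ft := inferInstance, π := π, w := w, θ := θ, θinj := ?_, θπ := ?_,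
            θw := ?_, θsurj := ?_, tot := D.tot + γl, T := (TT D.tot γl).trans φ,
            Tπ := ?_, N := W1⁻¹ * (D.N * (Stab D.tot γl).card), hN := mul_ne_zero (inv_ne_zero hW1) (mul_ne_zero D.hN hS0), main := ?_ }⟩
  · intro u
    refine Fin.lastCases ?_ (fun u => ?_) u
    · rw [hθl]; exact Sum.inr_injective
    · rw [hθc]; exact Sum.inl_injective.comp (D.θinj u)
  · intro u
    refine Fin.lastCases ?_ (fun u => ?_) u
    · rw [hθl]; intro p; rfl
    · rw [hθc]; exact D.θπ u
  · intro u
    refine Fin.lastCases ?_ (fun u => ?_) u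
    · rw [hθl]; intro p; rfl
    · rw [hθc]; intro p; exact congrArg Fin.castSucc (D.θw u p)
  · intro q
    rcases q with q | q
    · obtain ⟨p, hp⟩ := D.θsurj q
      refine ⟨p, ?_⟩
      show θ (Fin.castSucc (D.w q)) p = _
      rw [hθc]
      exact congrArg Sum.inl hp
    · refine ⟨q, ?_⟩
      show θ (Fin.last _) q = _
      rw [hθl]
  · intro p
    have := congrFun hπφ (TT D.tot γl p)
    exact this.trans (TT_fst _ _ p)
  · intro f hf
    have hne : (List.ofFn fun u : Fin (r+1) => (γ (Fin.castSucc u), f (Fin.castSucc u))) ≠ [] := by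
      rw [List.ofFn_succ]; exact List.cons_ne_nil _ _
    rw [List.ofFn_succ', cohaProd_concat Q _ hne]
    obtain ⟨hm1, hm2, hm3⟩ := D.main (fun u => f (Fin.castSucc u)) (fun u => hf _)
    set A := cohaProd Q (List.ofFn fun u : Fin (r+1) => (γ (Fin.castSucc u), f (Fin.castSucc u))) with hA
    simp only [hm1]
    obtain ⟨hs1, hs2⟩ := mulStep hQ hm2 (hf (Fin.last (r+1)))
    refine ⟨rfl, hs1, fun y hy => ?_⟩
    have h1 := hs2 (y ∘ φ) (hy.comp φ.injective)
    set G1 : MvPolynomial D.L ℚ := ∏ u, rename (D.θ u) (res (γ (Fin.castSucc u)) (f (Fin.castSucc u))) with hG1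
    set G2 := res γl (f (Fin.last (r+1))) with hG2
    let H : (L → ℚ) → ℚ := fun y => eval (y ∘ Sum.inl) G1 * Ker (eQ Q) D.π (fun p => (D.w p : ℕ)) (y ∘ Sum.inl) *
      (eval (y ∘ Sum.inr) G2 * Ker (eQ Q) π wL y)
    rw [← hπφ, ← hwφ, Phi_transport] at h1
    have h2 : D.N * Phi (eQ Q) π wL (rename φ (rename Sum.inl (res D.tot A.2) * rename Sum.inr G2)) y =
        W1 * ∑ σ ∈ Wg π, H (y ∘ σ) := by
      have e1 : ∀ y : L → ℚ, Function.Injective y →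
          D.N * (eval y (rename φ (rename Sum.inl (res D.tot A.2) * rename Sum.inr G2)) * Ker (eQ Q) π wL y) =
          ∑ τ ∈ Wg D.π, H (y ∘ (Equiv.sumCongr τ (1 : Equiv.Perm (Lab γl)))) := by
        intro y hy
        rw [eval_rename, map_mul, eval_rename, eval_rename, mul_assoc, ← mul_assoc D.N]
        have : ((y ∘ φ) ∘ Sum.inl) = (y ∘ Sum.inl) ∘ D.T := rfl
        rw [this, hm3 _ (hy.comp Sum.inl_injective), Phi, Finset.sum_mul]
        refine Finset.sum_congr rfl fun τ hτ => ?_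
        have hτ' : (Equiv.sumCongr τ (1 : Equiv.Perm (Lab γl)) : Equiv.Perm L) ∈ Wg π := by
          rw [mem_Wg]
          intro p; rcases p with p | p
          · exact mem_Wg.1 hτ p
          · rfl
        have hw' : wL ∘ (Equiv.sumCongr τ (1 : Equiv.Perm (Lab γl)) : Equiv.Perm L) = wL := by
          funext p; rcases p with p | p <;> rfl
        have hk := Ker_perm (e := eQ Q) wL y hτ'
        rw [hw'] at hk
        show _ = _ * _ * (_ * Ker (eQ Q) π wL (y ∘ _))
        rw [hk]
        rfl
      unfold Phi
      rw [Finset.mul_sum, Finset.sum_congr rfl fun σ _ => e1 _ (hy.comp σ.injective), Finset.sum_comm]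
      rw [Finset.sum_congr rfl (g := fun _ => ∑ σ ∈ Wg π, H (y ∘ σ)), Finset.sum_const, nsmul_eq_mul]
      intro τ hτ
      have hτ' : (Equiv.sumCongr τ (1 : Equiv.Perm (Lab γl)) : Equiv.Perm L) ∈ Wg π := by
        rw [mem_Wg]
        intro p; rcases p with p | p
        · exact mem_Wg.1 hτ p
        · rfl
      exact Wg_sum_mul_right hτ' (fun σ => H (y ∘ σ))
    have h3 : ∀ y, H y = eval y (∏ u, rename (θ u) (res (γ u) (f u))) *
        Ker (eQ Q) π (fun p => (w p : ℕ)) y := by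
      intro y
      have hk : Ker (eQ Q) π (fun p => (w p : ℕ)) y =
          Ker (eQ Q) D.π (fun p => (D.w p : ℕ)) (y ∘ Sum.inl) * Ker (eQ Q) π wL y := by
        have hlt : ∀ p : D.L, (D.w p : ℕ) < r + 1 := fun p => (D.w p).2
        have hlt' : ∀ p : D.L, ¬ r + 1 < (D.w p : ℕ) := fun p => by have := hlt p; omega
        unfold Ker
        simp only [Fintype.prod_prod_type, Fintype.prod_sum_type, L, wL, w, π, Sum.elim_inl, Sum.elim_inr,
          Fin.val_castSucc, Fin.val_last, lt_self_iff_false, if_false, zero_lt_one, if_true,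
          Finset.prod_const_one, mul_one, one_mul, hlt, not_lt_zero, hlt', Function.comp, Finset.prod_mul_distrib]
        simp
      rw [hk, Fin.prod_univ_castSucc, hθl, map_mul, eval_rename]
      have : ∏ u : Fin (r+1), rename (θ (Fin.castSucc u)) (res (γ (Fin.castSucc u)) (f (Fin.castSucc u))) =
          rename Sum.inl G1 := by
        rw [hG1, map_prod]
        refine Finset.prod_congr rfl fun u _ => ?_
        rw [rename_rename, hθc]
      rw [this, eval_rename]
      show _ * _ * (_ * _) = _
      ring
    rw [mul_assoc, mul_assoc, inv_mul_eq_iff_eq_mul₀ hW1]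
    unfold Phi
    simp only [← h3]
    rw [← h2, ← h1]
    rfl

theorem PD_all {Q : FinQuiver n} (hQ : Q.Acyclic) : ∀ {r : ℕ} (γ : Fin r → Fin n → ℕ), Nonempty (PD Q γ)
  | 0, γ => PD_zero Q γ
  | 1, γ => PD_one Q γ
  | (r + 2), γ => by
    obtain ⟨D⟩ := PD_all hQ (fun u : Fin (r + 1) => γ (Fin.castSucc u))
    exact PD_succ hQ γ D

end
end CoHA

namespace CoHA

section
variable {ι : Type} [Fintype ι] {σ : ι → Type}

theorem prod_monomial {ι τ : Type} (s : Finset ι) (d : ι → τ →₀ ℕ) :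
    ∏ u ∈ s, (monomial (d u) (1 : ℚ)) = monomial (∑ u ∈ s, d u) 1 := by
  induction s using Finset.induction_on with
  | empty => simp
  | insert a s ha ih => rw [Finset.prod_insert ha, Finset.sum_insert ha, ih, monomial_mul, one_mul]

theorem split_sum (d : ∀ u, σ u →₀ ℕ) (v : ι) :
    Finsupp.split (∑ u, Finsupp.mapDomain (Sigma.mk u) (d u) : (Σ u, σ u) →₀ ℕ) v = d v := by
  ext x
  rw [Finsupp.split_apply, Finsupp.finset_sum_apply, Finset.sum_eq_single v]
  · exact Finsupp.mapDomain_apply sigma_mk_injective _ _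
  · intro u _ hu
    apply Finsupp.mapDomain_notin_range
    rintro ⟨y, hy⟩
    exact hu (congrArg Sigma.fst hy)
  · simp

theorem tensor_functional (l : ∀ u, MvPolynomial (σ u) ℚ →ₗ[ℚ] ℚ) :
    ∃ Λ : MvPolynomial (Σ u, σ u) ℚ →ₗ[ℚ] ℚ, ∀ h : ∀ u, MvPolynomial (σ u) ℚ,
      Λ (∏ u, rename (Sigma.mk u) (h u)) = ∏ u, l u (h u) := by
  let Λ : MvPolynomial (Σ u, σ u) ℚ →ₗ[ℚ] ℚ := (basisMonomials (Σ u, σ u) ℚ).constr ℚ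
    (fun d => ∏ u, l u (monomial (Finsupp.split d u) 1))
  refine ⟨Λ, ?_⟩
  let A : MultilinearMap ℚ (fun u => MvPolynomial (σ u) ℚ) ℚ :=
    Λ.compMultilinearMap ((MultilinearMap.mkPiAlgebra ℚ ι (MvPolynomial (Σ u, σ u) ℚ)).compLinearMap
      (fun u => (rename (R := ℚ) (Sigma.mk u) : MvPolynomial (σ u) ℚ →ₐ[ℚ] MvPolynomial (Σ u, σ u) ℚ).toLinearMap))
  let B : MultilinearMap ℚ (fun u => MvPolynomial (σ u) ℚ) ℚ :=
    (MultilinearMap.mkPiAlgebra ℚ ι ℚ).compLinearMap l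
  have hAB : A = B := by
    refine Module.Basis.ext_multilinear (fun u => basisMonomials (σ u) ℚ) fun d => ?_
    simp only [A, B, LinearMap.compMultilinearMap_apply, MultilinearMap.compLinearMap_apply,
      MultilinearMap.mkPiAlgebra_apply, coe_basisMonomials, AlgHom.toLinearMap_apply, rename_monomial]
    rw [prod_monomial]
    have : (monomial (∑ u, Finsupp.mapDomain (Sigma.mk u) (d u)) (1 : ℚ) : MvPolynomial (Σ u, σ u) ℚ) =
      basisMonomials (Σ u, σ u) ℚ (∑ u, Finsupp.mapDomain (Sigma.mk u) (d u)) := by simp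
    rw [this, Module.Basis.constr_basis]
    simp only [split_sum]
  intro h
  have := congrArg (fun f => f h) hAB
  simpa [A, B] using this

theorem sub_prod_mem {ι τ : Type} (s : Finset ι) (S : ι → Submodule ℚ (MvPolynomial τ ℚ))
    (f : ι → MvPolynomial τ ℚ) (h : ∀ u, f u ∈ S u) : ∏ u ∈ s, f u ∈ ∏ u ∈ s, S u := by
  induction s using Finset.induction_on with
  | empty => simp only [Finset.prod_empty]; exact Submodule.one_le.1 le_rfl
  | insert a s ha ih =>
    rw [Finset.prod_insert ha, Finset.prod_insert ha]
    exact Submodule.mul_mem_mul (h a) ih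

noncomputable def Wsp (B : ∀ u, Submodule ℚ (MvPolynomial (σ u) ℚ)) : Submodule ℚ (MvPolynomial (Σ u, σ u) ℚ) :=
  Submodule.span ℚ {g | ∃ h : ∀ u, MvPolynomial (σ u) ℚ, (∀ u, h u ∈ B u) ∧
    g = ∏ u, rename (Sigma.mk u) (h u)}

theorem graded_basis (B : ∀ u, Submodule ℚ (MvPolynomial (σ u) ℚ)) [∀ u, Finite (σ u)]
    (hB : ∀ u, ∀ f ∈ B u, ∀ s, homogeneousComponent s f ∈ B u) :
    (∀ g ∈ Wsp B, ∀ s, homogeneousComponent s g ∈ Wsp B) ∧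
    ∀ k, Module.finrank ℚ ↥(Wsp B ⊓ homogeneousSubmodule (Σ u, σ u) ℚ k) =
      Nat.card {c : ∀ u, Σ s : ℕ, Fin (Module.finrank ℚ ↥(B u ⊓ homogeneousSubmodule (σ u) ℚ s)) //
        ∑ u, (c u).1 = k} := by
  haveI hfin : ∀ u s, FiniteDimensional ℚ ↥(B u ⊓ homogeneousSubmodule (σ u) ℚ s) := by
    intro u s
    haveI : FiniteDimensional ℚ ↥(homogeneousSubmodule (σ u) ℚ s) :=
      Module.Finite.iff_fg.2 (homogeneousSubmodule_fg (σ u) ℚ s)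
    exact Submodule.finiteDimensional_inf_right _ _
  let I : ι → Type := fun u => Σ s : ℕ, Fin (Module.finrank ℚ ↥(B u ⊓ homogeneousSubmodule (σ u) ℚ s))
  let b : ∀ u s, Module.Basis (Fin (Module.finrank ℚ ↥(B u ⊓ homogeneousSubmodule (σ u) ℚ s))) ℚ
      ↥(B u ⊓ homogeneousSubmodule (σ u) ℚ s) := fun u s => Module.finBasis ℚ _
  let e : ∀ u, I u → MvPolynomial (σ u) ℚ := fun u c => (b u c.1 c.2 : MvPolynomial (σ u) ℚ)
  have he : ∀ u c, e u c ∈ B u ∧ (e u c).IsHomogeneous c.1 := fun u c => (b u c.1 c.2).2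
  let E : (∀ u, I u) → MvPolynomial (Σ u, σ u) ℚ := fun c => ∏ u, rename (Sigma.mk u) (e u (c u))
  have hEW : ∀ c, E c ∈ Wsp B := fun c => Submodule.subset_span ⟨_, fun u => (he u (c u)).1, rfl⟩
  have hEh : ∀ c, (E c).IsHomogeneous (∑ u, (c u).1) := fun c =>
    IsHomogeneous.prod _ _ _ fun u _ => ((he u (c u)).2).rename_isHomogeneous
  -- dual functionals
  have hdual : ∀ u (c : I u), ∃ l : MvPolynomial (σ u) ℚ →ₗ[ℚ] ℚ, ∀ c', l (e u c') = if c' = c then 1 else 0 := by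
    intro u c
    obtain ⟨g, hg⟩ := ((b u c.1).coord c.2).exists_extend
    refine ⟨g.comp (homogeneousComponent c.1), fun c' => ?_⟩
    rw [LinearMap.comp_apply, homogeneousComponent_of_mem (he u c').2]
    obtain ⟨s, i⟩ := c
    obtain ⟨s', i'⟩ := c'
    by_cases hs : s' = s
    · subst hs
      have h1 : g (e u ⟨s', i'⟩) = (b u s').coord i (b u s' i') := by
        rw [← hg]; rfl
      rw [if_pos rfl, h1, Module.Basis.coord_apply, Module.Basis.repr_self, Finsupp.single_apply]
      by_cases h : i' = i
      · rw [if_pos h, if_pos (by rw [h])]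
      · rw [if_neg h, if_neg (fun h' : (⟨s', i'⟩ : I u) = ⟨s', i⟩ => h (eq_of_heq (Sigma.mk.inj h').2))]
    · have h2 : ¬ ((⟨s', i'⟩ : I u) = ⟨s, i⟩) := fun h => hs (congrArg Sigma.fst h)
      rw [if_neg h2, if_neg (fun h => hs h.symm), map_zero]
  have hind : LinearIndependent ℚ E := by
    rw [linearIndependent_iff']
    intro s a hs c hc
    choose l hl using fun u => hdual u (c u)
    obtain ⟨Λ, hΛ⟩ := tensor_functional l
    have h1 := congrArg Λ hs
    rw [map_sum, map_zero, Finset.sum_eq_single c] at h1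
    · rw [map_smul, hΛ] at h1
      simpa [hl] using h1
    · intro c' _ hc'
      rw [map_smul, hΛ]
      obtain ⟨u, hu⟩ := Function.ne_iff.1 hc'
      rw [Finset.prod_eq_zero (Finset.mem_univ u), smul_zero]
      rw [hl, if_neg hu]
    · exact fun h => absurd hc h
  have hBspan : ∀ u, ∀ f ∈ B u, f ∈ Submodule.span ℚ (Set.range (e u)) := by
    intro u f hf
    rw [← sum_homogeneousComponent f]
    refine Submodule.sum_mem _ fun s _ => ?_
    have hm : homogeneousComponent s f ∈ B u ⊓ homogeneousSubmodule (σ u) ℚ s :=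
      ⟨hB u f hf s, homogeneousComponent_mem s f⟩
    have h2 := congrArg Subtype.val ((b u s).sum_repr ⟨_, hm⟩)
    rw [← show _ = homogeneousComponent s f from h2]
    rw [AddSubmonoidClass.coe_finsetSum]
    refine Submodule.sum_mem _ fun i _ => ?_
    exact Submodule.smul_mem _ _ (Submodule.subset_span ⟨⟨s, i⟩, rfl⟩)
  have hWspan : Wsp B ≤ Submodule.span ℚ (Set.range E) := by
    refine Submodule.span_le.2 ?_
    rintro _ ⟨h, hh, rfl⟩
    have h1 : ∀ u, rename (Sigma.mk u) (h u) ∈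
        Submodule.span ℚ ((rename (R := ℚ) (Sigma.mk u)).toLinearMap '' Set.range (e u)) := by
      intro u
      rw [← Submodule.map_span]
      exact ⟨h u, hBspan u _ (hh u), rfl⟩
    have h2 : ∏ u, rename (Sigma.mk u) (h u) ∈
        ∏ u, Submodule.span ℚ ((rename (R := ℚ) (Sigma.mk u)).toLinearMap '' Set.range (e u)) :=
      sub_prod_mem _ _ _ fun u => h1 u
    rw [Submodule.prod_span] at h2
    refine Submodule.span_mono ?_ h2
    intro x hx
    obtain ⟨g, hg, rfl⟩ := (Set.mem_fintype_prod _ _).1 hx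
    have : ∀ u, ∃ c, rename (Sigma.mk u) (e u c) = g u := by
      intro u
      obtain ⟨_, ⟨c, rfl⟩, hc⟩ := hg u
      exact ⟨c, hc⟩
    choose c hc using this
    exact ⟨c, Finset.prod_congr rfl fun u _ => hc u⟩
  have hcomp : ∀ g ∈ Wsp B, ∀ k, homogeneousComponent k g ∈ Submodule.span ℚ
      (Set.range fun c : {c : ∀ u, I u // ∑ u, (c u).1 = k} => E c.1) := by
    intro g hg k
    have h0 : Submodule.span ℚ (Set.range E) ≤ (Submodule.span ℚ
      (Set.range fun c : {c : ∀ u, I u // ∑ u, (c u).1 = k} => E c.1)).comap (homogeneousComponent k) := by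
      refine Submodule.span_le.2 ?_
      rintro _ ⟨c, rfl⟩
      rw [SetLike.mem_coe, Submodule.mem_comap]
      rw [homogeneousComponent_of_mem (hEh c)]
      split_ifs with h
      · exact Submodule.subset_span ⟨⟨c, h.symm⟩, rfl⟩
      · exact zero_mem _
    exact h0 (hWspan hg)
  have hle : ∀ k, Submodule.span ℚ
      (Set.range fun c : {c : ∀ u, I u // ∑ u, (c u).1 = k} => E c.1) ≤ Wsp B := by
    intro k
    refine Submodule.span_le.2 ?_
    rintro _ ⟨c, rfl⟩
    exact hEW _
  refine ⟨fun g hg s => hle s (hcomp g hg s), fun k => ?_⟩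
  have heq : Wsp B ⊓ homogeneousSubmodule (Σ u, σ u) ℚ k = Submodule.span ℚ
      (Set.range fun c : {c : ∀ u, I u // ∑ u, (c u).1 = k} => E c.1) := by
    apply le_antisymm
    · rintro g ⟨hg, hgk⟩
      have := hcomp g hg k
      rwa [homogeneousComponent_of_mem hgk, if_pos rfl] at this
    · refine le_inf (hle k) (Submodule.span_le.2 ?_)
      rintro _ ⟨c, rfl⟩
      have := hEh c.1
      rw [c.2] at this
      exact this
  rw [heq]
  have hli : LinearIndependent ℚ (fun c : {c : ∀ u, I u // ∑ u, (c u).1 = k} => E c.1) :=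
    hind.comp _ Subtype.val_injective
  exact Module.finrank_eq_nat_card_basis (Module.Basis.span hli)

theorem count_lemma {r : ℕ} (d : Fin r → ℕ → ℕ) (k : ℕ) :
    Nat.card {c : ∀ u : Fin r, Σ s : ℕ, Fin (d u s) // ∑ u, (c u).1 = k} =
      ∑ t ∈ Finset.Nat.antidiagonalTuple r k, ∏ u, d u (t u) := by
  let eqv : {c : ∀ u : Fin r, Σ s : ℕ, Fin (d u s) // ∑ u, (c u).1 = k} ≃
      Σ t : {t // t ∈ Finset.Nat.antidiagonalTuple r k}, ∀ u, Fin (d u (t.1 u)) :=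
    { toFun := fun c => ⟨⟨fun u => (c.1 u).1, Finset.Nat.mem_antidiagonalTuple.2 c.2⟩, fun u => (c.1 u).2⟩
      invFun := fun t => ⟨fun u => ⟨t.1.1 u, t.2 u⟩, Finset.Nat.mem_antidiagonalTuple.1 t.1.2⟩
      left_inv := fun c => rfl
      right_inv := fun t => rfl }
  rw [Nat.card_congr eqv, Nat.card_eq_fintype_card, Fintype.card_sigma]
  simp only [Fintype.card_pi, Fintype.card_fin]
  exact Finset.sum_coe_sort (Finset.Nat.antidiagonalTuple r k) (fun t => ∏ u, d u (t u))
end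
end CoHA

namespace CoHA

section
variable {L I : Type} [Fintype L]

theorem hom_eval_scale {σ : Type} {g : MvPolynomial σ ℚ} {k : ℕ} (hg : g.IsHomogeneous k) (y : σ → ℚ) (l : ℚ) :
    eval (fun p => 0 + y p * l) g = l ^ k * eval y g := by
  rw [eval_eq, eval_eq, Finset.mul_sum]
  refine Finset.sum_congr rfl fun d hd => ?_
  have h1 : d.degree = k := by
    by_contra h
    exact (mem_support_iff.1 hd) (hg.coeff_eq_zero h)
  rw [← h1, Finsupp.degree_apply, ← Finset.prod_pow_eq_pow_sum, mul_left_comm, ← Finset.prod_mul_distrib]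
  congr 1
  refine Finset.prod_congr rfl fun i _ => ?_
  rw [zero_add, mul_pow, mul_comm]

theorem line_coeff {P : MvPolynomial L ℚ} (y : L → ℚ) (i : ℕ) :
    (lineP (fun _ => 0) y P).coeff i = eval y (homogeneousComponent i P) := by
  have h : lineP (fun _ => 0) y P = ∑ s ∈ Finset.range (P.totalDegree + 1),
      Polynomial.monomial s (eval y (homogeneousComponent s P)) := by
    apply Polynomial.funext
    intro l
    rw [eval_lineP, Polynomial.eval_finsetSum]
    conv_lhs => rw [← sum_homogeneousComponent P, map_sum]
    refine Finset.sum_congr rfl fun s _ => ?_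
    rw [hom_eval_scale (homogeneousComponent_isHomogeneous s P), Polynomial.eval_monomial, mul_comm]
  rw [h, Polynomial.finsetSum_coeff]
  simp only [Polynomial.coeff_monomial]
  rw [Finset.sum_ite_eq' (Finset.range (P.totalDegree + 1)) i]
  split_ifs with hi
  · rfl
  · rw [homogeneousComponent_eq_zero, map_zero]
    simpa using hi

theorem deg_lemma {e : I → I → ℤ} {π : L → I} {w : L → ℕ} {g P : MvPolynomial L ℚ}
    (hP : Reps P (Phi e π w g)) {k : ℕ} (hg : g.IsHomogeneous k) (i : ℕ)
    (hi : (i : ℤ) ≠ k + Edeg e π w) : homogeneousComponent i P = 0 := by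
  apply dens
  intro y hy
  rw [← line_coeff]
  set d : ℤ := k + Edeg e π w with hd
  set M : ℕ := d.natAbs + 1 with hM
  have hPhi : ∀ l : ℚ, l ≠ 0 → eval (fun p => 0 + y p * l) P = l ^ d * Phi e π w g y := by
    intro l hl
    rw [hP _ (fun p q h => hy (mul_right_cancel₀ hl (by simpa using h)))]
    unfold Phi
    rw [Finset.mul_sum]
    refine Finset.sum_congr rfl fun σ _ => ?_
    have h1 : (fun p => 0 + y p * l) ∘ σ = fun p => 0 + (y ∘ σ) p * l := rfl
    rw [h1, hom_eval_scale hg, Ker_scale _ _ _ _ _ hl, hd, zpow_add₀ hl (k : ℤ), zpow_natCast]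
    ring
  have key : lineP (fun _ => 0) y P * Polynomial.X ^ M =
      Polynomial.monomial (M + d).toNat (Phi e π w g y) := by
    apply Polynomial.funext
    intro l
    rw [Polynomial.eval_mul, Polynomial.eval_pow, Polynomial.eval_X, Polynomial.eval_monomial, eval_lineP]
    by_cases hl : l = 0
    · have h1 : M ≠ 0 := by omega
      have h2 : (M + d).toNat ≠ 0 := by omega
      rw [hl, zero_pow h1, zero_pow h2, mul_zero, mul_zero]
    · rw [hPhi l hl]
      have h3 : l ^ (M + d).toNat = l ^ ((M : ℤ) + d) := by
        rw [← zpow_natCast]; congr 1; omega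
      rw [h3, zpow_add₀ hl (M : ℤ) d, zpow_natCast]
      ring
  have h4 := congrArg (fun p => Polynomial.coeff p (i + M)) key
  simp only [Polynomial.coeff_mul_X_pow, Polynomial.coeff_monomial] at h4
  rw [h4, if_neg]
  omega

theorem exists_R {e : I → I → ℤ} (he : ∀ i, -1 ≤ e i i) (he' : ∀ i j, i ≠ j → 0 ≤ e i j)
    (π : L → I) (w : L → ℕ) : ∃ R : MvPolynomial L ℚ →ₗ[ℚ] MvPolynomial L ℚ,
      ∀ g, Reps (R g) (Phi e π w g) := by
  choose R hR using PL he he' π w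
  refine ⟨{ toFun := R, map_add' := fun g h => ?_, map_smul' := fun c g => ?_ }, hR⟩
  · refine (hR _).unique fun y hy => ?_
    rw [map_add, hR g y hy, hR h y hy]
    unfold Phi
    rw [← Finset.sum_add_distrib]
    exact Finset.sum_congr rfl fun σ _ => by rw [map_add, add_mul]
  · refine (hR _).unique fun y hy => ?_
    rw [RingHom.id_apply, smul_eval, hR g y hy]
    unfold Phi
    rw [Finset.mul_sum]
    exact Finset.sum_congr rfl fun σ _ => by rw [smul_eval, mul_assoc]
end

section
variable {n r : ℕ}

abbrev MSig (γ : Fin r → Fin n → ℕ) : Type := Σ u, Lab (γ u)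
def piM (γ : Fin r → Fin n → ℕ) (q : MSig γ) : Fin n := q.2.1

theorem clean {Q : FinQuiver n} (hQ : Q.Acyclic) (γ : Fin r → Fin n → ℕ) :
    ∃ (R : MvPolynomial (MSig γ) ℚ →ₗ[ℚ] MvPolynomial (MSig γ) ℚ) (j : MSig γ → Fin n × ℕ) (N : ℚ),
      (∀ g, Reps (R g) (Phi (eQ Q) (piM γ) (fun p => (p.1 : ℕ)) g)) ∧ Function.Injective j ∧ N ≠ 0 ∧
      ∀ f : Fin r → PolyQ n, (∀ u, f u ∈ Hspace (γ u)) → cohaProdFin Q γ f =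
        N • rename j (R (∏ u, rename (Sigma.mk u) (res (γ u) (f u)))) := by
  obtain ⟨D⟩ := PD_all hQ γ
  letI := D.ft
  obtain ⟨R, hR⟩ := exists_R (e := eQ Q) (fun i => (eQ_diag Q hQ i).ge) (eQ_off Q) (piM γ)
    (fun p : MSig γ => (p.1 : ℕ))
  let φ : MSig γ ≃ D.L := Equiv.ofBijective (fun q => D.θ q.1 q.2) (by
    constructor
    · rintro ⟨u, p⟩ ⟨v, q⟩ h
      have huv : u = v := by
        have := congrArg D.w h
        rwa [D.θw, D.θw] at this
      subst huv
      exact congrArg _ (D.θinj u h)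
    · intro q
      obtain ⟨p, hp⟩ := D.θsurj q
      exact ⟨⟨_, p⟩, hp⟩)
  let T : Lab D.tot ≃ MSig γ := D.T.trans φ.symm
  refine ⟨R, emb D.tot ∘ T.symm, D.N⁻¹, hR, (emb_inj _).comp T.symm.injective, inv_ne_zero D.hN, ?_⟩
  intro f hf
  obtain ⟨_, h2, h3⟩ := D.main f hf
  set F := (cohaProd Q (List.ofFn fun u => (γ u, f u))).2 with hF
  have hFF : cohaProdFin Q γ f = F := rfl
  have key : D.N • rename T (res D.tot F) = R (∏ u, rename (Sigma.mk u) (res (γ u) (f u))) := by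
    refine Reps.unique ?_ (hR _)
    intro z hz
    rw [smul_eval, eval_rename]
    have h4 := h3 (z ∘ φ.symm) (hz.comp φ.symm.injective)
    have h5 : (z ∘ φ.symm) ∘ D.T = z ∘ T := rfl
    rw [h5] at h4
    rw [h4]
    have h6 : ∏ u, rename (D.θ u) (res (γ u) (f u)) =
        rename φ (∏ u, rename (Sigma.mk u) (res (γ u) (f u))) := by
      rw [map_prod]
      refine Finset.prod_congr rfl fun u _ => ?_
      rw [rename_rename]
      rfl
    rw [h6, ← Phi_transport]
    have h7 : (z ∘ φ.symm) ∘ φ = z := by funext p; simp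
    have h8 : D.π ∘ φ = piM γ := funext fun p => D.θπ _ _
    have h9 : (fun p => (D.w p : ℕ)) ∘ φ = fun p : MSig γ => (p.1 : ℕ) := funext fun p => by
      have := D.θw p.1 p.2
      exact congrArg Fin.val this
    rw [h7, h8, h9]
  rw [hFF, ← key, map_smul, smul_smul, inv_mul_cancel₀ D.hN, one_smul, rename_rename]
  have h10 : (emb D.tot ∘ T.symm) ∘ T = emb D.tot := by funext p; simp
  rw [h10, rename_res h2.1]

theorem dimz_M (γ : Fin r → Fin n → ℕ) (u : Fin r) (S : Lab (γ u) → Prop) (T : MSig γ → Prop)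
    (hT : ∀ q, T q ↔ ∃ p, S p ∧ q = ⟨u, p⟩) (i : Fin n) :
    dimz (piM γ) T i = ∑ a : Fin (γ u i), if S ⟨i, a⟩ then 1 else 0 := by
  rw [dimz_apply, Fintype.sum_sigma, Finset.sum_eq_single u]
  · rw [Fintype.sum_sigma, Finset.sum_eq_single i]
    · refine Finset.sum_congr rfl fun a _ => ?_
      have : (T ⟨u, ⟨i, a⟩⟩ ∧ piM γ ⟨u, ⟨i, a⟩⟩ = i) ↔ S ⟨i, a⟩ := by
        rw [hT]
        constructor
        · rintro ⟨⟨p, hp, h⟩, _⟩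
          have := sigma_mk_injective h
          rwa [this]
        · intro h
          exact ⟨⟨_, h, rfl⟩, rfl⟩
      simp only [this]
    · intro j _ hj
      refine Finset.sum_eq_zero fun a _ => if_neg ?_
      rintro ⟨_, h⟩
      exact hj h
    · simp
  · intro v _ hv
    refine Finset.sum_eq_zero fun p _ => if_neg ?_
    rintro ⟨h, _⟩
    obtain ⟨p', _, h⟩ := (hT _).1 h
    exact hv (congrArg Sigma.fst h)
  · simp

theorem Edeg_M (Q : FinQuiver n) (γ : Fin r → Fin n → ℕ) :
    Edeg (eQ Q) (piM γ) (fun p => (p.1 : ℕ)) =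
      -∑ p ∈ Finset.univ.filter (fun p : Fin r × Fin r => p.1 < p.2), Q.euler (γ p.1) (γ p.2) := by
  rw [Edeg_lev]
  congr 1
  have h : ∀ u, dimz (piM γ) (fun p => p.1 = u) = zc (γ u) := by
    intro u
    funext i
    rw [dimz_M γ u (fun _ => True)]
    · simp [zc]
    · rintro ⟨v, p⟩
      constructor
      · rintro rfl
        exact ⟨p, trivial, rfl⟩
      · rintro ⟨p', _, h⟩
        exact congrArg Sigma.fst h
  refine Finset.sum_congr ?_ fun p _ => ?_
  · congr!
  · rw [h, h, euler_eq]
end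
end CoHA

namespace CoHA

section
variable {n r : ℕ}

theorem Aspace_form {β : Fin n → ℕ} {i : Fin n} {m : ℕ} (hβ : β i = 1) {f : PolyQ n}
    (hf : f ∈ Aspace β i m) : ∃ f' : MvPolynomial (Fin m) ℚ,
      res (fun v => m * β v) f = rename (fun k : Fin m =>
        (⟨i, ⟨k, by change (k : ℕ) < m * β i; rw [hβ, mul_one]; exact k.2⟩⟩ : Lab (fun v => m * β v))) f' := by
  obtain ⟨⟨hv, _⟩, ho⟩ := hf
  obtain ⟨f', hf'⟩ := exists_rename_eq_of_vars_subset_range f (fun k : Fin m => (i, (k : ℕ)))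
    (fun a b h => Fin.ext (Prod.mk.inj h).2) (fun p hp => by
      have h1 : p.2 < m * β p.1 := hv p hp
      have h2 : p.1 = i := ho p hp
      rw [h2, hβ, mul_one] at h1
      exact ⟨⟨p.2, h1⟩, by rw [← h2]⟩)
  refine ⟨f', ?_⟩
  rw [← res_rename (fun v => m * β v) (rename _ f'), rename_rename, ← hf']
  rfl

theorem gen_symm (γ : Fin r → Fin n → ℕ) (u : Fin r) {f : PolyQ n} (hf : f ∈ Hspace (γ u))
    {σ : Equiv.Perm (MSig γ)} (hσ : σ ∈ Wg (piM γ)) (hσ' : ∀ p, (σ p).1 = p.1)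
    (z : MSig γ → ℚ) : eval ((z ∘ σ) ∘ Sigma.mk u) (res (γ u) f) = eval (z ∘ Sigma.mk u) (res (γ u) f) := by
  have hi : Function.Injective (fun p : Lab (γ u) => σ ⟨u, p⟩) :=
    fun p q h => sigma_mk_injective (β := fun u => Lab (γ u)) (σ.injective h)
  have hab : ∀ p : Lab (γ u), ∃ q : Lab (γ u), (⟨u, q⟩ : MSig γ) = σ ⟨u, p⟩ := by
    intro p
    have h1 := hσ' ⟨u, p⟩
    generalize σ ⟨u, p⟩ = q at h1
    obtain ⟨v, q⟩ := q
    obtain rfl : v = u := h1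
    exact ⟨q, rfl⟩
  exact res_symm_eval (X := MSig γ) (πX := piM γ) (a := fun p => σ ⟨u, p⟩)
      (b := fun p => ⟨u, p⟩) hf hi (fun p => mem_Wg.1 hσ _) (fun p => rfl) hab z

variable (β : Fin r → Fin n → ℕ) (iv : Fin r → Fin n) (m : Fin r → ℕ)

def gam : Fin r → Fin n → ℕ := fun u v => m u * β u v

noncomputable def BB (u : Fin r) : Submodule ℚ (MvPolynomial (Lab (gam β m u)) ℚ) :=
  (Aspace (β u) (iv u) (m u)).map (res (gam β m u)).toLinearMap

def kap (q : MSig (gam β m)) : Σ u, Fin (m u) :=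
  ⟨q.1, (finProdFinEquiv.symm (q.2.2 : Fin (m q.1 * β q.1 q.2.1))).1⟩

theorem kap_dimz (c : Σ u, Fin (m u)) :
    dimz (piM (gam β m)) (fun p => kap β m p = c) = zc (β c.1) := by
  obtain ⟨u, c⟩ := c
  funext i
  rw [dimz_M (gam β m) u (fun p => (finProdFinEquiv.symm (p.2 : Fin (m u * β u p.1))).1 = c)]
  · have h := Fintype.sum_equiv (finProdFinEquiv (m := m u) (n := β u i)).symm
      (fun a => if (finProdFinEquiv.symm a).1 = c then (1 : ℤ) else 0)
      (fun a => if a.1 = c then (1 : ℤ) else 0) (fun a => rfl)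
    refine Eq.trans ?_ (Eq.trans h ?_)
    · exact Finset.sum_congr rfl fun a _ => by congr!
    rw [Fintype.sum_prod_type]
    rw [Finset.sum_eq_single c]
    · simp [zc]
    · intro b _ hb
      simp [hb]
    · simp
  · rintro ⟨v, p⟩
    constructor
    · intro h
      obtain rfl : v = u := congrArg Sigma.fst h
      exact ⟨p, sigma_mk_injective (β := fun u => Fin (m u)) h, rfl⟩
    · rintro ⟨p', hp', h⟩
      rw [h, ← hp']
      rfl

theorem W_symm {g : MvPolynomial (MSig (gam β m)) ℚ} (hg : g ∈ Wsp (BB β iv m))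
    {σ : Equiv.Perm (MSig (gam β m))} (hσ : σ ∈ Wg (piM (gam β m))) (hσ' : ∀ p, (σ p).1 = p.1)
    (z : MSig (gam β m) → ℚ) : eval (z ∘ σ) g = eval z g := by
  induction hg using Submodule.span_induction with
  | mem x hx =>
    obtain ⟨h, hh, rfl⟩ := hx
    rw [map_prod, map_prod]
    refine Finset.prod_congr rfl fun u _ => ?_
    obtain ⟨f, hf, hfu⟩ := hh u
    have hf1 : f ∈ Hspace (gam β m u) := hf.1
    have hfu' : h u = res (gam β m u) f := hfu.symm
    rw [hfu', eval_rename, eval_rename]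
    exact gen_symm (gam β m) u hf1 hσ hσ' z
  | zero => simp
  | add x y _ _ hx hy => rw [map_add, map_add, hx, hy]
  | smul a x _ hx => rw [smul_eval, smul_eval, hx]

theorem W_inj {Q : FinQuiver n} (hG : Good (eQ Q) β) (hiv : ∀ u, β u (iv u) = 1)
    {g P : MvPolynomial (MSig (gam β m)) ℚ} (hg : g ∈ Wsp (BB β iv m))
    (hP : Reps P (Phi (eQ Q) (piM (gam β m)) (fun p => (p.1 : ℕ)) g)) (h0 : P = 0) : g = 0 := by
  have hx : ∀ x : (Σ u, Fin (m u)) → ℚ, Function.Injective x → eval (x ∘ kap β m) g = 0 := by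
    intro x hx
    have h1 := EF hG _ (MSig (gam β m)) rfl (Σ u, Fin (m u)) (piM (gam β m)) (kap β m) Sigma.fst
      (kap_dimz β m) g P hP x hx
    rw [h0, map_zero] at h1
    have h2 := (mul_eq_zero.1 h1.symm).resolve_right (Ker_ne fun p q hpq heq => by
      have := hx heq
      rw [this] at hpq
      exact lt_irrefl _ hpq)
    rw [Finset.sum_congr rfl (g := fun _ => eval (x ∘ kap β m) g)] at h2
    · rw [Finset.sum_const, nsmul_eq_mul] at h2
      refine (mul_eq_zero.1 h2).resolve_left ?_
      have : ((Wg (piM (gam β m))).filter fun σ => ∀ p, (kap β m (σ p)).1 = (kap β m p).1).Nonempty :=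
        ⟨1, Finset.mem_filter.2 ⟨Wg_one, fun _ => rfl⟩⟩
      exact_mod_cast this.card_pos.ne'
    · intro σ hσ
      obtain ⟨hσ1, hσ2⟩ := Finset.mem_filter.1 hσ
      exact W_symm β iv m hg hσ1 hσ2 (x ∘ kap β m)
  let a : ∀ u, Fin (m u) → Lab (gam β m u) := fun u k =>
    ⟨iv u, ⟨k, by change (k : ℕ) < m u * β u (iv u); rw [hiv, mul_one]; exact k.2⟩⟩
  let j : (Σ u, Fin (m u)) → MSig (gam β m) := fun c => ⟨c.1, a c.1 c.2⟩
  have hj : kap β m ∘ j = id := by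
    funext c
    obtain ⟨u, k⟩ := c
    change (⟨u, _⟩ : Σ u, Fin (m u)) = ⟨u, k⟩
    congr 1
    apply Fin.ext
    simp [j, a, finProdFinEquiv, Fin.divNat, hiv]
  have hr : Wsp (BB β iv m) ≤ Subalgebra.toSubmodule (rename (R := ℚ) j).range := by
    refine Submodule.span_le.2 ?_
    rintro _ ⟨h, hh, rfl⟩
    rw [SetLike.mem_coe, Subalgebra.mem_toSubmodule]
    refine Subalgebra.prod_mem _ fun u _ => ?_
    obtain ⟨f, hf, hfu⟩ := hh u
    obtain ⟨f', hf'⟩ := Aspace_form (hiv u) hf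
    have h3 : h u = rename (a u) f' := by rw [← hfu]; exact hf'
    refine ⟨rename (Sigma.mk u) f', ?_⟩
    rw [h3]
    change rename j (rename _ f') = _
    rw [rename_rename, rename_rename]
    rfl
  obtain ⟨g', hg'⟩ := hr hg
  replace hg' : rename j g' = g := hg'
  have : g' = 0 := by
    apply dens
    intro x hxi
    have h4 := hx x hxi
    rw [← hg', eval_rename, Function.comp_assoc, hj, Function.comp_id] at h4
    exact h4
  rw [← hg', this, map_zero]

theorem Aspace_graded {β : Fin n → ℕ} {i : Fin n} {m : ℕ} {f : PolyQ n}
    (hf : f ∈ Aspace β i m) (s : ℕ) : homogeneousComponent s f ∈ Aspace β i m := by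
  obtain ⟨⟨hv, hs⟩, ho⟩ := hf
  have hsub : (homogeneousComponent s f).vars ⊆ f.vars := by
    intro p hp
    rw [mem_vars_iff_mem_support] at hp ⊢
    obtain ⟨d, hd, hpd⟩ := hp
    refine ⟨d, ?_, hpd⟩
    rw [support_homogeneousComponent] at hd
    exact (Finset.mem_filter.1 hd).1
  refine ⟨⟨fun p hp => hv p (hsub hp), fun i σ hσ => ?_⟩, fun p hp => ho p (hsub hp)⟩
  rw [rename_homogeneousComponent, hs i σ hσ]

theorem res_graded {γ : Fin n → ℕ} {f : PolyQ n} (hf : ∀ p ∈ f.vars, p.2 < γ p.1) (s : ℕ) :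
    homogeneousComponent s (res γ f) = res γ (homogeneousComponent s f) := by
  conv_rhs => rw [← rename_res hf, ← rename_homogeneousComponent, res_rename]

theorem BB_graded (u : Fin r) : ∀ f ∈ BB β iv m u, ∀ s, homogeneousComponent s f ∈ BB β iv m u := by
  rintro _ ⟨f, hf, rfl⟩ s
  refine ⟨_, Aspace_graded hf s, ?_⟩
  exact (res_graded hf.1.1 s).symm

theorem BB_finrank (u : Fin r) (s : ℕ) :
    Module.finrank ℚ ↥(BB β iv m u ⊓ homogeneousSubmodule (Lab (gam β m u)) ℚ s) =
    Module.finrank ℚ ↥(Aspace (β u) (iv u) (m u) ⊓ homogeneousSubmodule (Fin n × ℕ) ℚ s) := by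
  have hinj : Function.Injective (rename (R := ℚ) (emb (gam β m u))).toLinearMap :=
    rename_injective _ (emb_inj _)
  rw [(Submodule.equivMapOfInjective _ hinj
    (BB β iv m u ⊓ homogeneousSubmodule (Lab (gam β m u)) ℚ s)).finrank_eq]
  have : (BB β iv m u ⊓ homogeneousSubmodule (Lab (gam β m u)) ℚ s).map
      (rename (R := ℚ) (emb (gam β m u))).toLinearMap =
      Aspace (β u) (iv u) (m u) ⊓ homogeneousSubmodule (Fin n × ℕ) ℚ s := by
    apply le_antisymm
    · rintro _ ⟨_, ⟨⟨f, hf, rfl⟩, h2⟩, rfl⟩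
      have h3 : rename (emb (gam β m u)) (res (gam β m u) f) = f := rename_res hf.1.1
      change rename (emb (gam β m u)) (res (gam β m u) f) ∈ _
      refine ⟨by rw [h3]; exact hf, ?_⟩
      exact IsHomogeneous.rename_isHomogeneous h2
    · rintro f ⟨hf, hfs⟩
      have h3 : rename (emb (gam β m u)) (res (gam β m u) f) = f := rename_res hf.1.1
      refine ⟨res (gam β m u) f, ⟨⟨f, hf, rfl⟩, ?_⟩, h3⟩
      refine (IsHomogeneous.rename_isHomogeneous_iff (emb_inj (gam β m u))).1 ?_
      rw [h3]
      exact hfs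
  rw [this]

theorem final {ℓ : ℕ} (Q : FinQuiver n) (hQ : Q.Acyclic)
    (P : SubqPartition Q ℓ) (hDyn : P.Dynkin)
    (blk : Fin r → Fin ℓ) (hR : IsReinekeOrder P β blk)
    (hiv : ∀ u, β u (iv u) = 1) (k j : ℕ)
    (hj : (j : ℤ) = (k : ℤ) +
      (-∑ p ∈ Finset.univ.filter (fun p : Fin r × Fin r => p.1 < p.2),
          Q.euler (gam β m p.1) (gam β m p.2))) :
    ∑ t ∈ Finset.Nat.antidiagonalTuple r k,
        ∏ u : Fin r, Module.finrank ℚ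
          ↥(Aspace (β u) (iv u) (m u) ⊓ homogeneousSubmodule (Fin n × ℕ) ℚ (t u)) =
      Module.finrank ℚ
        ↥(Submodule.span ℚ {g : PolyQ n | ∃ f : Fin r → PolyQ n,
              (∀ u, f u ∈ Aspace (β u) (iv u) (m u)) ∧
              g = cohaProdFin Q (gam β m) f} ⊓
            homogeneousSubmodule (Fin n × ℕ) ℚ j) := by
  obtain ⟨hgr, hcard⟩ := graded_basis (BB β iv m) (BB_graded β iv m)
  have hc := hcard k
  rw [count_lemma (fun u s => Module.finrank ℚ ↥(BB β iv m u ⊓ homogeneousSubmodule (Lab (gam β m u)) ℚ s)) k] at hc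
  simp only [BB_finrank] at hc
  rw [← hc]
  obtain ⟨R, em, N, hRep, hem, hN, hprod⟩ := clean hQ (gam β m)
  rw [← Edeg_M] at hj
  set Ed := Edeg (eQ Q) (piM (gam β m)) (fun p => (p.1 : ℕ)) with hEd
  let Lin : MvPolynomial (MSig (gam β m)) ℚ →ₗ[ℚ] PolyQ n :=
    N • (rename (R := ℚ) em).toLinearMap.comp R
  have hLin : ∀ g, Lin g = N • rename em (R g) := fun g => rfl
  have hspan : Submodule.span ℚ {g : PolyQ n | ∃ f : Fin r → PolyQ n,
              (∀ u, f u ∈ Aspace (β u) (iv u) (m u)) ∧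
              g = cohaProdFin Q (gam β m) f} = (Wsp (BB β iv m)).map Lin := by
    unfold Wsp
    rw [Submodule.map_span]
    congr 1
    ext g
    constructor
    · rintro ⟨f, hf, rfl⟩
      exact ⟨_, ⟨fun u => res (gam β m u) (f u), fun u => ⟨f u, hf u, rfl⟩, rfl⟩,
        (hprod f fun u => (hf u).1).symm⟩
    · rintro ⟨_, ⟨h, hh, rfl⟩, rfl⟩
      choose f hf hfh using hh
      refine ⟨f, hf, ?_⟩
      rw [hprod f fun u => (hf u).1, hLin]
      congr 3
      exact Finset.prod_congr rfl fun u _ => by rw [← hfh u]; rfl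
  have hdeg : ∀ s (g : MvPolynomial (MSig (gam β m)) ℚ), g.IsHomogeneous s → ∀ i : ℕ,
      (i : ℤ) ≠ s + Ed → homogeneousComponent i (Lin g) = 0 := by
    intro s g hg i hi
    rw [hLin, map_smul, ← rename_homogeneousComponent, deg_lemma (hRep g) hg i hi, map_zero, smul_zero]
  have hdeg2 : ∀ g ∈ homogeneousSubmodule (MSig (gam β m)) ℚ k,
      Lin g ∈ homogeneousSubmodule (Fin n × ℕ) ℚ j := by
    intro g hg
    rw [← sum_homogeneousComponent (Lin g)]
    refine Submodule.sum_mem _ fun s _ => ?_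
    by_cases hs : s = j
    · rw [hs]; exact homogeneousComponent_mem j _
    · rw [hdeg k g hg s]
      · exact zero_mem _
      · intro h
        apply hs
        have : (s : ℤ) = j := by linarith
        exact_mod_cast this
  have hinf : (Wsp (BB β iv m)).map Lin ⊓ homogeneousSubmodule (Fin n × ℕ) ℚ j =
      (Wsp (BB β iv m) ⊓ homogeneousSubmodule (MSig (gam β m)) ℚ k).map Lin := by
    apply le_antisymm
    · rintro _ ⟨⟨g, hg, rfl⟩, h2⟩
      refine ⟨homogeneousComponent k g, ⟨hgr g hg k, homogeneousComponent_mem k g⟩, ?_⟩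
      have h3 : homogeneousComponent j (Lin g) = Lin g := by
        rw [homogeneousComponent_of_mem h2, if_pos rfl]
      have h4 : homogeneousComponent j (Lin g) = homogeneousComponent j (Lin (homogeneousComponent k g)) := by
        conv_lhs => rw [← sum_homogeneousComponent g, map_sum, map_sum]
        refine Finset.sum_eq_single k ?_ ?_
        · intro s _ hs
          refine hdeg s _ (homogeneousComponent_isHomogeneous s g) j ?_
          intro h
          apply hs
          have : (s : ℤ) = k := by linarith
          exact_mod_cast this
        · intro h
          have h5 : homogeneousComponent k g = 0 := homogeneousComponent_eq_zero _ _ (by simpa using h)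
          rw [h5, map_zero, map_zero]
      rw [← h3, h4, homogeneousComponent_of_mem (hdeg2 _ (homogeneousComponent_mem k g)), if_pos rfl]
    · rintro _ ⟨g, ⟨hg, hgk⟩, rfl⟩
      exact ⟨⟨g, hg, rfl⟩, hdeg2 g hgk⟩
  rw [hspan, hinf, ← LinearMap.range_domRestrict]
  refine (LinearMap.finrank_range_of_inj ?_).symm
  rw [← LinearMap.ker_eq_bot, LinearMap.ker_eq_bot']
  rintro ⟨g, hg⟩ h
  have h1 : N • rename em (R g) = 0 := h
  have h2 : R g = 0 := rename_injective _ hem (by rw [(smul_eq_zero.1 h1).resolve_left hN, map_zero])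
  exact Subtype.ext (W_inj β iv m (mk_good hQ hDyn hR) hiv hg.1 (hRep g) h2)

end
end CoHA

/-- With `𝒬•` an admissible, ordered, Dynkin subquiver partition of
the acyclic quiver `Q`, `β` a Reineke order with chosen vertices `iv u`
(`β u (iv u) = 1`), and `m` a `𝒬•`-partition of `γ`: grading by total polynomial
degree and setting `d_m = −Σ_{u<v} χ_Q(m_u β_u, m_v β_v)`, for every `k ≥ 0` (and `j`
with `j = k + d_m`),
`Σ_{k₁+⋯+k_r=k} ∏_u dim (𝒜_{β_u,m_u})_{k_u}
  = dim (𝒜_{β₁,m₁} * ⋯ * 𝒜_{β_r,m_r})_{k + d_m}`,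
where `𝒜_{β₁,m₁} * ⋯ * 𝒜_{β_r,m_r} ⊆ ℋ_γ` is the span of all left-to-right products
`f₁ * ⋯ * f_r` with `f_u ∈ 𝒜_{β_u,m_u}`. -/
theorem graded_dimension_shift {n ℓ r : ℕ} (Q : FinQuiver n) (hQ : Q.Acyclic)
    (P : SubqPartition Q ℓ) (hord : P.Ordered) (hDyn : P.Dynkin)
    (β : Fin r → Fin n → ℕ) (blk : Fin r → Fin ℓ) (hR : IsReinekeOrder P β blk)
    (iv : Fin r → Fin n) (hiv : ∀ u, β u (iv u) = 1)
    (γ : Fin n → ℕ) (m : Fin r → ℕ) (hm : (fun v => ∑ u, m u * β u v) = γ)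
    (k j : ℕ)
    (hj : (j : ℤ) = (k : ℤ) +
      (-∑ p ∈ Finset.univ.filter (fun p : Fin r × Fin r => p.1 < p.2),
          Q.euler (fun v => m p.1 * β p.1 v) (fun v => m p.2 * β p.2 v))) :
    ∑ t ∈ Finset.Nat.antidiagonalTuple r k,
        ∏ u : Fin r, Module.finrank ℚ
          ↥(Aspace (β u) (iv u) (m u) ⊓ homogeneousSubmodule (Fin n × ℕ) ℚ (t u)) =
      Module.finrank ℚ
        ↥(Submodule.span ℚ {g : PolyQ n | ∃ f : Fin r → PolyQ n,
              (∀ u, f u ∈ Aspace (β u) (iv u) (m u)) ∧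
              g = cohaProdFin Q (fun u v => m u * β u v) f} ⊓
            homogeneousSubmodule (Fin n × ℕ) ℚ j) := by
  exact CoHA.final β iv m Q hQ P hDyn blk hR hiv k j hj
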